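/- arXiv:2202.00992 — 5 statements merged into one kernel-verified Lean document; each statement's English description precedes it below -/
import Mathlib

section
/- Let ζ>0, 0<β<1 and 0<α<2(1+β). Let ρ be a finite Borel measure on [0,1] such that lim_{λ→0+} ρ([0,λ])/λ^ζ = 1. Define polynomials q_n by q_0 = 1, q_1(λ) = 1-αλ, and q_{n+1}(λ) = (1-αλ)q_n(λ) + β(q_n(λ)-q_{n-1}(λ)) for n ≥ 1, and set L_n = (1/2)∫_{[0,1]} q_n(λ)² ρ(dλ). Then lim_{n→∞} (2αn/(1-β))^ζ · L_n = Γ(ζ+1)/2. -/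
open MeasureTheory Filter Set

namespace HBAux

/-- Fubini form of the Laplace transform. -/
lemma laplace_eq (ρ : Measure ℝ) [IsFiniteMeasure ρ] (hsupp : ρ (Set.Icc (0:ℝ) 1)ᶜ = 0)
    (s : ℝ) (hs : 0 < s) :
    ∫ l, Real.exp (-(s * l)) ∂ρ
      = ∫ u in Set.Ioi (0:ℝ), Real.exp (-u) * (ρ (Set.Icc 0 (u / s))).toReal := by
  have hae : ∀ᵐ l ∂ρ, l ∈ Set.Icc (0:ℝ) 1 := by
    rw [ae_iff]; exact hsupp
  have hIntg : Integrable (fun u : ℝ => Real.exp (-u)) (volume.restrict (Set.Ici 0)) :=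
    (integrableOn_Ici_iff_integrableOn_Ioi (by simp)).2 (integrableOn_exp_neg_Ioi 0)
  have hms : MeasurableSet {p : ℝ × ℝ | s * p.1 ≤ p.2} :=
    measurableSet_le (by fun_prop) (by fun_prop)
  have hprod : Integrable (Function.uncurry fun (l u : ℝ) =>
      ({p : ℝ × ℝ | s * p.1 ≤ p.2}.indicator (fun p => Real.exp (-p.2)) (l, u)))
      (ρ.prod (volume.restrict (Set.Ici 0))) := by
    have h1 : Integrable (fun p : ℝ × ℝ => Real.exp (-p.2))
        (ρ.prod (volume.restrict (Set.Ici 0))) := hIntg.comp_snd ρ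
    exact h1.indicator hms
  have hswap := integral_integral_swap hprod
  have hL : ∫ l, (∫ u in Set.Ici (0:ℝ),
      ({p : ℝ × ℝ | s * p.1 ≤ p.2}.indicator (fun p => Real.exp (-p.2)) (l, u))) ∂ρ
      = ∫ l, Real.exp (-(s * l)) ∂ρ := by
    apply integral_congr_ae
    filter_upwards [hae] with l hl
    have hsl : 0 ≤ s * l := mul_nonneg hs.le hl.1
    have : (fun u : ℝ => {p : ℝ × ℝ | s * p.1 ≤ p.2}.indicator
        (fun p => Real.exp (-p.2)) (l, u)) =
        (Set.Ici (s * l)).indicator (fun u => Real.exp (-u)) := by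
      funext u
      simp [Set.indicator_apply]
    rw [this, setIntegral_indicator measurableSet_Ici, Set.Ici_inter_Ici, max_eq_right hsl,
      integral_Ici_eq_integral_Ioi,
      integral_exp_neg_Ioi]
  have hR : ∫ u in Set.Ici (0:ℝ), (∫ l,
      ({p : ℝ × ℝ | s * p.1 ≤ p.2}.indicator (fun p => Real.exp (-p.2)) (l, u)) ∂ρ)
      = ∫ u in Set.Ici (0:ℝ), Real.exp (-u) * (ρ (Set.Iic (u / s))).toReal := by
    apply integral_congr_ae
    refine Eventually.of_forall fun u => ?_
    have : (fun l : ℝ => {p : ℝ × ℝ | s * p.1 ≤ p.2}.indicator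
        (fun p => Real.exp (-p.2)) (l, u)) =
        (Set.Iic (u / s)).indicator (fun _ => Real.exp (-u)) := by
      funext l
      simp [Set.indicator_apply, le_div_iff₀ hs, mul_comm]
    simp only [this]
    rw [integral_indicator_const _ measurableSet_Iic, smul_eq_mul, mul_comm]
    rfl
  rw [← hL, hswap, hR, integral_Ici_eq_integral_Ioi]
  apply integral_congr_ae
  refine Eventually.of_forall fun u => ?_
  have : ρ (Set.Iic (u / s)) = ρ (Set.Icc 0 (u / s)) := by
    apply measure_congr
    filter_upwards [hae] with l hl
    simp only [eq_iff_iff]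
    exact ⟨fun h => ⟨hl.1, h⟩, fun h => h.2⟩
  simp only [this]

lemma laplace_tendsto (ζ : ℝ) (hζ : 0 < ζ) (ρ : Measure ℝ) [IsFiniteMeasure ρ]
    (hsupp : ρ (Set.Icc (0:ℝ) 1)ᶜ = 0)
    (hlim : Tendsto (fun l : ℝ => (ρ (Set.Icc 0 l)).toReal / l ^ ζ)
      (nhdsWithin 0 (Set.Ioi 0)) (nhds 1)) :
    Tendsto (fun s : ℝ => s ^ ζ * ∫ l, Real.exp (-(s * l)) ∂ρ) atTop
      (nhds (Real.Gamma (ζ + 1))) := by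
  -- global bound
  obtain ⟨C, hC⟩ : ∃ C : ℝ, ∀ l, 0 < l → (ρ (Set.Icc 0 l)).toReal ≤ C * l ^ ζ := by
    have h1 : ∀ᶠ l in nhdsWithin (0:ℝ) (Set.Ioi 0), (ρ (Set.Icc 0 l)).toReal / l ^ ζ < 2 :=
      hlim.eventually (gt_mem_nhds (by norm_num))
    obtain ⟨d, hd, hd2⟩ := mem_nhdsGT_iff_exists_Ioo_subset.1 h1
    have hd : 0 < d := hd
    refine ⟨max 2 ((ρ univ).toReal / d ^ ζ), fun l hl => ?_⟩
    have hlp : 0 < l ^ ζ := Real.rpow_pos_of_pos hl _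
    by_cases hld : l < d
    · have := hd2 ⟨hl, hld⟩
      simp only [Set.mem_ofPred_eq] at this
      rw [div_lt_iff₀ hlp] at this
      refine this.le.trans ?_
      gcongr
      exact le_max_left _ _
    · push Not at hld
      have hdp : 0 < d ^ ζ := Real.rpow_pos_of_pos hd _
      have hle : d ^ ζ ≤ l ^ ζ := Real.rpow_le_rpow hd.le hld hζ.le
      calc (ρ (Set.Icc 0 l)).toReal ≤ (ρ univ).toReal :=
            ENNReal.toReal_mono (measure_ne_top _ _) (measure_mono (Set.subset_univ _))
        _ = (ρ univ).toReal / d ^ ζ * d ^ ζ := by field_simp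
        _ ≤ (ρ univ).toReal / d ^ ζ * l ^ ζ := by gcongr
        _ ≤ _ := by gcongr; exact le_max_right _ _
  have hG : Real.Gamma (ζ + 1) = ∫ u in Set.Ioi (0:ℝ), Real.exp (-u) * u ^ ζ := by
    rw [Real.Gamma_eq_integral (by linarith)]
    simp
  have hGi : IntegrableOn (fun u : ℝ => Real.exp (-u) * u ^ ζ) (Set.Ioi 0) := by
    have := Real.GammaIntegral_convergent (s := ζ + 1) (by linarith)
    simpa using this
  have hmono : ∀ s : ℝ, 0 < s → Monotone (fun u : ℝ => (ρ (Set.Icc 0 (u / s))).toReal) := by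
    intro s hs u v huv
    apply ENNReal.toReal_mono (measure_ne_top _ _)
    apply measure_mono
    apply Set.Icc_subset_Icc le_rfl
    gcongr
  have key : Tendsto (fun s : ℝ => ∫ u in Set.Ioi (0:ℝ),
      s ^ ζ * (Real.exp (-u) * (ρ (Set.Icc 0 (u / s))).toReal)) atTop
      (nhds (∫ u in Set.Ioi (0:ℝ), Real.exp (-u) * u ^ ζ)) := by
    apply tendsto_integral_filter_of_dominated_convergence
      (fun u => C * (Real.exp (-u) * u ^ ζ))
    · filter_upwards [eventually_gt_atTop 0] with s hs
      have := (hmono s hs).measurable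
      exact Measurable.aestronglyMeasurable (by fun_prop)
    · filter_upwards [eventually_gt_atTop 0] with s hs
      filter_upwards [ae_restrict_mem measurableSet_Ioi] with u hu
      have hu : 0 < u := hu
      have hsp : 0 < s ^ ζ := Real.rpow_pos_of_pos hs _
      have h1 := hC (u / s) (by positivity)
      rw [Real.norm_of_nonneg (by positivity)]
      rw [Real.div_rpow hu.le hs.le] at h1
      calc s ^ ζ * (Real.exp (-u) * (ρ (Set.Icc 0 (u / s))).toReal)
          ≤ s ^ ζ * (Real.exp (-u) * (C * (u ^ ζ / s ^ ζ))) := by gcongr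
        _ = _ := by field_simp
    · exact hGi.const_mul C
    · filter_upwards [ae_restrict_mem measurableSet_Ioi] with u hu
      have hu : 0 < u := hu
      have h1 : Tendsto (fun s : ℝ => u / s) atTop (nhdsWithin 0 (Set.Ioi 0)) := by
        rw [tendsto_nhdsWithin_iff]
        refine ⟨tendsto_const_nhds.div_atTop tendsto_id, ?_⟩
        filter_upwards [eventually_gt_atTop 0] with s hs
        exact div_pos hu hs
      have h2 := (hlim.comp h1).const_mul (Real.exp (-u) * u ^ ζ)
      rw [mul_one] at h2
      refine h2.congr' ?_
      filter_upwards [eventually_gt_atTop 0] with s hs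
      have hsp : 0 < s ^ ζ := Real.rpow_pos_of_pos hs _
      have hup : 0 < u ^ ζ := Real.rpow_pos_of_pos hu _
      simp only [Function.comp]
      rw [Real.div_rpow hu.le hs.le]
      field_simp
  rw [hG]
  refine key.congr' ?_
  filter_upwards [eventually_gt_atTop 0] with s hs
  rw [laplace_eq ρ hsupp s hs, integral_const_mul]

/-- Closed form in the real-root regime. -/
lemma closed_form (β x z w : ℝ) (hs : z + w = 1 + β - x) (hp : z * w = β)
    (u : ℕ → ℝ) (h0 : u 0 = 1) (h1 : u 1 = 1 - x)
    (hr : ∀ n, u (n + 2) = (1 - x) * u (n + 1) + β * (u (n + 1) - u n)) (n : ℕ) :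
    (z - w) * u n = (1 - w) * z ^ (n + 1) - (1 - z) * w ^ (n + 1) := by
  have hx : x = 1 + β - z - w := by linarith
  subst hp
  subst hx
  induction n using Nat.twoStepInduction with
  | zero => rw [h0]; ring
  | one => rw [h1]; ring
  | more n ih1 ih2 =>
    rw [hr]
    have : (z - w) * ((1 - (1 + z * w - z - w)) * u (n + 1) + z * w * (u (n + 1) - u n))
      = (z + w) * ((z - w) * u (n + 1)) - z * w * ((z - w) * u n) := by ring
    rw [this, ih1, ih2]
    ring

lemma near_bounds (β x z w : ℝ) (hs : z + w = 1 + β - x) (hp : z * w = β)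
    (hw : 0 < w) (hwz : w < z) (hz1 : z ≤ 1)
    (u : ℕ → ℝ) (h0 : u 0 = 1) (h1 : u 1 = 1 - x)
    (hr : ∀ n, u (n + 2) = (1 - x) * u (n + 1) + β * (u (n + 1) - u n)) (n : ℕ) :
    z ^ n ≤ u n ∧ u n ≤ ((1 - w) * z / (z - w)) * z ^ n := by
  have hc := closed_form β x z w hs hp u h0 h1 hr n
  have hd : 0 < z - w := by linarith
  have hpow : w ^ n ≤ z ^ n := pow_le_pow_left₀ hw.le hwz.le n
  constructor
  · have : 0 ≤ (1 - z) * w * (z ^ n - w ^ n) :=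
      mul_nonneg (mul_nonneg (by linarith) hw.le) (by linarith)
    have h2 : (z - w) * z ^ n ≤ (z - w) * u n := by
      rw [hc, pow_succ, pow_succ]; nlinarith
    exact le_of_mul_le_mul_left h2 hd
  · have : 0 ≤ (1 - z) * w ^ (n + 1) := mul_nonneg (by linarith) (by positivity)
    rw [div_mul_eq_mul_div, le_div_iff₀ hd]
    rw [pow_succ z n] at hc
    nlinarith

/-- Roots of the characteristic polynomial with a modulus bound. -/
lemma exists_roots (β a m r : ℝ) (hβ0 : 0 < β) (hβ1 : β < 1) (hm : 0 < m)
    (ha : |a| ≤ 1 + β - m) (hr1 : Real.sqrt β ≤ r) (hr2 : 1 - m ≤ r) :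
    ∃ z w : ℂ, z + w = (a : ℂ) ∧ z * w = (β : ℂ) ∧ ‖z‖ ≤ r ∧ ‖w‖ ≤ r := by
  have hsb : Real.sqrt β ^ 2 = β := Real.sq_sqrt hβ0.le
  have hr0 : 0 ≤ r := (Real.sqrt_nonneg β).trans hr1
  by_cases hd : a ^ 2 < 4 * β
  · set d := Real.sqrt (4 * β - a ^ 2) with hdd
    have hd2 : d ^ 2 = 4 * β - a ^ 2 := Real.sq_sqrt (by linarith)
    refine ⟨⟨a / 2, d / 2⟩, ⟨a / 2, -(d / 2)⟩, ?_, ?_, ?_, ?_⟩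
    · apply Complex.ext <;> simp
    · apply Complex.ext <;> simp <;> nlinarith
    · rw [Complex.norm_def]
      refine le_trans (Real.sqrt_le_sqrt ?_) hr1
      simp [Complex.normSq_apply]; nlinarith
    · rw [Complex.norm_def]
      refine le_trans (Real.sqrt_le_sqrt ?_) hr1
      simp [Complex.normSq_apply]; nlinarith
  · push Not at hd
    set d := Real.sqrt (a ^ 2 - 4 * β) with hdd
    have hd0 : 0 ≤ d := Real.sqrt_nonneg _
    have hd2 : d ^ 2 = a ^ 2 - 4 * β := Real.sq_sqrt (by linarith)
    have habs : |a| ^ 2 = a ^ 2 := sq_abs a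
    have ha0 : 0 ≤ |a| := abs_nonneg a
    have hda : d ≤ |a| := by nlinarith
    have hkey : (|a| + d) / 2 ≤ r := by
      refine le_trans ?_ hr2
      have hprod : (1 - (|a| + d) / 2) * (1 - (|a| - d) / 2) = 1 + β - |a| := by nlinarith
      have hv0 : 0 ≤ (|a| - d) / 2 := by linarith
      have hv1 : (|a| - d) / 2 < 1 := by nlinarith
      nlinarith
    refine ⟨(((a + d) / 2 : ℝ) : ℂ), (((a - d) / 2 : ℝ) : ℂ), ?_, ?_, ?_, ?_⟩
    · rw [← Complex.ofReal_add]; congr 1; ring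
    · rw [← Complex.ofReal_mul]; congr 1; nlinarith
    · rw [Complex.norm_real, Real.norm_eq_abs, abs_le]
      constructor <;> linarith [le_abs_self a, neg_abs_le a]
    · rw [Complex.norm_real, Real.norm_eq_abs, abs_le]
      constructor <;> linarith [le_abs_self a, neg_abs_le a]

lemma far_bound (β x m r C : ℝ) (hβ0 : 0 < β) (hβ1 : β < 1) (hm : 0 < m)
    (ha : |1 + β - x| ≤ 1 + β - m) (hr1 : Real.sqrt β ≤ r) (hr2 : 1 - m ≤ r) (hr3 : r ≤ 1)
    (u : ℕ → ℝ) (h0 : u 0 = 1) (h1 : u 1 = 1 - x)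
    (hr : ∀ n, u (n + 2) = (1 - x) * u (n + 1) + β * (u (n + 1) - u n))
    (hC : |1 - x| + 1 ≤ C) (n : ℕ) :
    r * |u n| ≤ r ^ n * (1 + n * C) := by
  obtain ⟨z, w, hs, hp, hz, hw⟩ := exists_roots β (1 + β - x) m r hβ0 hβ1 hm ha hr1 hr2
  have hr0 : 0 ≤ r := (Real.sqrt_nonneg β).trans hr1
  have hstep : ∀ n, ((u (n + 1) : ℝ) : ℂ) - w * (u n : ℂ) = z ^ n * ((1 - x : ℝ) - w) := by
    intro n
    induction n with
    | zero => simp [h0, h1]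
    | succ n ih =>
      have : ((u (n + 2) : ℝ) : ℂ) - w * (u (n + 1) : ℂ)
          = z * (((u (n + 1) : ℝ) : ℂ) - w * (u n : ℂ)) := by
        rw [hr]
        have e1 : (((1 - x) * u (n + 1) + β * (u (n + 1) - u n) : ℝ) : ℂ)
          = ((1 + β - x : ℝ) : ℂ) * (u (n + 1) : ℂ) - (β : ℂ) * (u n : ℂ) := by
          push_cast; ring
        rw [e1, ← hs, ← hp]; ring
      rw [this, ih]; ring
  have hstep' : ∀ n, |u (n + 1)| ≤ r * |u n| + r ^ n * C := by
    intro n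
    have e : ((u (n + 1) : ℝ) : ℂ) = w * (u n : ℂ) + z ^ n * ((1 - x : ℝ) - w) := by
      rw [← hstep]; ring
    have e2 : |u (n + 1)| = ‖((u (n + 1) : ℝ) : ℂ)‖ := by
      rw [Complex.norm_real, Real.norm_eq_abs]
    rw [e2, e]
    refine (norm_add_le _ _).trans ?_
    rw [norm_mul, norm_mul, norm_pow, Complex.norm_real, Real.norm_eq_abs]
    have : ‖((1 - x : ℝ) : ℂ) - w‖ ≤ C := by
      refine (norm_sub_le _ _).trans ?_
      rw [Complex.norm_real, Real.norm_eq_abs]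
      linarith
    gcongr
  induction n with
  | zero => simp [h0, hr3]
  | succ n ih =>
    calc r * |u (n + 1)| ≤ r * (r * |u n| + r ^ n * C) := by gcongr; exact hstep' n
      _ ≤ r * (r ^ n * (1 + n * C) + r ^ n * C) := by gcongr
      _ = _ := by push_cast; ring

set_option maxHeartbeats 1000000 in
lemma near_exists (α β κ' K : ℝ) (hβ0 : 0 < β) (hβ1 : β < 1) (hα0 : 0 < α)
    (hκ : α / (1 - β) < κ') (hK : 1 < K) :
    ∃ δ : ℝ, 0 < δ ∧ ∀ l, 0 ≤ l → l < δ → ∀ u : ℕ → ℝ, u 0 = 1 → u 1 = 1 - α * l →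
      (∀ n, u (n + 2) = (1 - α * l) * u (n + 1) + β * (u (n + 1) - u n)) → ∀ n,
      Real.exp (-(κ' * l)) ^ n ≤ u n ∧ u n ≤ K * Real.exp (-(α / (1 - β) * l)) ^ n := by
  have hb : 0 < 1 - β := by linarith
  have hκ0 : 0 < κ' := lt_trans (by positivity) hκ
  rw [div_lt_iff₀ hb] at hκ
  set d : ℝ → ℝ := fun l => Real.sqrt ((1 + β - α * l) ^ 2 - 4 * β) with hd
  set z : ℝ → ℝ := fun l => (1 + β - α * l + d l) / 2 with hz
  set w : ℝ → ℝ := fun l => (1 + β - α * l - d l) / 2 with hw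
  have hdc : Continuous d := by
    apply Real.continuous_sqrt.comp; fun_prop
  have hzc : Continuous z := by fun_prop
  have hwc : Continuous w := by fun_prop
  have hd0 : d 0 = 1 - β := by
    simp only [hd]
    rw [show (1 + β - α * 0) ^ 2 - 4 * β = (1 - β) ^ 2 by ring, Real.sqrt_sq hb.le]
  have hz0 : z 0 = 1 := by simp only [hz, hd0]; ring
  have hw0 : w 0 = β := by simp only [hw, hd0]; ring
  have e1 : ∀ᶠ l in nhds (0:ℝ), 0 < (1 + β - α * l) ^ 2 - 4 * β := by
    apply ContinuousAt.eventually_lt (by fun_prop) (by fun_prop)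
    nlinarith [sq_pos_of_pos hb]
  have e2 : ∀ᶠ l in nhds (0:ℝ), 0 < w l := by
    apply ContinuousAt.eventually_lt (by fun_prop) (by fun_prop)
    rw [hw0]; exact hβ0
  have e3 : ∀ᶠ l in nhds (0:ℝ), w l < z l := by
    apply ContinuousAt.eventually_lt (by fun_prop) (by fun_prop)
    rw [hw0, hz0]; exact hβ1
  have e4 : ∀ᶠ l in nhds (0:ℝ), w l < 1 := by
    apply ContinuousAt.eventually_lt (by fun_prop) (by fun_prop)
    rw [hw0]; exact hβ1
  have e5 : ∀ᶠ l in nhds (0:ℝ), (1 - w l) * z l < K * (z l - w l) := by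
    apply ContinuousAt.eventually_lt (by fun_prop) (by fun_prop)
    rw [hw0, hz0]; nlinarith
  have e6 : ∀ᶠ l in nhds (0:ℝ), α < z l * κ' * (1 - w l) := by
    apply ContinuousAt.eventually_lt (by fun_prop) (by fun_prop)
    rw [hw0, hz0]; linarith
  obtain ⟨δ, hδ, hall⟩ := Metric.eventually_nhds_iff.1
    (e1.and (e2.and (e3.and (e4.and (e5.and e6)))))
  refine ⟨δ, hδ, fun l hl0 hlδ u h0 h1 hr n => ?_⟩
  obtain ⟨f1, f2, f3, f4, f5, f6⟩ := hall (y := l)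
    (by rw [Real.dist_eq, sub_zero, abs_of_nonneg hl0]; exact hlδ)
  have hsq : d l ^ 2 = (1 + β - α * l) ^ 2 - 4 * β := Real.sq_sqrt f1.le
  have hs : z l + w l = 1 + β - α * l := by simp only [hz, hw]; ring
  have hp : z l * w l = β := by simp only [hz, hw]; nlinarith
  have hzz : 0 < z l := f2.trans f3
  have hal : 0 ≤ α * l := by positivity
  have hprod : (1 - z l) * (1 - w l) = α * l := by nlinarith
  have hz1 : z l ≤ 1 := by
    by_contra h
    push Not at h
    nlinarith
  obtain ⟨g1, g2⟩ := near_bounds β (α * l) (z l) (w l) hs hp f2 f3 hz1 u h0 h1 hr n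
  constructor
  · refine le_trans (pow_le_pow_left₀ (Real.exp_pos _).le ?_ n) g1
    rw [Real.exp_neg]
    have h2 : 1 + κ' * l ≤ Real.exp (κ' * l) := by linarith [Real.add_one_le_exp (κ' * l)]
    have h3 : 1 ≤ z l * (1 + κ' * l) := by
      have h4 : (1 - z l) * (1 - w l) ≤ (z l * κ' * l) * (1 - w l) := by
        rw [hprod]; nlinarith
      have := le_of_mul_le_mul_right h4 (by linarith)
      nlinarith
    rw [inv_le_iff_one_le_mul₀ (Real.exp_pos _)]
    exact h3.trans (by gcongr)
  · refine g2.trans ?_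
    have h2 : (1 - w l) * z l / (z l - w l) ≤ K := by
      rw [div_le_iff₀ (by linarith)]; exact f5.le
    have h3 : z l ≤ Real.exp (-(α / (1 - β) * l)) := by
      have h4 : β ≤ w l := by nlinarith
      have h5 : α / (1 - β) * l ≤ 1 - z l := by
        rw [div_mul_eq_mul_div, div_le_iff₀ hb, ← hprod]
        gcongr
      linarith [Real.add_one_le_exp (-(α / (1 - β) * l))]
    exact mul_le_mul h2 (pow_le_pow_left₀ hzz.le h3 n) (pow_nonneg hzz.le n) (by linarith)

/-- `n ^ p` times an exponential tends to `0`. -/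
lemma pow_exp_tendsto (c p b : ℝ) (hb : 0 < b) :
    Tendsto (fun n : ℕ => c * ((n:ℝ) ^ p * Real.exp (-b * n))) atTop (nhds 0) := by
  have := ((tendsto_rpow_mul_exp_neg_mul_atTop_nhds_zero p b hb).comp
    tendsto_natCast_atTop_atTop).const_mul c
  simpa using this

end HBAux

/-- Heavy Ball with constant learning rate `α` and momentum `β`: under the exact power-law
spectral asymptotic `ρ([0,λ]) ~ λ^ζ` as `λ → 0+`, the loss
`L_n = (1/2)∫ q_n(λ)² ρ(dλ)` satisfies `(2αn/(1-β))^ζ L_n → Γ(ζ+1)/2`. -/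
theorem hb_constant_rate_loss_asymptotic
    (ζ α β : ℝ) (hζ : 0 < ζ) (hβ0 : 0 < β) (hβ1 : β < 1)
    (hα0 : 0 < α) (hα : α < 2 * (1 + β))
    (ρ : Measure ℝ) [IsFiniteMeasure ρ]
    (hsupp : ρ (Set.Icc (0:ℝ) 1)ᶜ = 0)
    (hlim : Tendsto (fun l : ℝ => (ρ (Set.Icc 0 l)).toReal / l ^ ζ)
      (nhdsWithin 0 (Set.Ioi 0)) (nhds 1))
    (q : ℕ → ℝ → ℝ)
    (hq0 : ∀ l, q 0 l = 1)
    (hq1 : ∀ l, q 1 l = 1 - α * l)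
    (hqrec : ∀ n : ℕ, 1 ≤ n → ∀ l,
      q (n + 1) l = (1 - α * l) * q n l + β * (q n l - q (n - 1) l)) :
    Tendsto (fun n : ℕ =>
        (2 * α * n / (1 - β)) ^ ζ * ((1/2) * ∫ l in Set.Icc (0:ℝ) 1, (q n l) ^ 2 ∂ρ))
      atTop (nhds (Real.Gamma (ζ + 1) / 2)) := by
  
  have hb : 0 < 1 - β := by linarith
  have hr' : ∀ l n, q (n + 2) l = (1 - α * l) * q (n + 1) l + β * (q (n + 1) l - q n l) := by
    intro l n
    exact hqrec (n + 1) (by omega) l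
  have hqc : ∀ n, Continuous (q n) := by
    intro n
    induction n using Nat.twoStepInduction with
    | zero => rw [show q 0 = fun _ => 1 from funext hq0]; fun_prop
    | one => rw [show q 1 = fun l => 1 - α * l from funext hq1]; fun_prop
    | more n ih1 ih2 =>
      rw [show q (n + 2) = _ from funext fun l => hr' l n]
      fun_prop
  have hae : ∀ᵐ l ∂ρ, l ∈ Set.Icc (0:ℝ) 1 := by
    rw [ae_iff]; exact hsupp
  have hres : ρ.restrict (Set.Icc 0 1) = ρ := Measure.restrict_eq_self_of_ae_mem hae
  have hIntg : ∀ f : ℝ → ℝ, Continuous f → Integrable f ρ := by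
    intro f hf
    rw [← hres]
    exact hf.integrableOn_Icc
  rw [hres]
  set κ := α / (1 - β) with hκ
  have hκ0 : 0 < κ := by positivity
  have hlap := HBAux.laplace_tendsto ζ hζ ρ hsupp hlim
  set G := Real.Gamma (ζ + 1) with hG
  have hG0 : 0 < G := Real.Gamma_pos_of_pos (by linarith)
  have hto : ∀ k : ℝ, 0 < k → Tendsto (fun n : ℕ => 2 * k * (n : ℝ)) atTop atTop := fun k hk =>
    Tendsto.const_mul_atTop (by positivity) tendsto_natCast_atTop_atTop
  suffices hmain : Tendsto (fun n : ℕ => (2 * κ * n) ^ ζ * ∫ l, (q n l) ^ 2 ∂ρ) atTop (nhds G) by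
    refine ((hmain.div_const 2)).congr fun n => ?_
    rw [hκ, show 2 * (α / (1 - β)) * (n:ℝ) = 2 * α * n / (1 - β) by ring]
    ring
  rw [tendsto_order]
  constructor
  · intro b hbG
    -- lower bound
    obtain ⟨κ', hκ', hbκ⟩ : ∃ κ', κ < κ' ∧ b < (κ / κ') ^ ζ * G := by
      have hc : ContinuousAt (fun k : ℝ => (κ / k) ^ ζ * G) κ := by
        apply ContinuousAt.mul _ continuousAt_const
        apply ContinuousAt.rpow_const _ (Or.inr hζ.le)
        exact continuousAt_const.div continuousAt_id hκ0.ne'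
      have hev : ∀ᶠ k in nhds κ, b < (κ / k) ^ ζ * G := by
        apply hc.eventually (lt_mem_nhds _)
        show b < (κ / κ) ^ ζ * G
        rw [div_self hκ0.ne', Real.one_rpow, one_mul]; exact hbG
      have hev2 := (hev.filter_mono (nhdsWithin_le_nhds (s := Set.Ioi κ))).and
        self_mem_nhdsWithin
      obtain ⟨k, h1, h2⟩ := hev2.exists
      exact ⟨k, h2, h1⟩
    have hκ'0 : 0 < κ' := hκ0.trans hκ'
    obtain ⟨δ, hδ, hnear⟩ := HBAux.near_exists α β κ' 2 hβ0 hβ1 hα0 hκ' (by norm_num)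
    have hineq : ∀ n : ℕ, (∫ l, Real.exp (-((2 * κ' * n) * l)) ∂ρ)
        - (ρ univ).toReal * Real.exp (-(2 * κ' * δ) * n) ≤ ∫ l, (q n l) ^ 2 ∂ρ := by
      intro n
      have h1 : ∫ l, Real.exp (-((2 * κ' * n) * l)) ∂ρ
          ≤ ∫ l, ((q n l) ^ 2 + Real.exp (-(2 * κ' * δ) * n)) ∂ρ := by
        apply integral_mono_ae (hIntg _ (by fun_prop))
          (hIntg _ (by have := hqc n; fun_prop))
        filter_upwards [hae] with l hl
        by_cases hlδ : l < δ
        · have h2 := (hnear l hl.1 hlδ (fun n => q n l) (hq0 l) (hq1 l) (hr' l) n).1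
          have h3 : Real.exp (-((2 * κ' * n) * l)) = (Real.exp (-(κ' * l)) ^ n) ^ 2 := by
            rw [← Real.exp_nat_mul, ← Real.exp_nat_mul]; congr 1; push_cast; ring
          have h4 := pow_le_pow_left₀ (by positivity) h2 2
          have := Real.exp_pos (-(2 * κ' * δ) * n)
          beta_reduce at h4
          rw [h3]; linarith
        · push Not at hlδ
          have h2 : Real.exp (-((2 * κ' * n) * l)) ≤ Real.exp (-(2 * κ' * δ) * n) := by
            apply Real.exp_le_exp.2
            have : (2 * κ' * n) * δ ≤ (2 * κ' * n) * l := by gcongr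
            linarith
          have := sq_nonneg (q n l)
          linarith
      rw [integral_add (hIntg _ (by have := hqc n; fun_prop)) (integrable_const _),
        integral_const, smul_eq_mul] at h1
      have : ρ.real univ = (ρ univ).toReal := rfl
      rw [this] at h1
      linarith
    have hT : Tendsto (fun n : ℕ => (κ / κ') ^ ζ *
        ((2 * κ' * n) ^ ζ * ∫ l, Real.exp (-((2 * κ' * n) * l)) ∂ρ)
        - ((2 * κ) ^ ζ * (ρ univ).toReal) * ((n:ℝ) ^ ζ * Real.exp (-(2 * κ' * δ) * n)))
        atTop (nhds ((κ / κ') ^ ζ * G - 0)) := by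
      refine Tendsto.sub ?_ (HBAux.pow_exp_tendsto _ _ _ (by positivity))
      exact (hlap.comp (hto κ' hκ'0)).const_mul _
    rw [sub_zero] at hT
    filter_upwards [hT.eventually (lt_mem_nhds hbκ)] with n hn
    refine hn.trans_le ?_
    have h1 := mul_le_mul_of_nonneg_left (hineq n)
      (show 0 ≤ (2 * κ * (n:ℝ)) ^ ζ by positivity)
    refine le_trans (le_of_eq ?_) h1
    have e1 : (κ / κ') ^ ζ * (2 * κ' * (n:ℝ)) ^ ζ = (2 * κ * (n:ℝ)) ^ ζ := by
      rw [← Real.mul_rpow (by positivity) (by positivity)]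
      congr 1; field_simp
    have e2 : (2 * κ * (n:ℝ)) ^ ζ = (2 * κ) ^ ζ * (n:ℝ) ^ ζ :=
      Real.mul_rpow (by positivity) (by positivity)
    rw [← mul_assoc, e1, mul_sub, e2]
    ring
  · intro b hbG
    -- upper bound
    obtain ⟨K, hK, hbK⟩ : ∃ K : ℝ, 1 < K ∧ K ^ 2 * G < b := by
      have hev : ∀ᶠ k in nhds (1:ℝ), k ^ 2 * G < b := by
        apply ContinuousAt.eventually_lt (by fun_prop) (by fun_prop)
        simpa using hbG
      have hev2 := (hev.filter_mono (nhdsWithin_le_nhds (s := Set.Ioi 1))).and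
        self_mem_nhdsWithin
      obtain ⟨k, h1, h2⟩ := hev2.exists
      exact ⟨k, h2, h1⟩
    obtain ⟨δ, hδ, hnear⟩ := HBAux.near_exists α β (κ + 1) K hβ0 hβ1 hα0 (by linarith) hK
    set m := min (α * δ) (2 * (1 + β) - α) with hm
    have hm0 : 0 < m := lt_min (by positivity) (by linarith)
    set r := max (Real.sqrt β) (1 - m) with hrr
    have hr0 : 0 < r := lt_of_lt_of_le (Real.sqrt_pos.2 hβ0) (le_max_left _ _)
    have hr1 : r < 1 := by
      apply max_lt _ (by linarith)
      rw [Real.sqrt_lt' one_pos]; simpa using hβ1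
    set C := 2 + α with hC
    have hfar : ∀ n l, l ∈ Set.Icc (0:ℝ) 1 → δ ≤ l → r * |q n l| ≤ r ^ n * (1 + n * C) := by
      intro n l hl hlδ
      have h1 : α * δ ≤ α * l := by gcongr
      have h2 : α * l ≤ α := by nlinarith [hl.2]
      have h3 := min_le_left (α * δ) (2 * (1 + β) - α)
      have h4 := min_le_right (α * δ) (2 * (1 + β) - α)
      refine HBAux.far_bound β (α * l) m r C hβ0 hβ1 hm0 ?_ (le_max_left _ _)
        (le_max_right _ _) hr1.le (fun n => q n l) (hq0 l) (hq1 l) (hr' l) ?_ n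
      · rw [abs_le]; constructor <;> linarith
      · have : |1 - α * l| ≤ 1 + α := by
          have : 0 ≤ α * l := mul_nonneg hα0.le hl.1
          rw [abs_le]; constructor <;> linarith
        linarith
    set c := -Real.log r with hc
    have hc0 : 0 < c := by have := Real.log_neg hr0 hr1; linarith
    set D := ((1 + C) / r) ^ 2 with hD
    have hineq : ∀ n : ℕ, 1 ≤ n → ∫ l, (q n l) ^ 2 ∂ρ ≤
        K ^ 2 * (∫ l, Real.exp (-((2 * κ * n) * l)) ∂ρ)
        + (ρ univ).toReal * (D * ((n:ℝ) ^ (2:ℝ) * Real.exp (-(2 * c) * n))) := by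
      intro n hn
      have hn1 : (1:ℝ) ≤ n := by exact_mod_cast hn
      have h1 : ∫ l, (q n l) ^ 2 ∂ρ ≤ ∫ l, (K ^ 2 * Real.exp (-((2 * κ * n) * l))
          + D * ((n:ℝ) ^ (2:ℝ) * Real.exp (-(2 * c) * n))) ∂ρ := by
        apply integral_mono_ae (hIntg _ (by have := hqc n; fun_prop))
          (hIntg _ (by fun_prop))
        filter_upwards [hae] with l hl
        by_cases hlδ : l < δ
        · have h2 := hnear l hl.1 hlδ (fun n => q n l) (hq0 l) (hq1 l) (hr' l) n
          have h3 : Real.exp (-((2 * κ * n) * l)) = (Real.exp (-(κ * l)) ^ n) ^ 2 := by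
            rw [← Real.exp_nat_mul, ← Real.exp_nat_mul]; congr 1; push_cast; ring
          have h4 := pow_le_pow_left₀ (le_trans (by positivity) h2.1) h2.2 2
          have : 0 ≤ D * ((n:ℝ) ^ (2:ℝ) * Real.exp (-(2 * c) * n)) := by positivity
          beta_reduce at h4
          rw [h3, ← mul_pow]; linarith
        · push Not at hlδ
          have h2 := hfar n l hl hlδ
          have h3 : |q n l| ≤ (1 + C) / r * (n * r ^ n) := by
            rw [div_mul_eq_mul_div, le_div_iff₀ hr0, mul_comm]
            refine h2.trans ?_
            have : 1 + n * C ≤ (1 + C) * n := by linarith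
            calc r ^ n * (1 + n * C) ≤ r ^ n * ((1 + C) * n) := by gcongr
              _ = _ := by ring
          have h4 := pow_le_pow_left₀ (abs_nonneg _) h3 2
          rw [sq_abs, mul_pow, mul_pow] at h4
          have h5 : (r ^ n) ^ 2 = Real.exp (-(2 * c) * n) := by
            conv_lhs => rw [← Real.exp_log hr0]
            rw [← Real.exp_nat_mul, ← Real.exp_nat_mul, hc]; congr 1; push_cast; ring
          rw [h5] at h4
          have : 0 ≤ K ^ 2 * Real.exp (-((2 * κ * n) * l)) := by positivity
          rw [Real.rpow_two]
          linarith
      rw [integral_add (hIntg _ (by fun_prop)) (integrable_const _),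
        integral_const, smul_eq_mul, integral_const_mul] at h1
      exact h1
    have hT : Tendsto (fun n : ℕ => K ^ 2 *
        ((2 * κ * n) ^ ζ * ∫ l, Real.exp (-((2 * κ * n) * l)) ∂ρ)
        + ((2 * κ) ^ ζ * (ρ univ).toReal * D) *
          ((n:ℝ) ^ (ζ + 2) * Real.exp (-(2 * c) * n)))
        atTop (nhds (K ^ 2 * G + 0)) := by
      refine Tendsto.add ?_ (HBAux.pow_exp_tendsto _ _ _ (by positivity))
      exact (hlap.comp (hto κ hκ0)).const_mul _
    rw [add_zero] at hT
    filter_upwards [hT.eventually (gt_mem_nhds hbK), eventually_ge_atTop 1] with n hn hn1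
    refine lt_of_le_of_lt ?_ hn
    have hnpos : (0:ℝ) < n := by exact_mod_cast hn1
    have h1 := mul_le_mul_of_nonneg_left (hineq n hn1)
      (show 0 ≤ (2 * κ * (n:ℝ)) ^ ζ by positivity)
    refine h1.trans (le_of_eq ?_)
    have e2 : (2 * κ * (n:ℝ)) ^ ζ = (2 * κ) ^ ζ * (n:ℝ) ^ ζ :=
      Real.mul_rpow (by positivity) (by positivity)
    rw [Real.rpow_add hnpos, e2]
    ring
end

section
/- Let ζ>0, 0<β<1 and 0<α<2(1+β). Let ρ be a finite Borel measure on ℝ supported on [0,1] with ρ({0})=0 and ρ((0,λ]) ≤ λ^ζ for all λ ∈ [0,1]. Define polynomials q_n by q_0 = 1, q_1(λ) = 1-αλ, q_{n+1}(λ) = (1-αλ)q_n(λ) + β(q_n(λ)-q_{n-1}(λ)) for n ≥ 1, and set L_n = (1/2)∫_{[0,1]} q_n(λ)² ρ(dλ). Then limsup_{n→∞} (2αn/(1-β))^ζ · L_n ≤ Γ(ζ+1)/2. -/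
open MeasureTheory Filter Set

/-- Laplace-transform bound from the power law condition. -/
lemma hb_laplace (ζ : ℝ) (hζ : 0 < ζ) (ρ : Measure ℝ) [IsFiniteMeasure ρ]
    (h0 : ρ {(0:ℝ)} = 0)
    (hpow : ∀ l ∈ Set.Icc (0:ℝ) 1, (ρ (Set.Ioc 0 l)).toReal ≤ l ^ ζ) (t : ℝ) (ht : 0 < t) :
    ∫ l in Set.Icc (0:ℝ) 1, Real.exp (-(t * l)) ∂ρ ≤ (1 / t) ^ ζ * Real.Gamma (ζ + 1) := by
  have hG : 0 ≤ (1 / t) ^ ζ * Real.Gamma (ζ + 1) :=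
    mul_nonneg (Real.rpow_nonneg (by positivity) _) (Real.Gamma_pos_of_pos (by linarith)).le
  have hmeas : ∀ u : ℝ, 0 < u → (ρ.restrict (Icc 0 1)) (Iic u) ≤ ENNReal.ofReal (u ^ ζ) := by
    intro u hu
    have h1 : (ρ.restrict (Icc 0 1)) (Iic u) ≤ ρ (Ioc 0 (min u 1)) := by
      rw [Measure.restrict_apply measurableSet_Iic]
      calc ρ (Iic u ∩ Icc 0 1) ≤ ρ ({0} ∪ Ioc 0 (min u 1)) := by
            apply measure_mono
            rintro x ⟨hx1, hx2, hx3⟩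
            rcases hx2.eq_or_lt with h | h
            · left; exact h.symm
            · right; exact ⟨h, le_min hx1 hx3⟩
        _ ≤ ρ {0} + ρ (Ioc 0 (min u 1)) := measure_union_le _ _
        _ = _ := by rw [h0, zero_add]
    have hm : min u 1 ∈ Icc (0:ℝ) 1 := ⟨by positivity, min_le_right _ _⟩
    refine h1.trans ?_
    rw [← ENNReal.ofReal_toReal (measure_ne_top ρ (Ioc 0 (min u 1)))]
    apply ENNReal.ofReal_le_ofReal
    exact (hpow _ hm).trans (Real.rpow_le_rpow hm.1 (min_le_left _ _) hζ.le)
  have hint : IntegrableOn (fun u : ℝ => t * Real.exp (-(t * u))) (Ioi 0) := by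
    have := (exp_neg_integrableOn_Ioi 0 ht).const_mul t
    simpa [IntegrableOn, neg_mul] using this
  have hexp : ∀ l : ℝ, 0 ≤ l → ∫⁻ u in Ioi (0:ℝ), (Ici l).indicator
      (fun u => ENNReal.ofReal (t * Real.exp (-(t * u)))) u = ENNReal.ofReal (Real.exp (-(t * l))) := by
    intro l hl
    rw [lintegral_indicator measurableSet_Ici, Measure.restrict_restrict measurableSet_Ici]
    have : (Ici l ∩ Ioi 0 : Set ℝ) =ᵐ[volume] Ioi l := by
      have : (Ici l ∩ Ioi 0 : Set ℝ) =ᵐ[volume] (Ioi l ∩ Ioi 0 : Set ℝ) :=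
        Ioi_ae_eq_Ici.symm.inter (ae_eq_refl _)
      rwa [Ioi_inter_Ioi, sup_of_le_left hl] at this
    rw [Measure.restrict_congr_set this, ← ofReal_integral_eq_lintegral_ofReal]
    · congr 1
      rw [integral_const_mul]
      have := integral_exp_mul_Ioi (a := -t) (by linarith) l
      simp only [neg_mul] at this
      rw [this]; field_simp
    · exact hint.mono_set (Ioi_subset_Ioi hl)
    · exact Eventually.of_forall fun u => by positivity
  have key : ∫⁻ l in Icc (0:ℝ) 1, ENNReal.ofReal (Real.exp (-(t * l))) ∂ρ
      ≤ ENNReal.ofReal ((1 / t) ^ ζ * Real.Gamma (ζ + 1)) := by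
    calc ∫⁻ l in Icc (0:ℝ) 1, ENNReal.ofReal (Real.exp (-(t * l))) ∂ρ
        = ∫⁻ l in Icc (0:ℝ) 1, (∫⁻ u in Ioi (0:ℝ), (Ici l).indicator
            (fun u => ENNReal.ofReal (t * Real.exp (-(t * u)))) u) ∂ρ := by
          apply setLIntegral_congr_fun measurableSet_Icc
          intro l hl
          exact (hexp l hl.1).symm
      _ = ∫⁻ u in Ioi (0:ℝ), (∫⁻ l in Icc (0:ℝ) 1, (Ici l).indicator
            (fun u => ENNReal.ofReal (t * Real.exp (-(t * u)))) u ∂ρ) := by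
          apply lintegral_lintegral_swap
          apply Measurable.aemeasurable
          have : (Function.uncurry fun (l u : ℝ) => (Ici l).indicator
            (fun u => ENNReal.ofReal (t * Real.exp (-(t * u)))) u) =
            ({p : ℝ × ℝ | p.1 ≤ p.2}).indicator
            (fun p => ENNReal.ofReal (t * Real.exp (-(t * p.2)))) := by
            ext ⟨a, b⟩
            simp [Function.uncurry, indicator]
          rw [this]
          apply Measurable.indicator (by fun_prop)
          exact measurableSet_le measurable_fst measurable_snd
      _ ≤ ∫⁻ u in Ioi (0:ℝ), ENNReal.ofReal (t * (u ^ (ζ + 1 - 1) * Real.exp (-(t * u)))) := by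
          apply setLIntegral_mono' measurableSet_Ioi
          intro u hu
          have : ∀ l : ℝ, (Ici l).indicator
            (fun u => ENNReal.ofReal (t * Real.exp (-(t * u)))) u =
            (Iic u).indicator (fun _ => ENNReal.ofReal (t * Real.exp (-(t * u)))) l := by
            intro l; simp [indicator]
          simp_rw [this]
          rw [lintegral_indicator_const measurableSet_Iic]
          calc _ ≤ ENNReal.ofReal (t * Real.exp (-(t * u))) * ENNReal.ofReal (u ^ ζ) := by
                gcongr; exact hmeas u hu
            _ = _ := by
                rw [← ENNReal.ofReal_mul (by positivity)]
                congr 1; simp; ring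
      _ = _ := by
          have h1 := Real.integral_rpow_mul_exp_neg_mul_Ioi (a := ζ + 1) (r := t) (by linarith) ht
          rw [← ofReal_integral_eq_lintegral_ofReal]
          · congr 1
            rw [integral_const_mul, h1, Real.rpow_add (by positivity), Real.rpow_one]
            field_simp
          · apply Integrable.const_mul
            apply Integrable.of_integral_ne_zero
            rw [h1]
            have := Real.Gamma_pos_of_pos (show 0 < ζ + 1 by linarith)
            positivity
          · filter_upwards [ae_restrict_mem measurableSet_Ioi] with u hu
            have : (0:ℝ) < u := hu
            positivity
  rw [integral_eq_lintegral_of_nonneg_ae (Eventually.of_forall fun l => (Real.exp_pos _).le)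
    (by fun_prop)]
  exact ENNReal.toReal_le_of_le_ofReal hG key

/-- Decay for `l` bounded away from `0`. -/
lemma hb_large (α β : ℝ) (hβ0 : 0 < β) (hβ1 : β < 1)
    (hα0 : 0 < α) (hα : α < 2 * (1 + β))
    (q : ℕ → ℝ → ℝ)
    (hq0 : ∀ l, q 0 l = 1)
    (hq1 : ∀ l, q 1 l = 1 - α * l)
    (hqrec : ∀ n : ℕ, 1 ≤ n → ∀ l,
      q (n + 1) l = (1 - α * l) * q n l + β * (q n l - q (n - 1) l)) (δ : ℝ) (hδ : 0 < δ) :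
    ∃ r M : ℝ, 0 < r ∧ r < 1 ∧ 0 < M ∧ ∀ l ∈ Icc δ 1, ∀ n : ℕ,
      |q n l| ≤ (1 + n * M) * r ^ n := by
  obtain ⟨s0, hs0, hs0'⟩ : ∃ s0, s0 < 1 + β ∧ ∀ l ∈ Icc δ 1, |1 + β - α * l| ≤ s0 := by
    refine ⟨max (1 + β - α * δ) (α - 1 - β), max_lt (by nlinarith) (by linarith), ?_⟩
    rintro l ⟨h1, h2⟩
    apply abs_le'.2 ⟨le_max_of_le_left (by nlinarith), le_max_of_le_right (by nlinarith)⟩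
  obtain ⟨r, hr0, hr1, hrβ, hrs⟩ : ∃ r : ℝ, 0 < r ∧ r < 1 ∧ β < r ^ 2 ∧ s0 < r + β / r := by
    have c1 : ContinuousAt (fun r : ℝ => r + β / r) 1 :=
      continuousAt_id.add (continuousAt_const.div continuousAt_id one_ne_zero)
    have c2 : ContinuousAt (fun r : ℝ => r ^ 2) 1 := (continuous_pow 2).continuousAt
    have e1 : ∀ᶠ r in nhds (1:ℝ), s0 < r + β / r := c1.eventually (lt_mem_nhds (by simpa using hs0))
    have e2 : ∀ᶠ r in nhds (1:ℝ), β < r ^ 2 := c2.eventually (lt_mem_nhds (by simpa using hβ1))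
    have e3 : ∀ᶠ r in nhds (1:ℝ), 0 < r := lt_mem_nhds one_pos
    have := ((e1.and (e2.and e3)).filter_mono nhdsWithin_le_nhds).and
      (self_mem_nhdsWithin : Iio (1:ℝ) ∈ nhdsWithin 1 (Iio 1))
    obtain ⟨r, ⟨h1, h2, h3⟩, h4⟩ := this.exists
    exact ⟨r, h3, h4, h2, h1⟩
  refine ⟨r, (2 + α) / r, hr0, hr1, by positivity, ?_⟩
  intro l hl
  have hl0 : 0 < l := hδ.trans_le hl.1
  set s := 1 + β - α * l with hs
  have hss := hs0' l hl
  have hroot : ∀ x : ℂ, x ^ 2 - s * x + β = 0 → ‖x‖ ≤ r := by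
    intro x hx
    have hre := congrArg Complex.re hx
    have him := congrArg Complex.im hx
    simp [pow_two] at hre him
    have hn : ‖x‖ ^ 2 = x.re ^ 2 + x.im ^ 2 := by
      rw [Complex.sq_norm, Complex.normSq_apply]; ring
    have h : x.im * (2 * x.re - s) = 0 := by linarith
    apply le_of_not_gt
    intro hlt
    have hlt2 : r ^ 2 < ‖x‖ ^ 2 := by gcongr
    rcases mul_eq_zero.1 h with h | h
    · have hxx : ‖x‖ ^ 2 + β = s * x.re := by rw [hn, h]; rw [h] at hre; linarith
      have hle : s * x.re ≤ s0 * ‖x‖ := by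
        calc s * x.re ≤ |s * x.re| := le_abs_self _
          _ = |s| * |x.re| := abs_mul _ _
          _ ≤ s0 * ‖x‖ := mul_le_mul hss (Complex.abs_re_le_norm x) (abs_nonneg _)
              ((abs_nonneg _).trans hss)
      have h3 : s0 * ‖x‖ < (r + β / r) * ‖x‖ := by
        apply mul_lt_mul_of_pos_right hrs (hr0.trans hlt)
      have h4 : β / r < r := by rw [div_lt_iff₀ hr0]; nlinarith
      have h5 : r * (β / r) = β := by field_simp
      nlinarith [mul_pos (sub_pos.2 hlt) (sub_pos.2 (h4.trans hlt))]
    · have : s = 2 * x.re := by linarith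
      rw [this] at hre
      nlinarith
  obtain ⟨w, hw⟩ := IsAlgClosed.exists_pow_nat_eq ((s:ℂ) ^ 2 - 4 * β) (n := 2) (by norm_num)
  have h1 : ‖((s:ℂ) + w) / 2‖ ≤ r := hroot _ (by linear_combination hw / 4)
  have h2 : ‖((s:ℂ) - w) / 2‖ ≤ r := hroot _ (by linear_combination hw / 4)
  set x₁ := ((s:ℂ) + w) / 2 with hx1
  set x₂ := ((s:ℂ) - w) / 2 with hx2
  have hsum : x₁ + x₂ = s := by rw [hx1, hx2]; ring
  have hprod : x₁ * x₂ = β := by rw [hx1, hx2]; linear_combination -hw / 4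
  have hgeo : ∀ n : ℕ, (q (n + 1) l : ℂ) - x₂ * q n l = x₁ ^ n * (q 1 l - x₂) := by
    intro n
    induction n with
    | zero => simp [hq0]
    | succ k ih =>
      rw [pow_succ, mul_right_comm, ← ih, hqrec (k + 1) (by omega)]
      have hs' : ((1:ℂ) + β - α * l) = x₁ + x₂ := by rw [hsum, hs]; push_cast; ring
      simp only [Nat.add_sub_cancel]
      push_cast
      linear_combination (q (k + 1) l : ℂ) * hs' + (q k l : ℂ) * hprod
  have hM : ‖(q 1 l : ℂ) - x₂‖ ≤ 2 + α := by
    refine (norm_sub_le _ _).trans ?_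
    have : ‖(q 1 l : ℂ)‖ ≤ 1 + α := by
      rw [Complex.norm_real, hq1, Real.norm_eq_abs, abs_le]
      constructor <;> nlinarith [hl.2]
    linarith
  intro n
  induction n with
  | zero => simp [hq0]
  | succ k ih =>
    have e : (q (k + 1) l : ℂ) = x₂ * q k l + x₁ ^ k * (q 1 l - x₂) := by
      rw [← hgeo]; ring
    have : |q (k + 1) l| ≤ r * |q k l| + r ^ k * (2 + α) := by
      rw [← Real.norm_eq_abs, ← Complex.norm_real, e]
      refine (norm_add_le _ _).trans ?_
      rw [norm_mul, norm_mul, norm_pow, Complex.norm_real, Real.norm_eq_abs]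
      gcongr
    calc _ ≤ r * |q k l| + r ^ k * (2 + α) := this
      _ ≤ r * ((1 + k * ((2 + α) / r)) * r ^ k) + r ^ k * (2 + α) := by gcongr
      _ = _ := by push_cast; field_simp; ring

/-- Sharp bound for small `l`. -/
lemma hb_small (α β : ℝ) (hβ0 : 0 < β) (hβ1 : β < 1) (hα0 : 0 < α)
    (q : ℕ → ℝ → ℝ)
    (hq0 : ∀ l, q 0 l = 1)
    (hq1 : ∀ l, q 1 l = 1 - α * l)
    (hqrec : ∀ n : ℕ, 1 ≤ n → ∀ l,
      q (n + 1) l = (1 - α * l) * q n l + β * (q n l - q (n - 1) l)) (K : ℝ) (hK : 1 < K) :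
    ∃ δ : ℝ, 0 < δ ∧ ∀ l, 0 ≤ l → l < δ → ∀ n : ℕ,
      0 ≤ q n l ∧ q n l ≤ K * Real.exp (-(α / (1 - β) * n * l)) := by
  have hb : 0 < 1 - β := by linarith
  have ev : ∀ f : ℝ → ℝ, Continuous f → 0 < f 0 → ∀ᶠ l in nhds (0:ℝ), 0 < f l := fun f hf h =>
    hf.continuousAt.eventually (lt_mem_nhds h)
  have e1 := ev (fun l => (1 + β - α * l) ^ 2 - 4 * β) (by fun_prop) (by simp; nlinarith)
  have e2 := ev (fun l => 1 + β - α * l) (by fun_prop) (by simp; linarith)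
  have e3 := ev (fun l => 2 * (1 - α / (1 - β) * l) - (1 + β - α * l)) (by fun_prop)
    (by simp; linarith)
  have e4 := ev (fun l => 2 * (1 - α * l) - (1 + β - α * l)) (by fun_prop) (by simp; linarith)
  have e5 := ev (fun l => K * √((1 + β - α * l) ^ 2 - 4 * β) - (1 - α * l -
    ((1 + β - α * l) - √((1 + β - α * l) ^ 2 - 4 * β)) / 2)) (by fun_prop) (by
      have : (1 + β - α * 0) ^ 2 - 4 * β = (1 - β) ^ 2 := by ring
      simp only [this, Real.sqrt_sq hb.le]
      nlinarith)
  obtain ⟨δ, hδ, H⟩ := Metric.eventually_nhds_iff.1 (e1.and (e2.and (e3.and (e4.and e5))))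
  refine ⟨δ, hδ, fun l hl0 hlδ n => ?_⟩
  obtain ⟨f1, f2, f3, f4, f5⟩ := H (y := l) (by simpa [abs_of_nonneg hl0] using hlδ)
  set c := α / (1 - β) with hc
  have hcα : c * (1 - β) = α := by rw [hc]; field_simp
  have hc0 : 0 < c := by positivity
  set s := 1 + β - α * l with hs
  set w := √(s ^ 2 - 4 * β) with hw
  have hw0 : 0 < w := Real.sqrt_pos.2 f1
  have hw2 : w ^ 2 = s ^ 2 - 4 * β := Real.sq_sqrt f1.le
  have hws : w ≤ s := by apply Real.sqrt_le_iff.2 ⟨f2.le, by linarith⟩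
  have hwc : w ≤ 2 * (1 - c * l) - s := by
    apply Real.sqrt_le_iff.2 ⟨f3.le, ?_⟩
    have : (2 * (1 - c * l) - s) ^ 2 - (s ^ 2 - 4 * β) = 4 * (c * l ^ 2 * (c - α)) := by
      rw [hs]; linear_combination (-4 * l) * hcα
    have h2 : 0 ≤ c - α := by rw [← hcα]; nlinarith
    have : 0 ≤ c * l ^ 2 * (c - α) := by positivity
    linarith
  have hwa : w ≤ 2 * (1 - α * l) - s := by
    apply Real.sqrt_le_iff.2 ⟨f4.le, ?_⟩
    have : (2 * (1 - α * l) - s) ^ 2 - (s ^ 2 - 4 * β) = 4 * (α * l * β) := by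
      rw [hs]; ring
    have : 0 ≤ α * l * β := by positivity
    linarith
  set x₁ := (s + w) / 2 with hx1
  set x₂ := (s - w) / 2 with hx2
  have hx20 : 0 ≤ x₂ := by rw [hx2]; linarith
  have hx12 : x₂ ≤ x₁ := by rw [hx2, hx1]; linarith
  have hB : 0 ≤ 1 - α * l - x₁ := by rw [hx1]; linarith
  have hform : ∀ n : ℕ, w * q n l = (1 - α * l - x₂) * x₁ ^ n - (1 - α * l - x₁) * x₂ ^ n ∧
      w * q (n + 1) l = (1 - α * l - x₂) * x₁ ^ (n + 1) - (1 - α * l - x₁) * x₂ ^ (n + 1) := by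
    intro n
    induction n with
    | zero => 
      rw [hq0, hq1, hx1, hx2]
      constructor <;> ring
    | succ k ih =>
      refine ⟨ih.2, ?_⟩
      have r1 : x₁ ^ 2 = s * x₁ - β := by rw [hx1]; linear_combination hw2 / 4
      have r2 : x₂ ^ 2 = s * x₂ - β := by rw [hx2]; linear_combination hw2 / 4
      rw [hqrec (k + 1) (by omega)]
      simp only [Nat.add_sub_cancel]
      have : w * ((1 - α * l) * q (k + 1) l + β * (q (k + 1) l - q k l)) =
        s * (w * q (k + 1) l) - β * (w * q k l) := by rw [hs]; ring
      rw [this, ih.1, ih.2]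
      linear_combination -(1 - α * l - x₂) * x₁ ^ k * r1 + (1 - α * l - x₁) * x₂ ^ k * r2
  have hn := (hform n).1
  have hp : x₂ ^ n ≤ x₁ ^ n := by gcongr
  have hp0 : 0 ≤ x₂ ^ n := by positivity
  constructor
  · have : 0 ≤ w * q n l := by
      rw [hn]
      nlinarith [mul_nonneg hB (sub_nonneg.2 hp), mul_nonneg (sub_nonneg.2 hx12) (hp0.trans hp)]
    exact nonneg_of_mul_nonneg_right this hw0
  · have hx1e : x₁ ≤ Real.exp (-(c * l)) := by
      have := Real.add_one_le_exp (-(c * l))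
      rw [hx1]; linarith
    have hx1n : x₁ ^ n ≤ Real.exp (-(c * n * l)) := by
      calc x₁ ^ n ≤ (Real.exp (-(c * l))) ^ n := by
            have := hx20.trans hx12
            gcongr
        _ = _ := by rw [← Real.exp_nat_mul]; congr 1; ring
    have : w * q n l ≤ w * (K * x₁ ^ n) := by
      rw [hn]
      nlinarith [mul_nonneg hB hp0, mul_nonneg f5.le (hp0.trans hp)]
    refine (le_of_mul_le_mul_left this hw0).trans ?_
    gcongr

/-- Heavy Ball with constant learning rate `α` and momentum `β`: under the power-law
spectral condition `ρ((0,λ]) ≤ λ^ζ`, the losses satisfy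
`limsup_{n→∞} (2αn/(1-β))^ζ L_n ≤ Γ(ζ+1)/2`. -/
theorem hb_constant_rate_loss_upper_bound
    (ζ α β : ℝ) (hζ : 0 < ζ) (hβ0 : 0 < β) (hβ1 : β < 1)
    (hα0 : 0 < α) (hα : α < 2 * (1 + β))
    (ρ : Measure ℝ) [IsFiniteMeasure ρ]
    (hsupp : ρ (Set.Icc (0:ℝ) 1)ᶜ = 0)
    (h0 : ρ {(0:ℝ)} = 0)
    (hpow : ∀ l ∈ Set.Icc (0:ℝ) 1, (ρ (Set.Ioc 0 l)).toReal ≤ l ^ ζ)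
    (q : ℕ → ℝ → ℝ)
    (hq0 : ∀ l, q 0 l = 1)
    (hq1 : ∀ l, q 1 l = 1 - α * l)
    (hqrec : ∀ n : ℕ, 1 ≤ n → ∀ l,
      q (n + 1) l = (1 - α * l) * q n l + β * (q n l - q (n - 1) l)) :
    Filter.limsup (fun n : ℕ =>
        (2 * α * n / (1 - β)) ^ ζ * ((1/2) * ∫ l in Set.Icc (0:ℝ) 1, (q n l) ^ 2 ∂ρ))
      atTop ≤ Real.Gamma (ζ + 1) / 2 := by
  have hb : 0 < 1 - β := by linarith
  set G := Real.Gamma (ζ + 1) with hGdef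
  have hG : 0 < G := Real.Gamma_pos_of_pos (by linarith)
  apply le_of_forall_pos_le_add
  intro ε hε
  -- choose K
  obtain ⟨K, hK1, hK2⟩ : ∃ K : ℝ, 1 < K ∧ K ^ 2 * (G / 2) < G / 2 + ε / 2 := by
    have c : ContinuousAt (fun K : ℝ => K ^ 2 * (G / 2)) 1 := by fun_prop
    have e : ∀ᶠ K in nhds (1:ℝ), K ^ 2 * (G / 2) < G / 2 + ε / 2 :=
      c.eventually (gt_mem_nhds (by simp; linarith))
    obtain ⟨K, h1, h2⟩ := ((e.filter_mono nhdsWithin_le_nhds).and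
      (self_mem_nhdsWithin : Ioi (1:ℝ) ∈ nhdsWithin 1 (Ioi 1))).exists
    exact ⟨K, h2, h1⟩
  obtain ⟨δ, hδ, hsmall⟩ := hb_small α β hβ0 hβ1 hα0 q hq0 hq1 hqrec K hK1
  obtain ⟨r, M, hr0, hr1, hM, hlarge⟩ := hb_large α β hβ0 hβ1 hα0 hα q hq0 hq1 hqrec δ hδ
  set R := (ρ (Icc (0:ℝ) 1)).toReal with hR
  have hR0 : 0 ≤ R := ENNReal.toReal_nonneg
  -- the integral bound
  have hbound : ∀ n : ℕ, 1 ≤ n → ∫ l in Set.Icc (0:ℝ) 1, (q n l) ^ 2 ∂ρ ≤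
      K ^ 2 * ((1 / (2 * α * n / (1 - β))) ^ ζ * G) + ((1 + n * M) * r ^ n) ^ 2 * R := by
    intro n hn
    have hn0 : (0:ℝ) < n := by exact_mod_cast hn
    have ht : 0 < 2 * α * n / (1 - β) := by positivity
    have hL := hb_laplace ζ hζ ρ h0 hpow _ ht
    set t := 2 * α * n / (1 - β) with htdef
    have hi : Integrable (fun l => Real.exp (-(t * l))) (ρ.restrict (Icc 0 1)) :=
      ContinuousOn.integrableOn_compact isCompact_Icc (by fun_prop)
    calc ∫ l in Set.Icc (0:ℝ) 1, (q n l) ^ 2 ∂ρ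
        ≤ ∫ l in Set.Icc (0:ℝ) 1, (K ^ 2 * Real.exp (-(t * l)) + ((1 + n * M) * r ^ n) ^ 2) ∂ρ := by
          apply integral_mono_of_nonneg (Eventually.of_forall fun l => sq_nonneg _)
          · exact (hi.const_mul _).add (integrable_const _)
          · filter_upwards [ae_restrict_mem measurableSet_Icc] with l hl
            rcases lt_or_ge l δ with h | h
            · obtain ⟨a1, a2⟩ := hsmall l hl.1 h n
              have : q n l ^ 2 ≤ (K * Real.exp (-(α / (1 - β) * n * l))) ^ 2 := by gcongr
              rw [mul_pow, ← Real.exp_nat_mul] at this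
              have e : ((2:ℕ):ℝ) * -(α / (1 - β) * n * l) = -(t * l) := by
                rw [htdef]; push_cast; ring
              rw [e] at this
              nlinarith [sq_nonneg ((1 + n * M) * r ^ n)]
            · have := hlarge l ⟨h, hl.2⟩ n
              have h2 : q n l ^ 2 ≤ ((1 + n * M) * r ^ n) ^ 2 := by
                rw [← sq_abs]; gcongr
              have : 0 ≤ K ^ 2 * Real.exp (-(t * l)) := by positivity
              linarith
      _ = K ^ 2 * (∫ l in Set.Icc (0:ℝ) 1, Real.exp (-(t * l)) ∂ρ)
            + ((1 + n * M) * r ^ n) ^ 2 * R := by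
          rw [integral_add (hi.const_mul _) (integrable_const _), integral_const_mul]
          simp [hR, Measure.real, mul_comm]
      _ ≤ _ := by gcongr
  -- the error tends to zero
  set C := (2 * α / (1 - β)) ^ ζ * (1 / 2 * ((1 + M) ^ 2 * R)) with hC
  have htend : Tendsto (fun n : ℕ => C * ((n:ℝ) ^ (⌈ζ⌉₊ + 2) * (r ^ 2) ^ n)) atTop (nhds 0) := by
    have := tendsto_pow_const_mul_const_pow_of_abs_lt_one (⌈ζ⌉₊ + 2) (r := r ^ 2)
      (by rw [abs_of_nonneg (by positivity)]; nlinarith)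
    simpa using this.const_mul C
  have hev : ∀ᶠ n : ℕ in atTop, (2 * α * n / (1 - β)) ^ ζ *
      ((1/2) * ∫ l in Set.Icc (0:ℝ) 1, (q n l) ^ 2 ∂ρ) ≤ G / 2 + ε := by
    filter_upwards [htend.eventually (gt_mem_nhds (half_pos hε)), eventually_ge_atTop 1] with n h1 hn
    have hn1 : (1:ℝ) ≤ n := by exact_mod_cast hn
    have hn0 : (0:ℝ) < n := by linarith
    have ht : 0 < 2 * α * n / (1 - β) := by positivity
    have e1 : (2 * α * n / (1 - β)) ^ ζ * (1 / (2 * α * n / (1 - β))) ^ ζ = 1 := by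
      rw [← Real.mul_rpow ht.le (by positivity), mul_one_div_cancel ht.ne', Real.one_rpow]
    have e2 : (2 * α * n / (1 - β)) ^ ζ = (2 * α / (1 - β)) ^ ζ * (n:ℝ) ^ ζ := by
      rw [← Real.mul_rpow (by positivity) hn0.le]; congr 1; ring
    have e3 : (n:ℝ) ^ ζ ≤ (n:ℝ) ^ ⌈ζ⌉₊ := by
      rw [← Real.rpow_natCast]
      exact Real.rpow_le_rpow_of_exponent_le hn1 (Nat.le_ceil _)
    calc _ ≤ (2 * α * n / (1 - β)) ^ ζ * ((1/2) * (K ^ 2 * ((1 / (2 * α * n / (1 - β))) ^ ζ * G)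
              + ((1 + n * M) * r ^ n) ^ 2 * R)) := by
            gcongr
            exact hbound n hn
      _ = K ^ 2 * (G / 2) * ((2 * α * n / (1 - β)) ^ ζ * (1 / (2 * α * n / (1 - β))) ^ ζ)
            + (2 * α * n / (1 - β)) ^ ζ * ((1/2) * (((1 + n * M) * r ^ n) ^ 2 * R)) := by ring
      _ = K ^ 2 * (G / 2) + ((2 * α / (1 - β)) ^ ζ * (n:ℝ) ^ ζ) *
            ((1/2) * (((1 + n * M) * r ^ n) ^ 2 * R)) := by rw [e1, e2, mul_one]
      _ ≤ K ^ 2 * (G / 2) + ((2 * α / (1 - β)) ^ ζ * (n:ℝ) ^ ⌈ζ⌉₊) *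
            ((1/2) * (((n + n * M) * r ^ n) ^ 2 * R)) := by gcongr
      _ = K ^ 2 * (G / 2) + C * ((n:ℝ) ^ (⌈ζ⌉₊ + 2) * (r ^ 2) ^ n) := by
            rw [hC]; ring
      _ ≤ _ := by linarith
  refine limsup_le_of_le ?_ hev
  refine IsCoboundedUnder.of_frequently_ge (a := 0) (Eventually.frequently ?_)
  refine Eventually.of_forall fun n => ?_
  have : 0 ≤ ∫ l in Set.Icc (0:ℝ) 1, (q n l) ^ 2 ∂ρ := integral_nonneg fun l => sq_nonneg _
  positivity
end

section
/- Let ζ>0 and a > max(0, ζ-1/2). Let ρ be a finite Borel measure on ℝ supported on [0,1] with ρ({0})=0 and ρ((0,λ]) ≤ λ^ζ for all λ ∈ [0,1]. Define, for n ≥ 0, α_n = (2n+a+1)(2n+a+2)/(2(n+a+1)²) and β_n = n²(2n+a+2)/((n+a+1)²(2n+a)), and define polynomials q_n by q_0=1, q_1(λ)=1-α_0λ, q_{n+1}(λ) = (1-α_nλ)q_n(λ) + β_n(q_n(λ)-q_{n-1}(λ)) for n ≥ 1. Set S(ζ,a) = ((4a+5)²/2)^ζ · [1 + (ζ/(a+1/2-ζ))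 · 2^{2a+2}Γ(a+1)²/(π(4a+5)^{2a+1})]. Then there exists C > 0 such that for all n ≥ 1, (1/2)∫_{[0,1]} q_n(λ)² ρ(dλ) ≤ (1/2)·S(ζ,a)·n^{-2ζ}·(1 + C/n). -/
open MeasureTheory Filter Set

/-- Polynomials `Q_n(t) = q_n(2t)`. -/
noncomputable def jac (a : ℝ) : ℕ → Polynomial ℝ
  | 0 => 1
  | 1 => 1 - Polynomial.C ((a + 2) / (a + 1)) * Polynomial.X
  | (n + 2) => (1 - Polynomial.C ((2 * ((n : ℝ) + 1) + a + 1) * (2 * ((n : ℝ) + 1) + a + 2) /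
        (((n : ℝ) + 1) + a + 1) ^ 2) * Polynomial.X) * jac a (n + 1)
      + Polynomial.C (((n : ℝ) + 1) ^ 2 * (2 * ((n : ℝ) + 1) + a + 2) /
        ((((n : ℝ) + 1) + a + 1) ^ 2 * (2 * ((n : ℝ) + 1) + a))) * (jac a (n + 1) - jac a n)

noncomputable def jQ (a : ℝ) (n : ℕ) (t : ℝ) : ℝ := (jac a n).eval t
noncomputable def jD (a : ℝ) (n : ℕ) (t : ℝ) : ℝ := (jac a n).derivative.eval t
noncomputable def jDD (a : ℝ) (n : ℕ) (t : ℝ) : ℝ := (jac a n).derivative.derivative.eval t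

lemma jQ_zero (a t : ℝ) : jQ a 0 t = 1 := by simp [jQ, jac]
lemma jD_zero (a t : ℝ) : jD a 0 t = 0 := by simp [jD, jac]
lemma jQ_one (a t : ℝ) : jQ a 1 t = 1 - (a + 2) / (a + 1) * t := by simp [jQ, jac]
lemma jD_one (a t : ℝ) : jD a 1 t = - ((a + 2) / (a + 1)) := by simp [jD, jac]

lemma jQ_rec' (a t : ℝ) (n : ℕ) : jQ a (n + 2) t =
    (1 - ((2 * ((n : ℝ) + 1) + a + 1) * (2 * ((n : ℝ) + 1) + a + 2) /
        (((n : ℝ) + 1) + a + 1) ^ 2) * t) * jQ a (n + 1) t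
      + (((n : ℝ) + 1) ^ 2 * (2 * ((n : ℝ) + 1) + a + 2) /
        ((((n : ℝ) + 1) + a + 1) ^ 2 * (2 * ((n : ℝ) + 1) + a))) * (jQ a (n + 1) t - jQ a n t) := by
  simp only [jQ, jac, Polynomial.eval_add, Polynomial.eval_mul, Polynomial.eval_sub,
    Polynomial.eval_one, Polynomial.eval_C, Polynomial.eval_X]

lemma jD_rec' (a t : ℝ) (n : ℕ) : jD a (n + 2) t =
    (1 - ((2 * ((n : ℝ) + 1) + a + 1) * (2 * ((n : ℝ) + 1) + a + 2) /
        (((n : ℝ) + 1) + a + 1) ^ 2) * t) * jD a (n + 1) t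
      - ((2 * ((n : ℝ) + 1) + a + 1) * (2 * ((n : ℝ) + 1) + a + 2) /
        (((n : ℝ) + 1) + a + 1) ^ 2) * jQ a (n + 1) t
      + (((n : ℝ) + 1) ^ 2 * (2 * ((n : ℝ) + 1) + a + 2) /
        ((((n : ℝ) + 1) + a + 1) ^ 2 * (2 * ((n : ℝ) + 1) + a))) * (jD a (n + 1) t - jD a n t) := by
  simp only [jD, jQ, jac, Polynomial.derivative_add, Polynomial.derivative_mul,
    Polynomial.derivative_sub, Polynomial.derivative_one, Polynomial.derivative_C,
    Polynomial.derivative_X,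
    Polynomial.eval_add, Polynomial.eval_mul, Polynomial.eval_sub,
    Polynomial.eval_one, Polynomial.eval_C, Polynomial.eval_X, Polynomial.eval_zero]
  ring

lemma jQ_hasDerivAt (a t : ℝ) (n : ℕ) : HasDerivAt (jQ a n) (jD a n t) t :=
  (jac a n).hasDerivAt t
lemma jD_hasDerivAt (a t : ℝ) (n : ℕ) : HasDerivAt (jD a n) (jDD a n t) t :=
  (jac a n).derivative.hasDerivAt t

/-- cleared recurrence -/
lemma jQ_rec (a t : ℝ) (ha : 0 < a) (k : ℕ) :
    ((k : ℝ) + a + 2) ^ 2 * (2 * k + a + 2) * jQ a (k + 2) t =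
    (((k : ℝ) + a + 2) ^ 2 * (2 * k + a + 2) - (2 * k + a + 3) * (2 * k + a + 4) * (2 * k + a + 2) * t
      + (k + 1) ^ 2 * (2 * k + a + 4)) * jQ a (k + 1) t - (k + 1) ^ 2 * (2 * k + a + 4) * jQ a k t := by
  rw [jQ_rec']
  have h1 : (k : ℝ) + 1 + a + 1 ≠ 0 := by positivity
  have h2 : 2 * ((k : ℝ) + 1) + a ≠ 0 := by positivity
  field_simp
  ring

lemma jD_rec (a t : ℝ) (ha : 0 < a) (k : ℕ) :
    ((k : ℝ) + a + 2) ^ 2 * (2 * k + a + 2) * jD a (k + 2) t =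
    (((k : ℝ) + a + 2) ^ 2 * (2 * k + a + 2) - (2 * k + a + 3) * (2 * k + a + 4) * (2 * k + a + 2) * t
      + (k + 1) ^ 2 * (2 * k + a + 4)) * jD a (k + 1) t
      - (2 * k + a + 3) * (2 * k + a + 4) * (2 * k + a + 2) * jQ a (k + 1) t
      - (k + 1) ^ 2 * (2 * k + a + 4) * jD a k t := by
  rw [jD_rec']
  have h1 : (k : ℝ) + 1 + a + 1 ≠ 0 := by positivity
  have h2 : 2 * ((k : ℝ) + 1) + a ≠ 0 := by positivity
  field_simp
  ring

lemma jS (a : ℝ) (ha : 0 < a) (t : ℝ) (k : ℕ) :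
    ((2 * (k : ℝ) + 2 + a) * t * (1 - t) * jD a (k + 1) t =
      (k + 1) * ((k + 1) - (2 * k + 2 + a) * t) * jQ a (k + 1) t - (k + 1) ^ 2 * jQ a k t) ∧
    ((2 * (k : ℝ) + a + 2) * t * (1 - t) * jD a k t =
      (k + a + 1) * (((2 * k + a + 2) * t - (k + a + 1)) * jQ a k t + (k + a + 1) * jQ a (k + 1) t)) := by
  induction k with
  | zero =>
    have h : a + 1 ≠ 0 := by positivity
    constructor
    · simp only [jD_one, jQ_one, jQ_zero, Nat.cast_zero, zero_add]
      field_simp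
      ring
    · simp only [jD_zero, jQ_one, jQ_zero, Nat.cast_zero, zero_add]
      field_simp
      ring
  | succ k ih =>
    obtain ⟨h1, h2⟩ := ih
    have hr := jQ_rec a t ha k
    have hd := jD_rec a t ha k
    have n1 : (k : ℝ) + a + 2 ≠ 0 := by positivity
    have n2 : 2 * (k : ℝ) + a + 2 ≠ 0 := by positivity
    have n4 : 2 * (k : ℝ) + a + 4 ≠ 0 := by positivity
    have e : k + 1 + 1 = k + 2 := rfl
    rw [e]
    push_cast
    have h3 : (2 * ((k : ℝ) + 1) + a + 2) * t * (1 - t) * jD a (k + 1) t =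
      (((k : ℝ) + 1) + a + 1) * (((2 * ((k : ℝ) + 1) + a + 2) * t - (((k : ℝ) + 1) + a + 1)) *
        jQ a (k + 1) t + (((k : ℝ) + 1) + a + 1) * jQ a (k + 2) t) := by
      apply mul_left_cancel₀ n2
      linear_combination (2 * (k : ℝ) + a + 4) * h1 - hr
    refine ⟨?_, h3⟩
    apply mul_left_cancel₀ (mul_ne_zero (mul_ne_zero (pow_ne_zero 2 n1) n2) n2)
    linear_combination (2 * (k : ℝ) + a + 2) * (2 * (k : ℝ) + a + 4) * t * (1 - t) * hd +
      (2 * (k : ℝ) + a + 2) * (((k : ℝ) + a + 2) ^ 2 * (2 * k + a + 2)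
        - (2 * k + a + 3) * (2 * k + a + 4) * (2 * k + a + 2) * t
        + (k + 1) ^ 2 * (2 * k + a + 4)) * h3 - ((k : ℝ) + 1) ^ 2 * (2 * k + a + 4) ^ 2 * h2 +
      ((((k : ℝ) + a + 2) ^ 2 * (2 * k + a + 2)
        - (2 * k + a + 3) * (2 * k + a + 4) * (2 * k + a + 2) * t
        + (k + 1) ^ 2 * (2 * k + a + 4)) -
        (2 * (k : ℝ) + a + 2) * (k + 2) * ((k + 2) - (2 * k + a + 4) * t)) * hr

/-- The Jacobi differential equation. -/
lemma jODE (a : ℝ) (ha : 0 < a) (t : ℝ) (ht : t ∈ Ioo (0 : ℝ) 1) (k : ℕ) :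
    t * (1 - t) * jDD a k t + (a + 1 - (a + 2) * t) * jD a k t + k * (k + a + 1) * jQ a k t = 0 := by
  have n0 : t * (1 - t) ≠ 0 := mul_ne_zero ht.1.ne' (by linarith [ht.2])
  have n2 : 2 * (k : ℝ) + a + 2 ≠ 0 := by positivity
  have h1 := (jS a ha t k).1
  have h2 := (jS a ha t k).2
  have hd1 : HasDerivAt (fun t => (2 * (k : ℝ) + a + 2) * t * (1 - t) * jD a k t)
      (((2 * (k : ℝ) + a + 2) * 1 * (1 - t) + (2 * (k : ℝ) + a + 2) * t * (-1)) * jD a k t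
        + (2 * (k : ℝ) + a + 2) * t * (1 - t) * jDD a k t) t :=
    (((hasDerivAt_id t).const_mul _).mul ((hasDerivAt_id t).const_sub 1)).mul (jD_hasDerivAt a t k)
  have hd2 : HasDerivAt (fun t => ((k : ℝ) + a + 1) * (((2 * k + a + 2) * t - (k + a + 1)) * jQ a k t
      + (k + a + 1) * jQ a (k + 1) t))
      (((k : ℝ) + a + 1) * (((2 * k + a + 2) * 1 * jQ a k t +
        ((2 * k + a + 2) * t - (k + a + 1)) * jD a k t) + (k + a + 1) * jD a (k + 1) t)) t :=
    (((((hasDerivAt_id t).const_mul _).sub_const _).mul (jQ_hasDerivAt a t k)).add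
      ((jQ_hasDerivAt a t (k + 1)).const_mul _)).const_mul _
  have hfe : (fun t => (2 * (k : ℝ) + a + 2) * t * (1 - t) * jD a k t) =
    (fun t => ((k : ℝ) + a + 1) * (((2 * k + a + 2) * t - (k + a + 1)) * jQ a k t
      + (k + a + 1) * jQ a (k + 1) t)) := by
    funext s
    exact (jS a ha s k).2
  rw [hfe] at hd1
  have h3 := hd1.unique hd2
  apply mul_left_cancel₀ (mul_ne_zero n2 (mul_ne_zero n2 n0))
  linear_combination (2 * (k : ℝ) + a + 2) * t * (1 - t) * h3 + ((k : ℝ) + a + 1) ^ 2 * h1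
     - ((k : ℝ) + 1) * ((k + 1) - (2 * k + 2 + a) * t) * h2


lemma jQ_cont (a : ℝ) (n : ℕ) : Continuous (jQ a n) := (jac a n).continuous
lemma jD_cont (a : ℝ) (n : ℕ) : Continuous (jD a n) := (jac a n).derivative.continuous

lemma jQ_at_zero (a : ℝ) (n : ℕ) : jQ a n 0 = 1 ∧ jQ a (n + 1) 0 = 1 := by
  induction n with
  | zero => simp [jQ_zero, jQ_one]
  | succ n ih =>
    refine ⟨ih.2, ?_⟩
    show jQ a (n + 2) 0 = 1
    rw [jQ_rec', ih.1, ih.2]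
    ring

lemma jQ_sq_le_one (a : ℝ) (ha : 0 < a) (n : ℕ) (t : ℝ) (ht0 : 0 ≤ t) (ht1 : t ≤ 1 / 2) :
    jQ a n t ^ 2 ≤ 1 := by
  rcases Nat.eq_zero_or_pos n with rfl | hn
  · simp [jQ_zero]
  have hn' : (0 : ℝ) < n := by exact_mod_cast hn
  set f : ℝ → ℝ := fun t => n * (n + a + 1) * jQ a n t ^ 2 + t * (1 - t) * jD a n t ^ 2 with hf
  have hfd : ∀ s, HasDerivAt f (n * (n + a + 1) * (2 * jQ a n s * jD a n s) +
      ((1 * (1 - s) + s * (-1)) * jD a n s ^ 2 +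
        s * (1 - s) * (2 * jD a n s * jDD a n s))) s := by
    intro s
    have e1 := ((jQ_hasDerivAt a s n).pow 2).const_mul ((n : ℝ) * (n + a + 1))
    have e2 := ((hasDerivAt_id s).mul ((hasDerivAt_id s).const_sub 1)).mul
      ((jD_hasDerivAt a s n).pow 2)
    have e3 := e1.add e2
    refine e3.congr_deriv ?_
    simp
  have hanti : AntitoneOn f (Icc 0 (1 / 2)) := by
    apply antitoneOn_of_deriv_nonpos (convex_Icc _ _)
    · exact fun s _ => (hfd s).continuousAt.continuousWithinAt
    · exact fun s _ => (hfd s).differentiableAt.differentiableWithinAt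
    · intro s hs
      rw [interior_Icc] at hs
      rw [(hfd s).deriv]
      have ho := jODE a ha s ⟨hs.1, by linarith [hs.2]⟩ n
      have : n * (n + a + 1) * (2 * jQ a n s * jD a n s) +
        ((1 * (1 - s) + s * (-1)) * jD a n s ^ 2 +
        s * (1 - s) * (2 * jD a n s * jDD a n s)) =
        - (jD a n s ^ 2 * ((2 * a + 1) - (2 * a + 2) * s)) := by
        linear_combination 2 * jD a n s * ho
      rw [this]
      have : 0 ≤ (2 * a + 1) - (2 * a + 2) * s := by nlinarith [hs.2]
      have := mul_nonneg (sq_nonneg (jD a n s)) this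
      linarith
  have h := hanti ⟨le_refl 0, by norm_num⟩ ⟨ht0, ht1⟩ ht0
  simp only [hf, (jQ_at_zero a n).1] at h
  have h2 : 0 ≤ t * (1 - t) * jD a n t ^ 2 := by
    have : 0 ≤ 1 - t := by linarith
    positivity
  have h3 : (n : ℝ) * (n + a + 1) * jQ a n t ^ 2 ≤ n * (n + a + 1) * 1 := by linarith
  exact le_of_mul_le_mul_left h3 (by positivity)

lemma tpow_cont (a : ℝ) (ha : 0 < a) : Continuous (fun t : ℝ => t ^ a) :=
  Real.continuous_rpow_const ha.le

lemma j_int (a : ℝ) (ha : 0 < a) (f : ℝ → ℝ) (hf : Continuous f) (x y : ℝ) :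
    IntervalIntegrable (fun t => t ^ a * f t) volume x y :=
  ((tpow_cont a ha).mul hf).intervalIntegrable _ _

lemma j_orth (a : ℝ) (ha : 0 < a) (k m : ℕ) (hkm : k ≠ m) :
    ∫ t in (0 : ℝ)..1, t ^ a * (jQ a k t * jQ a m t) = 0 := by
  set W : ℝ → ℝ := fun t => t ^ (a + 1) * ((1 - t) * (jD a k t * jQ a m t - jQ a k t * jD a m t)) with hW
  set c : ℝ := (m : ℝ) * (m + a + 1) - k * (k + a + 1) with hc
  have hc0 : c ≠ 0 := by
    have : c = ((m : ℝ) - k) * (m + k + a + 1) := by rw [hc]; ring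
    rw [this]
    refine mul_ne_zero (sub_ne_zero.2 ?_) (by positivity)
    exact_mod_cast hkm.symm
  have hd : ∀ t ∈ Ioo (0 : ℝ) 1, HasDerivAt W (c * (t ^ a * (jQ a k t * jQ a m t))) t := by
    intro t ht
    have e1 : HasDerivAt (fun t : ℝ => t ^ (a + 1)) ((a + 1) * t ^ a) t := by
      have := Real.hasDerivAt_rpow_const (x := t) (p := a + 1) (Or.inl ht.1.ne')
      simpa using this
    have e2 := e1.mul (((hasDerivAt_id t).const_sub 1).mul
      (((jD_hasDerivAt a t k).mul (jQ_hasDerivAt a t m)).sub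
        ((jQ_hasDerivAt a t k).mul (jD_hasDerivAt a t m))))
    refine e2.congr_deriv ?_
    have o1 := jODE a ha t ht k
    have o2 := jODE a ha t ht m
    have e3 : t ^ (a + 1) = t ^ a * t := by
      rw [Real.rpow_add ht.1, Real.rpow_one]
    simp only [e3, Pi.mul_apply, Pi.sub_apply, id]
    linear_combination (t ^ a) * jQ a m t * o1 - (t ^ a) * jQ a k t * o2
  have hcW : Continuous W := by
    have := jQ_cont a k
    have := jQ_cont a m
    have := jD_cont a k
    have := jD_cont a m
    have := tpow_cont (a + 1) (by linarith)
    rw [hW]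
    fun_prop
  have hi : IntervalIntegrable (fun t => c * (t ^ a * (jQ a k t * jQ a m t))) volume 0 1 :=
    (j_int a ha _ ((jQ_cont a k).mul (jQ_cont a m)) 0 1).const_mul c
  have := intervalIntegral.integral_eq_sub_of_hasDerivAt_of_le (zero_le_one) hcW.continuousOn hd hi
  rw [intervalIntegral.integral_const_mul] at this
  have hW0 : W 0 = 0 := by
    simp only [hW]; rw [Real.zero_rpow (by linarith)]; ring
  have hW1 : W 1 = 0 := by simp [hW]
  rw [hW0, hW1, sub_zero] at this
  exact (mul_eq_zero.1 this).resolve_left hc0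

noncomputable def jh (a : ℝ) (n : ℕ) : ℝ := ∫ t in (0 : ℝ)..1, t ^ a * (jQ a n t * jQ a n t)

lemma jh_succ (a : ℝ) (ha : 0 < a) (k : ℕ) :
    ((k : ℝ) + 1 + a) ^ 2 * (2 * k + a + 3) * jh a (k + 1) = (k + 1) ^ 2 * (2 * k + a + 1) * jh a k := by
  set X : ℝ := ∫ t in (0 : ℝ)..1, t ^ a * (t * (jQ a k t * jQ a (k + 1) t)) with hX
  have ii : ∀ i j, IntervalIntegrable (fun t => t ^ a * (jQ a i t * jQ a j t)) volume 0 1 :=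
    fun i j => j_int a ha _ ((jQ_cont a i).mul (jQ_cont a j)) 0 1
  have ix : IntervalIntegrable (fun t => t ^ a * (t * (jQ a k t * jQ a (k + 1) t))) volume 0 1 :=
    j_int a ha _ (continuous_id.mul ((jQ_cont a k).mul (jQ_cont a (k + 1)))) 0 1
  -- first relation
  have r1 : (k + 1 : ℝ) ^ 2 * (2 * k + a + 4) * jh a k =
      - ((2 * k + a + 3) * (2 * k + a + 4) * (2 * k + a + 2) * X) := by
    have : ∀ t, (k + 1 : ℝ) ^ 2 * (2 * k + a + 4) * (t ^ a * (jQ a k t * jQ a k t)) =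
      ((((k : ℝ) + a + 2) ^ 2 * (2 * k + a + 2) + (k + 1) ^ 2 * (2 * k + a + 4)) *
        (t ^ a * (jQ a k t * jQ a (k + 1) t)) -
      (2 * k + a + 3) * (2 * k + a + 4) * (2 * k + a + 2) * (t ^ a * (t * (jQ a k t * jQ a (k + 1) t)))) -
      ((k : ℝ) + a + 2) ^ 2 * (2 * k + a + 2) * (t ^ a * (jQ a k t * jQ a (k + 2) t)) := by
      intro t
      linear_combination (t ^ a * jQ a k t) * jQ_rec a t ha k
    rw [jh, ← intervalIntegral.integral_const_mul]
    simp_rw [this]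
    rw [intervalIntegral.integral_sub (((ii _ _).const_mul _).sub (ix.const_mul _)) ((ii _ _).const_mul _),
      intervalIntegral.integral_sub ((ii _ _).const_mul _) (ix.const_mul _),
      intervalIntegral.integral_const_mul, intervalIntegral.integral_const_mul,
      intervalIntegral.integral_const_mul, j_orth a ha k (k + 1) (by omega),
      j_orth a ha k (k + 2) (by omega)]
    ring
  have rec0 : ∀ t, ((k : ℝ) + a + 1) ^ 2 * (2 * k + a) * jQ a (k + 1) t =
    (((k : ℝ) + a + 1) ^ 2 * (2 * k + a) - (2 * k + a + 1) * (2 * k + a + 2) * (2 * k + a) * t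
      + k ^ 2 * (2 * k + a + 2)) * jQ a k t - k ^ 2 * (2 * k + a + 2) * jQ a (k - 1) t := by
    intro t
    rcases k with _ | k
    · have h : a + 1 ≠ 0 := by positivity
      simp only [jQ_one, jQ_zero, Nat.cast_zero, zero_add]
      field_simp
      ring
    · have := jQ_rec a t ha k
      simp only [Nat.add_sub_cancel]
      push_cast
      linear_combination this
  have r2 : ((k : ℝ) + a + 1) ^ 2 * (2 * k + a) * jh a (k + 1) =
      - ((2 * k + a + 1) * (2 * k + a + 2) * (2 * k + a) * X) := by
    have : ∀ t, ((k : ℝ) + a + 1) ^ 2 * (2 * k + a) * (t ^ a * (jQ a (k + 1) t * jQ a (k + 1) t)) =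
      ((((k : ℝ) + a + 1) ^ 2 * (2 * k + a) + k ^ 2 * (2 * k + a + 2)) *
        (t ^ a * (jQ a k t * jQ a (k + 1) t)) -
      (2 * k + a + 1) * (2 * k + a + 2) * (2 * k + a) * (t ^ a * (t * (jQ a k t * jQ a (k + 1) t)))) -
      k ^ 2 * (2 * k + a + 2) * (t ^ a * (jQ a (k - 1) t * jQ a (k + 1) t)) := by
      intro t
      linear_combination (t ^ a * jQ a (k + 1) t) * rec0 t
    rw [jh, ← intervalIntegral.integral_const_mul]
    simp_rw [this]
    rw [intervalIntegral.integral_sub (((ii _ _).const_mul _).sub (ix.const_mul _)) ((ii _ _).const_mul _),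
      intervalIntegral.integral_sub ((ii _ _).const_mul _) (ix.const_mul _),
      intervalIntegral.integral_const_mul, intervalIntegral.integral_const_mul,
      intervalIntegral.integral_const_mul, j_orth a ha k (k + 1) (by omega),
      j_orth a ha (k - 1) (k + 1) (by omega)]
    ring
  have n1 : 2 * (k : ℝ) + a ≠ 0 := by positivity
  have n2 : 2 * (k : ℝ) + a + 4 ≠ 0 := by positivity
  apply mul_left_cancel₀ (mul_ne_zero n1 n2)
  have n3 : 2 * (k : ℝ) + a + 2 ≠ 0 := by positivity
  linear_combination (2 * (k : ℝ) + a + 4) * (2 * k + a + 3) * r2 - (2 * (k : ℝ) + a) * (2 * k + a + 1) * r1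

noncomputable def jr (a : ℝ) (n : ℕ) : ℝ := ∏ i ∈ Finset.range n, (((i : ℝ) + 1) / (i + 1 + a))

lemma jh_eq (a : ℝ) (ha : 0 < a) (n : ℕ) : (2 * (n : ℝ) + a + 1) * jh a n = jr a n ^ 2 := by
  induction n with
  | zero =>
    have h : a + 1 ≠ 0 := by positivity
    simp only [jh, jQ_zero, jr, Nat.cast_zero, Finset.range_zero, Finset.prod_empty, mul_one]
    rw [integral_rpow (Or.inl (by linarith)), Real.zero_rpow h]
    field_simp
    simp
  | succ n ih =>
    have := jh_succ a ha n
    rw [jr, Finset.prod_range_succ, ← jr, mul_pow, ← ih]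
    have h : (n : ℝ) + 1 + a ≠ 0 := by positivity
    push_cast
    field_simp
    linear_combination this

lemma jr_tendsto (a : ℝ) (ha : 0 < a) :
    Tendsto (fun n : ℕ => jr a n * (n : ℝ) ^ a) atTop (nhds (Real.Gamma (a + 1))) := by
  have h := (Real.GammaSeq_tendsto_Gamma a).const_mul a
  rw [← Real.Gamma_add_one ha.ne'] at h
  refine h.congr fun n => ?_
  rw [Real.GammaSeq, Finset.prod_range_succ', jr, Finset.prod_div_distrib]
  have h1 : (∏ i ∈ Finset.range n, ((i : ℝ) + 1)) = (n.factorial : ℝ) := by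
    exact_mod_cast Finset.prod_range_add_one_eq_factorial n
  have h2 : (∏ i ∈ Finset.range n, (a + ((i + 1 : ℕ) : ℝ))) = ∏ i ∈ Finset.range n, ((i : ℝ) + 1 + a) := by
    apply Finset.prod_congr rfl
    intro i _
    push_cast; ring
  rw [h1, h2]
  have h3 : (∏ i ∈ Finset.range n, ((i : ℝ) + 1 + a)) ≠ 0 :=
    Finset.prod_ne_zero_iff.2 fun i _ => by positivity
  simp only [Nat.cast_zero, add_zero]
  field_simp


noncomputable def jw (a x : ℝ) : ℝ := Real.sin x ^ (a + 1 / 2) * Real.cos x ^ (1 / 2 : ℝ)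
noncomputable def jL (a x : ℝ) : ℝ :=
  (a + 1 / 2) * (Real.cos x / Real.sin x) - 1 / 2 * (Real.sin x / Real.cos x)
noncomputable def ju (a : ℝ) (n : ℕ) (x : ℝ) : ℝ := jw a x * jQ a n (Real.sin x ^ 2)
noncomputable def jv (a : ℝ) (n : ℕ) (x : ℝ) : ℝ :=
  jw a x * (jL a x * jQ a n (Real.sin x ^ 2) + 2 * Real.sin x * Real.cos x * jD a n (Real.sin x ^ 2))
noncomputable def jPhi (a : ℝ) (n : ℕ) (x : ℝ) : ℝ :=
  (2 * n + a + 1) ^ 2 + (1 / 4 - a ^ 2) * (1 / Real.sin x ^ 2) + 1 / 4 * (1 / Real.cos x ^ 2)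
noncomputable def jPhi' (a : ℝ) (x : ℝ) : ℝ :=
  (1 / 4 - a ^ 2) * (-2 * Real.cos x / Real.sin x ^ 3) + 1 / 4 * (2 * Real.sin x / Real.cos x ^ 3)
noncomputable def jE (a : ℝ) (n : ℕ) (x : ℝ) : ℝ := jPhi a n x * ju a n x ^ 2 + jv a n x ^ 2

lemma sin_pos' {x : ℝ} (hx : x ∈ Ioo 0 (Real.pi / 2)) : 0 < Real.sin x :=
  Real.sin_pos_of_pos_of_lt_pi hx.1 (by linarith [hx.2, Real.pi_pos])
lemma cos_pos' {x : ℝ} (hx : x ∈ Ioo 0 (Real.pi / 2)) : 0 < Real.cos x :=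
  Real.cos_pos_of_mem_Ioo ⟨by linarith [hx.1, Real.pi_pos], hx.2⟩

lemma jw_deriv (a x : ℝ) (hx : x ∈ Ioo 0 (Real.pi / 2)) : HasDerivAt (jw a) (jw a x * jL a x) x := by
  have hs := sin_pos' hx
  have hc := cos_pos' hx
  have h := ((Real.hasDerivAt_sin x).rpow_const (p := a + 1 / 2) (Or.inl hs.ne')).mul
    ((Real.hasDerivAt_cos x).rpow_const (p := (1 / 2 : ℝ)) (Or.inl hc.ne'))
  refine h.congr_deriv ?_
  rw [Real.rpow_sub_one hs.ne', Real.rpow_sub_one hc.ne', jw, jL]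
  field_simp
  ring

lemma jL_deriv (a x : ℝ) (hx : x ∈ Ioo 0 (Real.pi / 2)) :
    HasDerivAt (jL a) (-(a + 1 / 2) / Real.sin x ^ 2 - 1 / 2 / Real.cos x ^ 2) x := by
  have hs := sin_pos' hx
  have hc := cos_pos' hx
  have h := (((Real.hasDerivAt_cos x).div (Real.hasDerivAt_sin x) hs.ne').const_mul (a + 1 / 2)).sub
    (((Real.hasDerivAt_sin x).div (Real.hasDerivAt_cos x) hc.ne').const_mul (1 / 2))
  refine h.congr_deriv ?_
  have e := Real.sin_sq_add_cos_sq x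
  have e1 : -Real.sin x * Real.sin x - Real.cos x * Real.cos x = -1 := by linear_combination -e
  have e2 : Real.cos x * Real.cos x - Real.sin x * -Real.sin x = 1 := by linear_combination e
  rw [e1, e2]
  ring

lemma jPhi_deriv (a : ℝ) (n : ℕ) (x : ℝ) (hx : x ∈ Ioo 0 (Real.pi / 2)) :
    HasDerivAt (jPhi a n) (jPhi' a x) x := by
  have hs := sin_pos' hx
  have hc := cos_pos' hx
  have h1 := (hasDerivAt_const x (1 : ℝ)).div ((Real.hasDerivAt_sin x).pow 2) (pow_ne_zero 2 hs.ne')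
  have h2 := (hasDerivAt_const x (1 : ℝ)).div ((Real.hasDerivAt_cos x).pow 2) (pow_ne_zero 2 hc.ne')
  have h := ((h1.const_mul (1 / 4 - a ^ 2)).const_add ((2 * n + a + 1) ^ 2)).add (h2.const_mul (1 / 4))
  refine h.congr_deriv ?_
  rw [jPhi']
  simp only [Pi.pow_apply]
  field_simp
  norm_num
  ring

lemma ju_deriv (a : ℝ) (n : ℕ) (x : ℝ) (hx : x ∈ Ioo 0 (Real.pi / 2)) :
    HasDerivAt (ju a n) (jv a n x) x := by
  have h := (jw_deriv a x hx).mul ((jQ_hasDerivAt a (Real.sin x ^ 2) n).comp x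
    ((Real.hasDerivAt_sin x).pow 2))
  refine h.congr_deriv ?_
  simp only [jv, Function.comp, Pi.pow_apply]
  norm_num
  ring

lemma jv_deriv (a : ℝ) (ha : 0 < a) (n : ℕ) (x : ℝ) (hx : x ∈ Ioo 0 (Real.pi / 2)) :
    HasDerivAt (jv a n) (- jPhi a n x * ju a n x) x := by
  have hs := sin_pos' hx
  have hc := cos_pos' hx
  have e := Real.sin_sq_add_cos_sq x
  have hQ := (jQ_hasDerivAt a (Real.sin x ^ 2) n).comp x ((Real.hasDerivAt_sin x).pow 2)
  have hD := (jD_hasDerivAt a (Real.sin x ^ 2) n).comp x ((Real.hasDerivAt_sin x).pow 2)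
  have h := (jw_deriv a x hx).mul (((jL_deriv a x hx).mul hQ).add
    ((((Real.hasDerivAt_sin x).const_mul 2).mul (Real.hasDerivAt_cos x)).mul hD))
  refine h.congr_deriv ?_
  have ho := jODE a ha (Real.sin x ^ 2) ⟨by positivity, by nlinarith [sq_pos_of_pos hc]⟩ n
  have e' : 1 - Real.sin x ^ 2 = Real.cos x ^ 2 := by linarith
  rw [e'] at ho
  have hL : Real.sin x * Real.cos x * jL a x = (a + 1 / 2) * Real.cos x ^ 2 - 1 / 2 * Real.sin x ^ 2 := by
    rw [jL]; field_simp
  have hL2 : jL a x ^ 2 + (-(a + 1 / 2) / Real.sin x ^ 2 - 1 / 2 / Real.cos x ^ 2) =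
      4 * n * (n + a + 1) - jPhi a n x := by
    have f1 : Real.cos x ^ 2 / Real.sin x ^ 2 = 1 / Real.sin x ^ 2 - 1 := by
      rw [← e']; field_simp
    have f2 : Real.sin x ^ 2 / Real.cos x ^ 2 = 1 / Real.cos x ^ 2 - 1 := by
      rw [eq_sub_of_add_eq e]; field_simp
    have f3 : (Real.cos x / Real.sin x) * (Real.sin x / Real.cos x) = 1 := by
      field_simp
    rw [← div_pow] at f1 f2
    rw [jL, jPhi]
    linear_combination (a + 1 / 2) ^ 2 * f1 + 1 / 4 * f2 - (a + 1 / 2) * f3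
  simp only [ju, Function.comp, Pi.pow_apply, Pi.mul_apply, Pi.add_apply]
  norm_num at hL2 ⊢
  linear_combination jw a x * jQ a n (Real.sin x ^ 2) * hL2 + 4 * jw a x * ho +
    4 * jw a x * jD a n (Real.sin x ^ 2) * hL + 4 * (a + 1) * jw a x * jD a n (Real.sin x ^ 2) * e

lemma jE_deriv (a : ℝ) (ha : 0 < a) (n : ℕ) (x : ℝ) (hx : x ∈ Ioo 0 (Real.pi / 2)) :
    HasDerivAt (jE a n) (jPhi' a x * ju a n x ^ 2) x := by
  have h := ((jPhi_deriv a n x hx).mul ((ju_deriv a n x hx).pow 2)).add ((jv_deriv a ha n x hx).pow 2)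
  refine h.congr_deriv ?_
  simp
  ring


lemma jPhi_lower (a : ℝ) (ha : 0 < a) (n : ℕ) (x : ℝ) (hx : x ∈ Ioo 0 (Real.pi / 2))
    (hn : 4 * a + 5 ≤ 2 * n * Real.sin x) : 15 / 16 * (2 * (n : ℝ) + a + 1) ^ 2 ≤ jPhi a n x := by
  have hs := sin_pos' hx
  have hc := cos_pos' hx
  have h1 : a / Real.sin x ≤ (2 * (n : ℝ) + a + 1) / 4 := by
    rw [div_le_iff₀ hs]
    nlinarith
  have h2 : 0 ≤ a / Real.sin x := by positivity
  have h3 : (a / Real.sin x) ^ 2 ≤ ((2 * (n : ℝ) + a + 1) / 4) ^ 2 := pow_le_pow_left₀ h2 h1 2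
  have h4 : (a / Real.sin x) ^ 2 = a ^ 2 * (1 / Real.sin x ^ 2) := by rw [div_pow]; ring
  have h5 : 0 < 1 / Real.sin x ^ 2 := by positivity
  have h6 : 0 < 1 / Real.cos x ^ 2 := by positivity
  rw [jPhi]
  nlinarith

lemma jE_lower (a : ℝ) (ha : 0 < a) (n : ℕ) (x : ℝ) (hx : x ∈ Ioo 0 (Real.pi / 2))
    (hn : 4 * a + 5 ≤ 2 * n * Real.sin x) :
    15 / 16 * (2 * (n : ℝ) + a + 1) ^ 2 * ju a n x ^ 2 + jv a n x ^ 2 ≤ jE a n x := by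
  rw [jE]
  have := mul_le_mul_of_nonneg_right (jPhi_lower a ha n x hx hn) (sq_nonneg (ju a n x))
  linarith

lemma jE_near (a : ℝ) (ha : 0 < a) (n : ℕ) (x : ℝ) (hx0 : 0 < x) (hx1 : x ≤ Real.pi / 4)
    (hn : 4 * a + 5 ≤ 2 * n * Real.sin x) :
    jE a n x ≤ Real.exp (4 / 375) * jE a n (Real.pi / 4) := by
  have hpi := Real.pi_pos
  set M : ℝ := 2 * (n : ℝ) + a + 1 with hM
  have hM0 : 0 < M := by positivity
  have hmem : ∀ y ∈ Icc x (Real.pi / 4), y ∈ Ioo 0 (Real.pi / 2) := fun y hy =>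
    ⟨by linarith [hy.1], by linarith [hy.2]⟩
  have hny : ∀ y ∈ Icc x (Real.pi / 4), 4 * a + 5 ≤ 2 * n * Real.sin y := by
    intro y hy
    have : Real.sin x ≤ Real.sin y :=
      Real.sin_le_sin_of_le_of_le_pi_div_two (by linarith) (by linarith [hy.2]) hy.1
    nlinarith [Nat.cast_nonneg (α := ℝ) n]
  set g : ℝ → ℝ := fun y => -(4 / (15 * M ^ 2)) * (1 / Real.sin y ^ 2) with hg
  have hgd : ∀ y ∈ Icc x (Real.pi / 4),
      HasDerivAt g (8 / (15 * M ^ 2) * (Real.cos y / Real.sin y ^ 3)) y := by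
    intro y hy
    have hs := sin_pos' (hmem y hy)
    have h1 := ((hasDerivAt_const y (1 : ℝ)).div ((Real.hasDerivAt_sin y).pow 2)
      (pow_ne_zero 2 hs.ne')).const_mul (-(4 / (15 * M ^ 2)))
    refine h1.congr_deriv ?_
    simp only [Pi.pow_apply]
    field_simp
    norm_num
    ring
  have hFd : ∀ y ∈ Icc x (Real.pi / 4), HasDerivAt (fun y => jE a n y * Real.exp (g y))
      (jPhi' a y * ju a n y ^ 2 * Real.exp (g y) + jE a n y * (Real.exp (g y) *
        (8 / (15 * M ^ 2) * (Real.cos y / Real.sin y ^ 3)))) y := fun y hy =>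
    (jE_deriv a ha n y (hmem y hy)).mul (hgd y hy).exp
  have hmono : MonotoneOn (fun y => jE a n y * Real.exp (g y)) (Icc x (Real.pi / 4)) := by
    apply monotoneOn_of_deriv_nonneg (convex_Icc _ _)
    · exact fun y hy => (hFd y hy).continuousAt.continuousWithinAt
    · exact fun y hy => (hFd y (interior_subset hy)).differentiableAt.differentiableWithinAt
    · intro y hy
      have hy := interior_subset hy
      rw [(hFd y hy).deriv]
      have hs := sin_pos' (hmem y hy)
      have hc := cos_pos' (hmem y hy)
      have hl := jE_lower a ha n y (hmem y hy) (hny y hy)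
      have hp : 0 ≤ Real.cos y / Real.sin y ^ 3 := by positivity
      have hp2 : 0 ≤ Real.sin y / Real.cos y ^ 3 := by positivity
      have h1 : -(1 / 2 * (Real.cos y / Real.sin y ^ 3)) ≤ jPhi' a y := by
        rw [jPhi']
        have : (1 / 4 - a ^ 2) * (-2 * Real.cos y / Real.sin y ^ 3) + 1 / 4 * (2 * Real.sin y / Real.cos y ^ 3)
          = -(1 / 2 * (Real.cos y / Real.sin y ^ 3)) + 2 * a ^ 2 * (Real.cos y / Real.sin y ^ 3) +
            1 / 2 * (Real.sin y / Real.cos y ^ 3) := by ring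
        rw [this]
        have := mul_nonneg (sq_nonneg a) hp
        linarith
      have h2 := mul_le_mul_of_nonneg_right h1 (sq_nonneg (ju a n y))
      have h3 : 1 / 2 * ju a n y ^ 2 ≤ 8 / (15 * M ^ 2) * jE a n y := by
        rw [div_mul_eq_mul_div 8, le_div_iff₀ (by positivity)]
        nlinarith [sq_nonneg (jv a n y)]
      have h4 := mul_le_mul_of_nonneg_right h3 hp
      have h5 : 0 ≤ jPhi' a y * ju a n y ^ 2 + jE a n y * (8 / (15 * M ^ 2) * (Real.cos y / Real.sin y ^ 3)) := by
        linarith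
      have h6 := mul_nonneg h5 (Real.exp_pos (g y)).le
      linarith
  have h := hmono ⟨le_refl x, hx1⟩ ⟨hx1, le_refl _⟩ hx1
  simp only at h
  have hxm : x ∈ Icc x (Real.pi / 4) := ⟨le_refl x, hx1⟩
  have hpm : Real.pi / 4 ∈ Icc x (Real.pi / 4) := ⟨hx1, le_refl _⟩
  have hE4 : 0 ≤ jE a n (Real.pi / 4) := le_trans (by positivity) (jE_lower a ha n _ (hmem _ hpm) (hny _ hpm))
  have hEx : 0 ≤ jE a n x := le_trans (by positivity) (jE_lower a ha n _ (hmem _ hxm) (hny _ hxm))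
  have hs := sin_pos' (hmem x hxm)
  have hg1 : g (Real.pi / 4) ≤ 0 := by
    simp only [hg]
    have : 0 ≤ (4 / (15 * M ^ 2)) * (1 / Real.sin (Real.pi / 4) ^ 2) := by positivity
    linarith
  have hg2 : -(4 / 375) ≤ g x := by
    simp only [hg]
    have h5 : 5 ≤ M * Real.sin x := by nlinarith
    have : (4 / (15 * M ^ 2)) * (1 / Real.sin x ^ 2) ≤ 4 / 375 := by
      have e : (4 / (15 * M ^ 2)) * (1 / Real.sin x ^ 2) = 4 / (15 * (M * Real.sin x) ^ 2) := by
        field_simp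
      rw [e, div_le_div_iff₀ (by positivity) (by norm_num)]
      nlinarith
    linarith
  have k1 : jE a n x * Real.exp (-(4 / 375)) ≤ jE a n (Real.pi / 4) := by
    calc jE a n x * Real.exp (-(4 / 375)) ≤ jE a n x * Real.exp (g x) :=
          mul_le_mul_of_nonneg_left (Real.exp_le_exp.2 hg2) hEx
      _ ≤ jE a n (Real.pi / 4) * Real.exp (g (Real.pi / 4)) := h
      _ ≤ jE a n (Real.pi / 4) * 1 :=
          mul_le_mul_of_nonneg_left (Real.exp_le_one_iff.2 hg1) hE4
      _ = _ := mul_one _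
  rw [Real.exp_neg, ← div_eq_mul_inv, div_le_iff₀ (Real.exp_pos _)] at k1
  linarith

lemma gron (E E' : ℝ → ℝ) (κ x0 x1 : ℝ) (hd : ∀ x ∈ Icc x0 x1, HasDerivAt E (E' x) x)
    (hb : ∀ x ∈ Icc x0 x1, |E' x| ≤ κ * E x) (hp : ∀ x ∈ Icc x0 x1, 0 ≤ E x) (hκ : 0 ≤ κ)
    (hlen : x1 - x0 ≤ 2)
    (x y : ℝ) (hx : x ∈ Icc x0 x1) (hy : y ∈ Icc x0 x1) : E x ≤ E y * Real.exp (2 * κ) := by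
  have gd : ∀ c : ℝ, ∀ x ∈ Icc x0 x1, HasDerivAt (fun x => E x * Real.exp (c * x))
      (E' x * Real.exp (c * x) + E x * (Real.exp (c * x) * (c * 1))) x := fun c x hx =>
    (hd x hx).mul (((hasDerivAt_id x).const_mul c).exp)
  rcases le_total x y with hxy | hxy
  · have hm : MonotoneOn (fun x => E x * Real.exp (κ * x)) (Icc x0 x1) := by
      apply monotoneOn_of_deriv_nonneg (convex_Icc _ _)
      · exact fun y hy => (gd κ y hy).continuousAt.continuousWithinAt
      · exact fun y hy => (gd κ y (interior_subset hy)).differentiableAt.differentiableWithinAt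
      · intro y hy
        have hy := interior_subset hy
        rw [(gd κ y hy).deriv]
        have := (abs_le.1 (hb y hy)).1
        have : 0 ≤ (E' y + κ * E y) * Real.exp (κ * y) := mul_nonneg (by linarith) (Real.exp_pos _).le
        linarith
    have h := hm hx hy hxy
    simp only at h
    have : E x ≤ E y * Real.exp (κ * (y - x)) := by
      rw [mul_sub, Real.exp_sub, ← mul_div_assoc, le_div_iff₀ (Real.exp_pos _)]
      exact h
    refine this.trans (mul_le_mul_of_nonneg_left (Real.exp_le_exp.2 ?_) (hp y hy))
    nlinarith [hx.1, hy.2]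
  · have hm : AntitoneOn (fun x => E x * Real.exp ((-κ) * x)) (Icc x0 x1) := by
      apply antitoneOn_of_deriv_nonpos (convex_Icc _ _)
      · exact fun y hy => (gd _ y hy).continuousAt.continuousWithinAt
      · exact fun y hy => (gd _ y (interior_subset hy)).differentiableAt.differentiableWithinAt
      · intro y hy
        have hy := interior_subset hy
        rw [(gd _ y hy).deriv]
        have := (abs_le.1 (hb y hy)).2
        have : 0 ≤ (-E' y + κ * E y) * Real.exp (-κ * y) := mul_nonneg (by linarith) (Real.exp_pos _).le
        linarith
    have h := hm hy hx hxy
    simp only at h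
    have : E x ≤ E y * Real.exp (κ * (x - y)) := by
      have e : κ * (x - y) = (-κ) * y - (-κ) * x := by ring
      rw [e, Real.exp_sub, ← mul_div_assoc, le_div_iff₀ (Real.exp_pos _)]
      exact h
    refine this.trans (mul_le_mul_of_nonneg_left (Real.exp_le_exp.2 ?_) (hp y hy))
    nlinarith [hx.2, hy.1]

noncomputable def jH (a : ℝ) (n : ℕ) (x : ℝ) : ℝ :=
  1 / 2 * ∫ t in (0 : ℝ)..(Real.sin x ^ 2), t ^ a * (jQ a n t * jQ a n t)

lemma jH_deriv (a : ℝ) (ha : 0 < a) (n : ℕ) (x : ℝ) (hx : x ∈ Ioo 0 (Real.pi / 2)) :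
    HasDerivAt (jH a n) (ju a n x ^ 2) x := by
  have hs := sin_pos' hx
  have hc := cos_pos' hx
  have hcont : Continuous (fun t : ℝ => t ^ a * (jQ a n t * jQ a n t)) :=
    (tpow_cont a ha).mul ((jQ_cont a n).mul (jQ_cont a n))
  have h1 := (hcont.integral_hasStrictDerivAt 0 (Real.sin x ^ 2)).hasDerivAt
  have h2 := (h1.comp x ((Real.hasDerivAt_sin x).pow 2)).const_mul (1 / 2)
  refine h2.congr_deriv ?_
  rw [ju, jw, mul_pow, mul_pow, ← Real.rpow_natCast (Real.sin x ^ (a + 1 / 2)),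
    ← Real.rpow_natCast (Real.cos x ^ (1 / 2 : ℝ)), ← Real.rpow_mul hs.le, ← Real.rpow_mul hc.le,
    ← Real.rpow_natCast (Real.sin x) 2, ← Real.rpow_mul hs.le]
  have e1 : (a + 1 / 2) * ((2 : ℕ) : ℝ) = ((2 : ℕ) : ℝ) * a + 1 := by push_cast; ring
  have e2 : (1 / 2 : ℝ) * ((2 : ℕ) : ℝ) = 1 := by norm_num
  rw [e1, e2, Real.rpow_add hs, Real.rpow_one, Real.rpow_one]
  norm_num
  ring

lemma jH_diff (a : ℝ) (ha : 0 < a) (n : ℕ) (x y : ℝ) : jH a n y - jH a n x ≤ 1 / 2 * jh a n := by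
  have hii : ∀ p q : ℝ, IntervalIntegrable (fun t : ℝ => t ^ a * (jQ a n t * jQ a n t)) volume p q :=
    fun p q => j_int a ha _ ((jQ_cont a n).mul (jQ_cont a n)) p q
  have hnn : ∀ t : ℝ, 0 ≤ t → 0 ≤ t ^ a * (jQ a n t * jQ a n t) := fun t ht =>
    mul_nonneg (Real.rpow_nonneg ht _) (mul_self_nonneg _)
  have h1 : 0 ≤ jH a n x := by
    rw [jH]
    have := intervalIntegral.integral_nonneg (μ := volume) (sq_nonneg (Real.sin x)) (fun t ht => hnn t ht.1)
    linarith
  have h2 : jH a n y ≤ 1 / 2 * jh a n := by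
    rw [jH, jh, ← intervalIntegral.integral_add_adjacent_intervals (hii 0 (Real.sin y ^ 2)) (hii (Real.sin y ^ 2) 1)]
    have := intervalIntegral.integral_nonneg (μ := volume) (Real.sin_sq_le_one y)
      (fun t ht => hnn t ((sq_nonneg (Real.sin y)).trans ht.1))
    linarith
  linarith


lemma j_const (a : ℝ) : ∃ B > 0, ∃ σ > 0, ∀ x ∈ Icc (Real.pi / 20) (9 * Real.pi / 20),
    σ ≤ Real.sin x ∧ |jPhi' a x| ≤ B ∧ ∀ n : ℕ, jPhi a n x ≤ (2 * (n : ℝ) + a + 1) ^ 2 + B := by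
  have hpi := Real.pi_pos
  set σ := Real.sin (Real.pi / 20) with hσ
  have hσ0 : 0 < σ := Real.sin_pos_of_pos_of_lt_pi (by linarith) (by linarith)
  refine ⟨2 * (1 / 4 + a ^ 2) / σ ^ 3 + 1 / 2 / σ ^ 3 + 1 / 2 / σ ^ 2, by positivity, σ, hσ0, ?_⟩
  intro x hx
  have hs : σ ≤ Real.sin x :=
    Real.sin_le_sin_of_le_of_le_pi_div_two (by linarith) (by linarith [hx.2]) hx.1
  have hc : σ ≤ Real.cos x := by
    rw [hσ, ← Real.cos_pi_div_two_sub]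
    exact Real.cos_le_cos_of_nonneg_of_le_pi (by linarith [hx.1]) (by linarith) (by linarith [hx.2])
  have hs0 : 0 < Real.sin x := hσ0.trans_le hs
  have hc0 : 0 < Real.cos x := hσ0.trans_le hc
  have s1 := Real.sin_le_one x
  have c1 := Real.cos_le_one x
  have p1 : Real.cos x / Real.sin x ^ 3 ≤ 1 / σ ^ 3 := by gcongr
  have p2 : Real.sin x / Real.cos x ^ 3 ≤ 1 / σ ^ 3 := by gcongr
  have p3 : 1 / Real.sin x ^ 2 ≤ 1 / σ ^ 2 := by gcongr
  have p4 : 1 / Real.cos x ^ 2 ≤ 1 / σ ^ 2 := by gcongr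
  have q1 : 0 ≤ Real.cos x / Real.sin x ^ 3 := by positivity
  have q2 : 0 ≤ Real.sin x / Real.cos x ^ 3 := by positivity
  have q3 : 0 ≤ 1 / Real.sin x ^ 2 := by positivity
  have q4 : 0 ≤ 1 / σ ^ 3 := by positivity
  have q5 : 0 ≤ 1 / σ ^ 2 := by positivity
  have e0 : 2 * (1 / 4 + a ^ 2) / σ ^ 3 + 1 / 2 / σ ^ 3 + 1 / 2 / σ ^ 2 =
    2 * (1 / 4 + a ^ 2) * (1 / σ ^ 3) + 1 / 2 * (1 / σ ^ 3) + 1 / 2 * (1 / σ ^ 2) := by ring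
  have ea := sq_nonneg a
  rw [e0]
  refine ⟨hs, ?_, ?_⟩
  · have e1 : jPhi' a x = -(2 * (1 / 4) * (Real.cos x / Real.sin x ^ 3)) +
      2 * (a ^ 2 * (Real.cos x / Real.sin x ^ 3)) + 1 / 2 * (Real.sin x / Real.cos x ^ 3) := by
      rw [jPhi']; ring
    have m1 := mul_le_mul_of_nonneg_left p1 ea
    have m2 := mul_nonneg ea q1
    rw [e1, abs_le]
    constructor <;> nlinarith
  · intro n
    rw [jPhi]
    have m3 := mul_nonneg ea q3
    have m4 := mul_nonneg ea q4
    nlinarith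

lemma j_mid (a : ℝ) (ha : 0 < a) : ∃ B > 0, ∃ σ > 0, ∀ n : ℕ, 4 * a + 5 ≤ 2 * n * σ →
    jE a n (Real.pi / 4) * (2 * Real.pi / 5 * Real.exp (-(2 * (B / (2 * (n : ℝ) + a + 1) ^ 2))) -
      2 * Real.exp (2 * (B / (2 * (n : ℝ) + a + 1) ^ 2)) / (2 * (n : ℝ) + a + 1)) ≤
    ((2 * (n : ℝ) + a + 1) ^ 2 + B) * (jr a n ^ 2 / (2 * (n : ℝ) + a + 1)) := by
  have hpi := Real.pi_pos
  obtain ⟨B, hB, σ, hσ, h⟩ := j_const a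
  refine ⟨2 * B, by positivity, σ, hσ, ?_⟩
  intro n hn
  set M : ℝ := 2 * (n : ℝ) + a + 1 with hM
  have hM0 : 0 < M := by positivity
  set κ := 2 * B / M ^ 2 with hκ
  have hκ0 : 0 ≤ κ := by positivity
  set I := Icc (Real.pi / 20) (9 * Real.pi / 20) with hI
  have hmem : ∀ x ∈ I, x ∈ Ioo 0 (Real.pi / 2) := fun x hx =>
    ⟨by linarith [hx.1], by linarith [hx.2]⟩
  have hnx : ∀ x ∈ I, 4 * a + 5 ≤ 2 * n * Real.sin x := fun x hx => hn.trans <| by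
    have := (h x hx).1
    gcongr
  have hlow : ∀ x ∈ I, 15 / 16 * M ^ 2 * ju a n x ^ 2 + jv a n x ^ 2 ≤ jE a n x := fun x hx =>
    jE_lower a ha n x (hmem x hx) (hnx x hx)
  have hE0 : ∀ x ∈ I, 0 ≤ jE a n x := fun x hx => le_trans (by positivity) (hlow x hx)
  have h4 : Real.pi / 4 ∈ I := ⟨by linarith, by linarith⟩
  have hG := gron (jE a n) (fun x => jPhi' a x * ju a n x ^ 2) κ (Real.pi / 20) (9 * Real.pi / 20)
    (fun x hx => jE_deriv a ha n x (hmem x hx)) (by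
      intro x hx
      rw [abs_mul, abs_of_nonneg (sq_nonneg (ju a n x)), hκ, div_mul_eq_mul_div, le_div_iff₀ (by positivity)]
      have h1 := mul_le_mul_of_nonneg_right (h x hx).2.1 (sq_nonneg (ju a n x))
      have h2 : M ^ 2 * ju a n x ^ 2 ≤ 2 * jE a n x := by
        have := hlow x hx
        nlinarith [sq_nonneg (jv a n x), sq_nonneg (M * ju a n x)]
      calc |jPhi' a x| * ju a n x ^ 2 * M ^ 2 ≤ B * ju a n x ^ 2 * M ^ 2 := by gcongr
        _ = B * (M ^ 2 * ju a n x ^ 2) := by ring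
        _ ≤ B * (2 * jE a n x) := by gcongr
        _ = _ := by ring) hE0 hκ0 (by linarith [Real.pi_lt_d2])
  set m := jE a n (Real.pi / 4) * Real.exp (-(2 * κ)) with hm
  have hmE : ∀ x ∈ I, m ≤ jE a n x := by
    intro x hx
    rw [hm, Real.exp_neg, ← div_eq_mul_inv, div_le_iff₀ (Real.exp_pos _)]
    exact hG _ _ h4 hx
  have huv : ∀ x ∈ I, |ju a n x * jv a n x| ≤ jE a n (Real.pi / 4) * Real.exp (2 * κ) / M := by
    intro x hx
    rw [le_div_iff₀ hM0]
    refine le_trans ?_ (hG _ _ hx h4)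
    refine le_trans ?_ (hlow x hx)
    rw [← abs_of_pos hM0, ← abs_mul, abs_of_pos hM0, abs_le]
    constructor <;>
    nlinarith [sq_nonneg (M * ju a n x / 2 + jv a n x), sq_nonneg (M * ju a n x / 2 - jv a n x), sq_nonneg (M * ju a n x)]
  have hZd : ∀ x ∈ I, HasDerivAt (fun x => ju a n x * jv a n x + 2 * (M ^ 2 + B) * jH a n x - m * x)
      (jv a n x * jv a n x + ju a n x * (- jPhi a n x * ju a n x) + 2 * (M ^ 2 + B) * ju a n x ^ 2 - m * 1) x :=
    fun x hx => (((ju_deriv a n x (hmem x hx)).mul (jv_deriv a ha n x (hmem x hx))).add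
      ((jH_deriv a ha n x (hmem x hx)).const_mul _)).sub ((hasDerivAt_id x).const_mul m)
  have hmono : MonotoneOn (fun x => ju a n x * jv a n x + 2 * (M ^ 2 + B) * jH a n x - m * x) I := by
    apply monotoneOn_of_deriv_nonneg (convex_Icc _ _)
    · exact fun y hy => (hZd y hy).continuousAt.continuousWithinAt
    · exact fun y hy => (hZd y (interior_subset hy)).differentiableAt.differentiableWithinAt
    · intro y hy
      have hy := interior_subset hy
      rw [(hZd y hy).deriv]
      have h1 := hmE y hy
      have h2 := mul_le_mul_of_nonneg_right ((h y hy).2.2 n) (sq_nonneg (ju a n y))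
      rw [jE] at h1
      nlinarith
  have x0 : Real.pi / 20 ∈ I := ⟨le_refl _, by linarith⟩
  have x1 : 9 * Real.pi / 20 ∈ I := ⟨by linarith, le_refl _⟩
  have hZ := hmono x0 x1 (by linarith)
  simp only at hZ
  have b0 := (abs_le.1 (huv _ x0)).1
  have b1 := (abs_le.1 (huv _ x1)).2
  have hHd := jH_diff a ha n (Real.pi / 20) (9 * Real.pi / 20)
  have hh : jh a n = jr a n ^ 2 / M := by
    rw [← jh_eq a ha n, ← hM]; field_simp
  rw [hh] at hHd
  have hHd2 := mul_le_mul_of_nonneg_left hHd (by positivity : 0 ≤ 2 * (M ^ 2 + B))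
  have hr : 0 ≤ B * (jr a n ^ 2 / M) := by positivity
  have e1 : jE a n (Real.pi / 4) * (2 * Real.pi / 5 * Real.exp (-(2 * κ)) - 2 * Real.exp (2 * κ) / M) =
    m * (2 * Real.pi / 5) - 2 * (jE a n (Real.pi / 4) * Real.exp (2 * κ) / M) := by
    rw [hm]; ring
  rw [e1]
  linarith

lemma j_bound (a : ℝ) (ha : 0 < a) : ∀ᶠ n : ℕ in atTop, ∀ x : ℝ, 0 < x → x ≤ Real.pi / 4 →
    4 * a + 5 ≤ 2 * n * Real.sin x →
    ju a n x ^ 2 * ((n : ℝ) * ((n : ℝ) ^ a) ^ 2) ≤ Real.sqrt 2 * Real.Gamma (a + 1) ^ 2 / Real.pi := by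
  have hpi := Real.pi_pos
  obtain ⟨B, hB, σ, hσ, h⟩ := j_mid a ha
  have hΓ : 0 < Real.Gamma (a + 1) := Real.Gamma_pos_of_pos (by linarith)
  have hnt : Tendsto (fun n : ℕ => (n : ℝ)) atTop atTop := tendsto_natCast_atTop_atTop
  have hMt : Tendsto (fun n : ℕ => 2 * (n : ℝ) + a + 1) atTop atTop :=
    tendsto_atTop_add_const_right _ _ (tendsto_atTop_add_const_right _ _ (hnt.const_mul_atTop two_pos))
  have hM2 : Tendsto (fun n : ℕ => (2 * (n : ℝ) + a + 1) ^ 2) atTop atTop :=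
    (tendsto_pow_atTop two_ne_zero).comp hMt
  have hk : Tendsto (fun n : ℕ => 2 * (B / (2 * (n : ℝ) + a + 1) ^ 2)) atTop (nhds 0) := by
    simpa using (hM2.const_div_atTop B).const_mul 2
  have hg : Tendsto (fun n : ℕ => 2 * Real.pi / 5 * Real.exp (-(2 * (B / (2 * (n : ℝ) + a + 1) ^ 2))) -
      2 * Real.exp (2 * (B / (2 * (n : ℝ) + a + 1) ^ 2)) / (2 * (n : ℝ) + a + 1)) atTop
      (nhds (2 * Real.pi / 5)) := by
    have h1 : Tendsto (fun n : ℕ => Real.exp (-(2 * (B / (2 * (n : ℝ) + a + 1) ^ 2)))) atTop (nhds 1) := by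
      have := (Real.continuous_exp.tendsto (-0)).comp hk.neg
      simpa [Function.comp_def] using this
    have h2 : Tendsto (fun n : ℕ => Real.exp (2 * (B / (2 * (n : ℝ) + a + 1) ^ 2))) atTop (nhds 1) := by
      have := (Real.continuous_exp.tendsto 0).comp hk
      simpa [Function.comp_def] using this
    have := (h1.const_mul (2 * Real.pi / 5)).sub ((h2.const_mul 2).div_atTop hMt)
    simpa using this
  have hnM : Tendsto (fun n : ℕ => (n : ℝ) / (2 * (n : ℝ) + a + 1)) atTop (nhds (1 / 2)) := by
    have h1 : Tendsto (fun n : ℕ => 1 / 2 - ((a + 1) / 2) / (2 * (n : ℝ) + a + 1)) atTop (nhds (1 / 2 - 0)) :=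
      tendsto_const_nhds.sub (hMt.const_div_atTop _)
    rw [sub_zero] at h1
    refine h1.congr fun n => ?_
    have : 2 * (n : ℝ) + a + 1 ≠ 0 := by positivity
    field_simp
    ring
  have hX : Tendsto (fun n : ℕ => 16 / 15 * Real.exp (4 / 375) *
      ((1 + B / (2 * (n : ℝ) + a + 1) ^ 2) * ((n : ℝ) / (2 * (n : ℝ) + a + 1)) *
      (jr a n * (n : ℝ) ^ a) ^ 2 /
      (2 * Real.pi / 5 * Real.exp (-(2 * (B / (2 * (n : ℝ) + a + 1) ^ 2))) -
      2 * Real.exp (2 * (B / (2 * (n : ℝ) + a + 1) ^ 2)) / (2 * (n : ℝ) + a + 1)))) atTop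
      (nhds (16 / 15 * Real.exp (4 / 375) * ((1 + 0) * (1 / 2) * Real.Gamma (a + 1) ^ 2 / (2 * Real.pi / 5)))) := by
    refine Tendsto.const_mul _ (Tendsto.div ?_ hg (by positivity))
    exact ((tendsto_const_nhds.add (hM2.const_div_atTop B)).mul hnM).mul ((jr_tendsto a ha).pow 2)
  have hlim : 16 / 15 * Real.exp (4 / 375) * ((1 + 0) * (1 / 2) * Real.Gamma (a + 1) ^ 2 / (2 * Real.pi / 5)) <
      Real.sqrt 2 * Real.Gamma (a + 1) ^ 2 / Real.pi := by
    have e1 : Real.exp (4 / 375) ≤ 1.02 := by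
      have := Real.exp_bound_div_one_sub_of_interval (x := 4 / 375) (by norm_num) (by norm_num)
      exact this.trans (by norm_num)
    have e2 : 1.41 < Real.sqrt 2 := by
      rw [Real.lt_sqrt (by norm_num)]; norm_num
    have e3 : 16 / 15 * Real.exp (4 / 375) * ((1 + 0) * (1 / 2) * Real.Gamma (a + 1) ^ 2 / (2 * Real.pi / 5))
      = (4 / 3 * Real.exp (4 / 375)) * Real.Gamma (a + 1) ^ 2 / Real.pi := by
      field_simp
      norm_num
    rw [e3]
    gcongr
    linarith
  have hgpos : ∀ᶠ n : ℕ in atTop, 0 < 2 * Real.pi / 5 * Real.exp (-(2 * (B / (2 * (n : ℝ) + a + 1) ^ 2))) -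
      2 * Real.exp (2 * (B / (2 * (n : ℝ) + a + 1) ^ 2)) / (2 * (n : ℝ) + a + 1) :=
    hg.eventually (lt_mem_nhds (by positivity))
  have hσn : ∀ᶠ n : ℕ in atTop, 4 * a + 5 ≤ 2 * n * σ := by
    filter_upwards [hnt.eventually_ge_atTop ((4 * a + 5) / (2 * σ))] with n hn
    rw [div_le_iff₀ (by positivity)] at hn
    linarith
  filter_upwards [hX.eventually (gt_mem_nhds hlim), hgpos, hσn] with n h1 h2 h3 x hx0 hx1 hn
  refine le_trans ?_ h1.le
  have hmid := h n h3
  set g := 2 * Real.pi / 5 * Real.exp (-(2 * (B / (2 * (n : ℝ) + a + 1) ^ 2))) -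
      2 * Real.exp (2 * (B / (2 * (n : ℝ) + a + 1) ^ 2)) / (2 * (n : ℝ) + a + 1) with hgdef
  rw [← le_div_iff₀ h2] at hmid
  have hnear := jE_near a ha n x hx0 hx1 hn
  have hl := jE_lower a ha n x ⟨hx0, by linarith⟩ hn
  set M : ℝ := 2 * (n : ℝ) + a + 1 with hM
  have hM0 : 0 < M := by positivity
  have k1 : ju a n x ^ 2 ≤ 16 / 15 / M ^ 2 * (Real.exp (4 / 375) * ((M ^ 2 + B) * (jr a n ^ 2 / M) / g)) := by
    have : ju a n x ^ 2 ≤ 16 / 15 / M ^ 2 * jE a n x := by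
      rw [div_mul_eq_mul_div, le_div_iff₀ (by positivity)]
      nlinarith [sq_nonneg (jv a n x)]
    refine this.trans ?_
    gcongr
    exact hnear.trans (by gcongr)
  have k2 : 0 ≤ (n : ℝ) * ((n : ℝ) ^ a) ^ 2 := by positivity
  refine (mul_le_mul_of_nonneg_right k1 k2).trans (le_of_eq ?_)
  field_simp


lemma gamma_le_aux (m : ℕ) : ∀ a : ℝ, 0 ≤ a → a ≤ m + 1 → Real.Gamma (a + 1) ≤ (a + 1) ^ a := by
  induction m with
  | zero =>
    intro a h0 h1
    simp only [Nat.cast_zero, zero_add] at h1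
    have h := Real.convexOn_Gamma.2 (show (1:ℝ) ∈ Ioi 0 by norm_num)
      (show (2:ℝ) ∈ Ioi 0 by norm_num) (show 0 ≤ 1 - a by linarith) h0 (by ring)
    simp only [smul_eq_mul, Real.Gamma_one, Real.Gamma_two] at h
    have e : (1 - a) * 1 + a * 2 = a + 1 := by ring
    rw [e] at h
    refine h.trans ?_
    have := Real.one_le_rpow (x := a + 1) (z := a) (by linarith) h0
    linarith
  | succ m ih =>
    intro a h0 h1
    push_cast at h1
    rcases le_total a 1 with h | h
    · exact ih a h0 (by have : (0 : ℝ) ≤ m := Nat.cast_nonneg m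
                        linarith)
    · have h2 := ih (a - 1) (by linarith) (by linarith)
      rw [sub_add_cancel] at h2
      rw [Real.Gamma_add_one (by linarith)]
      calc a * Real.Gamma a ≤ a * a ^ (a - 1) := by gcongr
        _ = a ^ a := by
          rw [Real.rpow_sub_one (by linarith)]
          field_simp
        _ ≤ (a + 1) ^ a := Real.rpow_le_rpow h0 (by linarith) h0

lemma gamma_le (a : ℝ) (h0 : 0 ≤ a) : Real.Gamma (a + 1) ≤ (a + 1) ^ a :=
  gamma_le_aux ⌈a⌉₊ a h0 ((Nat.le_ceil a).trans (by linarith))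

noncomputable def kap (a : ℝ) : ℝ := (2:ℝ) ^ (2 * a + 2) * Real.Gamma (a + 1) ^ 2 /
                (Real.pi * (4 * a + 5) ^ (2 * a + 1))

lemma kap_nonneg (a : ℝ) (ha : 0 < a) : 0 ≤ kap a := by
  rw [kap]; have := Real.pi_pos; positivity

lemma kap_le_one (a : ℝ) (ha : 0 < a) : kap a ≤ 1 := by
  have hpi := Real.pi_gt_three
  rw [kap, div_le_one (by positivity)]
  have hg := gamma_le a ha.le
  have hg0 : 0 < Real.Gamma (a + 1) := Real.Gamma_pos_of_pos (by linarith)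
  have h1 : Real.Gamma (a + 1) ^ 2 ≤ (a + 1) ^ (2 * a) := by
    calc Real.Gamma (a + 1) ^ 2 ≤ ((a + 1) ^ a) ^ 2 := by gcongr
      _ = (a + 1) ^ (2 * a) := by
        rw [← Real.rpow_natCast, ← Real.rpow_mul (by linarith)]
        congr 1
        push_cast; ring
  calc (2:ℝ) ^ (2 * a + 2) * Real.Gamma (a + 1) ^ 2 ≤ 2 ^ (2 * a + 2) * (a + 1) ^ (2 * a) := by gcongr
    _ = 4 * (2 * (a + 1)) ^ (2 * a) := by
      rw [Real.rpow_add two_pos, Real.mul_rpow two_pos.le (by linarith)]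
      norm_num
      ring
    _ ≤ 4 * (4 * a + 5) ^ (2 * a) := by
      gcongr
      linarith
    _ ≤ (Real.pi * (4 * a + 5)) * (4 * a + 5) ^ (2 * a) := by
      gcongr
      nlinarith
    _ = _ := by
      rw [Real.rpow_add_one (by positivity)]; ring

lemma kap_eq (a : ℝ) (ha : 0 < a) (n : ℕ) (hn : 0 < n) :
    kap a * ((4 * a + 5) ^ 2 / 2 / (n : ℝ) ^ 2) ^ (a + 1 / 2) =
      2 * Real.Gamma (a + 1) ^ 2 / Real.pi * 2 ^ (a + 1 / 2) / (n * ((n : ℝ) ^ a) ^ 2) := by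
  have hn' : (0 : ℝ) < n := by exact_mod_cast hn
  have hpi := Real.pi_pos
  have hx : (0 : ℝ) < 4 * a + 5 := by positivity
  have e1 : ∀ y : ℝ, 0 < y → (y ^ 2) ^ (a + 1 / 2) = y ^ (2 * a + 1) := by
    intro y hy
    rw [← Real.rpow_natCast, ← Real.rpow_mul hy.le]
    congr 1
    push_cast; ring
  have e2 : (n : ℝ) * ((n : ℝ) ^ a) ^ 2 = (n : ℝ) ^ (2 * a + 1) := by
    rw [Real.rpow_add_one hn'.ne', ← Real.rpow_natCast, ← Real.rpow_mul hn'.le, mul_comm]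
    congr 2
    push_cast; ring
  have e3 : (2 : ℝ) ^ (2 * a + 2) = 2 * 2 ^ (a + 1 / 2) * 2 ^ (a + 1 / 2) := by
    rw [mul_assoc, ← Real.rpow_add two_pos, mul_comm (2:ℝ) (2 ^ _), ← Real.rpow_add_one two_ne_zero]
    congr 1
    ring
  rw [e2, Real.div_rpow (by positivity) (by positivity), Real.div_rpow (by positivity) (by positivity),
    e1 _ hx, e1 _ hn', kap, e3]
  have : (4 * a + 5) ^ (2 * a + 1) ≠ 0 := by positivity
  field_simp

lemma jQ_far (a : ℝ) (ha : 0 < a) : ∀ᶠ n : ℕ in atTop, ∀ l : ℝ,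
    (4 * a + 5) ^ 2 / 2 / (n : ℝ) ^ 2 ≤ l → l ≤ 1 →
    jQ a n (l / 2) ^ 2 ≤ kap a * ((4 * a + 5) ^ 2 / 2 / (n : ℝ) ^ 2) ^ (a + 1 / 2) * l ^ (-(a + 1 / 2)) := by
  have hpi := Real.pi_pos
  filter_upwards [j_bound a ha, eventually_gt_atTop 0] with n hb hn l hl0 hl1
  have hn' : (0 : ℝ) < n := by exact_mod_cast hn
  have hlpos : 0 < l := lt_of_lt_of_le (by positivity) hl0
  set s := Real.sqrt (l / 2) with hs
  have hs0 : 0 < s := Real.sqrt_pos.2 (by linarith)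
  have hs2 : s ^ 2 = l / 2 := Real.sq_sqrt (by linarith)
  have hs1 : s ≤ Real.sqrt 2 / 2 := by
    rw [hs, Real.sqrt_le_left (by positivity), div_pow, Real.sq_sqrt (by norm_num)]
    linarith
  have hsle1 : s ≤ 1 := by nlinarith
  set x := Real.arcsin s with hx
  have hsin : Real.sin x = s := Real.sin_arcsin (by linarith) hsle1
  have hx0 : 0 < x := Real.arcsin_pos.2 hs0
  have hx1 : x ≤ Real.pi / 4 := by
    rw [hx, Real.arcsin_le_iff_le_sin ⟨by linarith, hsle1⟩ ⟨by linarith, by linarith⟩,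
      Real.sin_pi_div_four]
    exact hs1
  have hcos : Real.sqrt 2 / 2 ≤ Real.cos x := by
    rw [← Real.cos_pi_div_four]
    exact Real.cos_le_cos_of_nonneg_of_le_pi hx0.le (by linarith) hx1
  have hns : 4 * a + 5 ≤ 2 * n * Real.sin x := by
    rw [hsin]
    rw [div_le_iff₀ (by positivity)] at hl0
    have : (4 * a + 5) ^ 2 ≤ (2 * n * s) ^ 2 := by
      rw [mul_pow, hs2]; nlinarith
    exact le_of_sq_le_sq this (by positivity)
  have h := hb x hx0 hx1 hns
  rw [kap_eq a ha n hn]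
  have hu : ju a n x ^ 2 = (l / 2) ^ (a + 1 / 2) * Real.cos x * jQ a n (l / 2) ^ 2 := by
    have hc0 : 0 < Real.cos x := lt_of_lt_of_le (by positivity) hcos
    rw [ju, jw, hsin, hs2, mul_pow, mul_pow, ← hs2, ← Real.rpow_natCast (s ^ (a + 1 / 2)),
      ← Real.rpow_natCast (Real.cos x ^ (1 / 2 : ℝ)), ← Real.rpow_mul hs0.le, ← Real.rpow_mul hc0.le,
      ← Real.rpow_natCast s 2, ← Real.rpow_mul hs0.le, mul_comm (a + 1 / 2)]
    norm_num
  rw [hu] at h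
  set Y := jQ a n (l / 2) ^ 2 with hY
  have hY0 : 0 ≤ Y := sq_nonneg _
  set N := (n : ℝ) * ((n : ℝ) ^ a) ^ 2 with hN
  have hN0 : 0 < N := by positivity
  rw [Real.div_rpow hlpos.le two_pos.le] at h
  have hA : 0 < l ^ (a + 1 / 2) := by positivity
  have hT : (0 : ℝ) < 2 ^ (a + 1 / 2) := by positivity
  have h2 : l ^ (a + 1 / 2) / 2 ^ (a + 1 / 2) * (Real.sqrt 2 / 2) * Y * N ≤
      Real.sqrt 2 * Real.Gamma (a + 1) ^ 2 / Real.pi := le_trans (by gcongr) h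
  rw [Real.rpow_neg hlpos.le, ← div_eq_mul_inv, div_div, le_div_iff₀ (by positivity)]
  have hq2 : 0 < Real.sqrt 2 := by positivity
  have h3 : Y * (N * l ^ (a + 1 / 2)) = (2 * 2 ^ (a + 1 / 2) / Real.sqrt 2) *
    (l ^ (a + 1 / 2) / 2 ^ (a + 1 / 2) * (Real.sqrt 2 / 2) * Y * N) := by
    field_simp
  rw [h3]
  refine (mul_le_mul_of_nonneg_left h2 (by positivity)).trans (le_of_eq ?_)
  field_simp


lemma tail_int (p l : ℝ) (hp : 0 < p) (hl0 : 0 < l) (hl1 : l ≤ 1) :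
    ∫ x in Ioc l 1, p * x ^ (-p - 1) = l ^ (-p) - 1 := by
  rw [← intervalIntegral.integral_of_le hl1, intervalIntegral.integral_const_mul,
    integral_rpow (Or.inr ⟨by linarith, ?_⟩)]
  · rw [sub_add_cancel, Real.one_rpow]
    field_simp
    ring
  · rw [uIcc_of_le hl1]
    exact fun h => absurd h.1 (not_le.2 hl0)

lemma meas_bound (ζ p κ l0 : ℝ) (hζ : 0 < ζ) (hp : ζ < p) (hl0 : 0 < l0) (hl1 : l0 ≤ 1)
    (hκ0 : 0 ≤ κ) (hκ1 : κ ≤ 1) (ρ : Measure ℝ) [IsFiniteMeasure ρ] (h0 : ρ {(0:ℝ)} = 0)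
    (hpow : ∀ l ∈ Set.Icc (0:ℝ) 1, (ρ (Set.Ioc 0 l)).toReal ≤ l ^ ζ)
    (f : ℝ → ℝ) (hf : Continuous f)
    (hf1 : ∀ l, 0 ≤ l → l ≤ 1 → f l ≤ 1)
    (hf2 : ∀ l, l0 ≤ l → l ≤ 1 → f l ≤ κ * l0 ^ p * l ^ (-p)) :
    ∫ l in Set.Icc (0:ℝ) 1, f l ∂ρ ≤ l0 ^ ζ * (1 + ζ / (p - ζ) * κ) := by
  have hp0 : 0 < p := hζ.trans hp
  rw [← setIntegral_congr_set (Ioc_ae_eq_Icc' h0)]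
  set μ := ρ.restrict (Ioc (0:ℝ) 1) with hμ
  set ν := (volume : Measure ℝ).restrict (Ioc l0 1) with hν
  set h : ℝ → ℝ := fun x => p * x ^ (-p - 1) with hh
  have hhc : ContinuousOn h (Icc l0 1) := by
    intro x hx
    have : x ≠ 0 := (hl0.trans_le hx.1).ne'
    exact ((Real.continuousAt_rpow_const x _ (Or.inl this)).const_mul p).continuousWithinAt
  have hhi : Integrable h ν := (hhc.integrableOn_Icc).mono_set Ioc_subset_Icc_self
  have hms : MeasurableSet {z : ℝ × ℝ | z.1 ≤ z.2} := measurableSet_le measurable_fst measurable_snd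
  set F : ℝ → ℝ → ℝ := fun l x => indicator {z : ℝ × ℝ | z.1 ≤ z.2} (fun z => h z.2) (l, x) with hF
  have hFi : Integrable (Function.uncurry F) (μ.prod ν) := (hhi.comp_snd μ).indicator hms
  set G : ℝ → ℝ := fun l => ∫ x, F l x ∂ν with hG
  have hGi : Integrable G μ := hFi.integral_prod_left
  have hGl : ∀ l, 0 < l → l ≤ 1 → G l = (max l l0) ^ (-p) - 1 := by
    intro l hl hl'
    have e : G l = ∫ x in Ioc l0 1 ∩ Ici l, h x := by
      rw [inter_comm, ← Measure.restrict_restrict measurableSet_Ici,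
        ← integral_indicator measurableSet_Ici]
      rfl
    rw [e, ← tail_int p (max l l0) hp0 (lt_max_of_lt_left hl) (max_le hl' hl1)]
    rcases le_total l l0 with hc | hc
    · rw [max_eq_right hc]
      congr 1
      rw [inter_eq_left.2]
      exact fun x hx => hc.trans hx.1.le
    · rw [max_eq_left hc]
      apply setIntegral_congr_set
      have : (Ioc l0 1 ∩ Ici l : Set ℝ) =ᵐ[volume] (Ioc l0 1 ∩ Ioi l : Set ℝ) :=
        (ae_eq_refl (Ioc l0 1)).inter Ioi_ae_eq_Ici.symm
      have h' : Ioc l0 1 ∩ Ioi l = Ioc l 1 := ?_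
      · rw [h'] at this
        exact this
      ext x
      simp only [mem_inter_iff, mem_Ioc, mem_Ioi]
      constructor
      · rintro ⟨⟨_, h2⟩, h3⟩; exact ⟨h3, h2⟩
      · rintro ⟨h3, h2⟩; exact ⟨⟨lt_of_le_of_lt hc h3, h2⟩, h3⟩
  have hIi : Integrable (indicator (Iic l0) (fun _ => (1:ℝ))) μ :=
    (integrable_const (1:ℝ)).indicator measurableSet_Iic
  have hGi1 : Integrable (fun l => 1 + G l) μ := (integrable_const (1:ℝ)).add hGi
  have hl0p : l0 ^ p * l0 ^ (-p) = 1 := by rw [← Real.rpow_add hl0]; simp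
  have hle : ∫ l, f l ∂μ ≤ ∫ l, ((1 - κ) * indicator (Iic l0) (fun _ => (1:ℝ)) l +
      κ * l0 ^ p * (1 + G l)) ∂μ := by
    apply integral_mono_ae
    · exact (hf.integrableOn_Icc (a := (0:ℝ)) (b := 1)).mono_set Ioc_subset_Icc_self
    · exact (hIi.const_mul _).add (hGi1.const_mul _)
    · rw [hμ]
      filter_upwards [ae_restrict_mem measurableSet_Ioc] with l hl
      rw [hGl l hl.1 hl.2]
      rcases le_or_gt l l0 with hc | hc
      · rw [indicator_of_mem (mem_Iic.2 hc), max_eq_right hc]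
        have := hf1 l hl.1.le hl.2
        have e : (1 - κ) * 1 + κ * l0 ^ p * (1 + (l0 ^ (-p) - 1)) = 1 := by
          linear_combination κ * hl0p
        rw [e]; exact this
      · rw [indicator_of_notMem (by simpa using hc), max_eq_left hc.le]
        have := hf2 l hc.le hl.2
        have e : (1 - κ) * 0 + κ * l0 ^ p * (1 + (l ^ (-p) - 1)) = κ * l0 ^ p * l ^ (-p) := by ring
        rw [e]; exact this
  refine hle.trans ?_
  rw [integral_add (hIi.const_mul _) (hGi1.const_mul _),
    integral_const_mul, integral_const_mul, integral_add (integrable_const _) hGi,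
    integral_indicator measurableSet_Iic]
  have hμI : ∀ x, 0 < x → x ≤ 1 → μ.real (Iic x) ≤ x ^ ζ := by
    intro x hx hx1
    have : μ.real (Iic x) = (ρ (Ioc 0 x)).toReal := by
      rw [hμ, Measure.real, Measure.restrict_apply measurableSet_Iic]
      congr 2
      ext y
      simp only [mem_inter_iff, mem_Iic, mem_Ioc]
      constructor
      · rintro ⟨h1, h2, _⟩; exact ⟨h2, h1⟩
      · rintro ⟨h1, h2⟩; exact ⟨h2, h1, h2.trans hx1⟩
    rw [this]
    exact hpow x ⟨hx.le, hx1⟩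
  have i1 : ∫ l in Iic l0, (1:ℝ) ∂μ ≤ l0 ^ ζ := by
    rw [setIntegral_const, smul_eq_mul, mul_one]
    exact hμI l0 hl0 hl1
  have i2 : ∫ l, (1:ℝ) ∂μ ≤ 1 := by
    rw [integral_const, smul_eq_mul, mul_one, hμ, measureReal_restrict_apply_univ]
    have := hpow 1 ⟨zero_le_one, le_refl _⟩
    rwa [Real.one_rpow] at this
  have i3 : ∫ l, G l ∂μ ≤ p / (p - ζ) * (l0 ^ (ζ - p) - 1) := by
    have e1 : ∫ l, G l ∂μ = ∫ x, ∫ l, F l x ∂μ ∂ν := integral_integral_swap hFi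
    rw [e1]
    have e2 : ∀ x, ∫ l, F l x ∂μ = μ.real (Iic x) * h x := by
      intro x
      have : (fun l => F l x) = indicator (Iic x) (fun _ => h x) := by
        funext l
        rfl
      rw [this, integral_indicator measurableSet_Iic, setIntegral_const, smul_eq_mul]
    have e3 : ∫ x, p / (p - ζ) * ((p - ζ) * x ^ (-(p - ζ) - 1)) ∂ν = p / (p - ζ) * (l0 ^ (ζ - p) - 1) := by
      rw [integral_const_mul, hν, tail_int (p - ζ) l0 (by linarith) hl0 hl1, neg_sub]
    rw [← e3]
    apply integral_mono_ae
    · exact hFi.integral_prod_right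
    · have : ContinuousOn (fun x : ℝ => p / (p - ζ) * ((p - ζ) * x ^ (-(p - ζ) - 1))) (Icc l0 1) := by
        intro x hx
        have : x ≠ 0 := (hl0.trans_le hx.1).ne'
        exact (((Real.continuousAt_rpow_const x _ (Or.inl this)).const_mul _).const_mul _).continuousWithinAt
      exact (this.integrableOn_Icc).mono_set Ioc_subset_Icc_self
    · rw [hν]
      filter_upwards [ae_restrict_mem measurableSet_Ioc] with x hx
      have hx0 : 0 < x := hl0.trans hx.1
      rw [e2 x]
      have := hμI x hx0 hx.2
      have hhx : 0 ≤ h x := by simp only [hh]; positivity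
      refine (mul_le_mul_of_nonneg_right this hhx).trans (le_of_eq ?_)
      have e4 : x ^ (-(p - ζ) - 1) = x ^ ζ * x ^ (-p - 1) := by
        rw [← Real.rpow_add hx0]; congr 1; ring
      have : p - ζ ≠ 0 := by linarith
      rw [e4]
      simp only [hh]
      field_simp
  have hpz : 0 < p - ζ := by linarith
  have e5 : l0 ^ p * l0 ^ (ζ - p) = l0 ^ ζ := by rw [← Real.rpow_add hl0]; congr 1; ring
  calc (1 - κ) * ∫ l in Iic l0, (1:ℝ) ∂μ + κ * l0 ^ p * (∫ l, (1:ℝ) ∂μ + ∫ l, G l ∂μ)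
      ≤ (1 - κ) * l0 ^ ζ + κ * l0 ^ p * (1 + p / (p - ζ) * (l0 ^ (ζ - p) - 1)) := by
        have : 0 ≤ 1 - κ := by linarith
        gcongr
    _ = l0 ^ ζ * (1 + ζ / (p - ζ) * κ) - κ * l0 ^ p * (ζ / (p - ζ)) := by
        rw [← e5]; field_simp; ring
    _ ≤ l0 ^ ζ * (1 + ζ / (p - ζ) * κ) := by
        have : 0 ≤ κ * l0 ^ p * (ζ / (p - ζ)) := by positivity
        linarith


lemma l0_rpow (ζ c : ℝ) (hc : 0 < c) (n : ℕ) (hn : 0 < n) :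
    (c / (n : ℝ) ^ 2) ^ ζ = c ^ ζ * (n : ℝ) ^ (-(2 * ζ)) := by
  have hn' : (0 : ℝ) < n := by exact_mod_cast hn
  rw [Real.div_rpow hc.le (by positivity), ← Real.rpow_natCast, ← Real.rpow_mul hn'.le,
    Real.rpow_neg hn'.le, div_eq_mul_inv]
  norm_num

lemma final_C (L A : ℕ → ℝ) (hA : ∀ n, 1 ≤ n → 0 < A n) (h : ∀ᶠ n in atTop, L n ≤ A n) :
    ∃ C > 0, ∀ n : ℕ, 1 ≤ n → L n ≤ A n * (1 + C / n) := by
  obtain ⟨n0, h0⟩ := eventually_atTop.1 h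
  have hs : ∀ n ∈ Finset.range n0, 0 ≤ |n * L n / A n| := fun n _ => abs_nonneg _
  refine ⟨1 + ∑ n ∈ Finset.range n0, |n * L n / A n|, by
    have := Finset.sum_nonneg hs; linarith, fun n hn => ?_⟩
  have hn' : (0 : ℝ) < n := by exact_mod_cast hn
  have hAn := hA n hn
  have hS := Finset.sum_nonneg hs
  rcases le_or_gt n0 n with hc | hc
  · have h1 := h0 n hc
    have : 0 ≤ (1 + ∑ n ∈ Finset.range n0, |n * L n / A n|) / n := by positivity
    nlinarith
  · have h1 := Finset.single_le_sum hs (Finset.mem_range.2 hc)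
    have h2 := (le_abs_self _).trans h1
    set S := ∑ n ∈ Finset.range n0, |n * L n / A n|
    rw [div_le_iff₀ hAn] at h2
    have h3 : L n ≤ S * A n / n := by rw [le_div_iff₀ hn']; linarith
    have h4 : A n * (1 + (1 + S) / n) = A n + A n / n + S * A n / n := by ring
    have : 0 < A n / n := by positivity
    rw [h4]; linarith

/-- Heavy Ball with the Jacobi-polynomial schedule (indices `(a,0)`,
`α_n = (2n+a+1)(2n+a+2)/(2(n+a+1)²)`, `β_n = n²(2n+a+2)/((n+a+1)²(2n+a))`):
under the power-law spectral condition `ρ((0,λ]) ≤ λ^ζ` and for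
`a > max(0, ζ-1/2)`, the loss is bounded by `(1/2)S(ζ,a) n^{-2ζ}(1 + C/n)`. -/
theorem hb_jacobi_schedule_upper_bound
    (ζ a : ℝ) (hζ : 0 < ζ) (ha : max 0 (ζ - 1/2) < a)
    (ρ : Measure ℝ) [IsFiniteMeasure ρ]
    (hsupp : ρ (Set.Icc (0:ℝ) 1)ᶜ = 0)
    (h0 : ρ {(0:ℝ)} = 0)
    (hpow : ∀ l ∈ Set.Icc (0:ℝ) 1, (ρ (Set.Ioc 0 l)).toReal ≤ l ^ ζ)
    (q : ℕ → ℝ → ℝ)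
    (hq0 : ∀ l, q 0 l = 1)
    (hq1 : ∀ l, q 1 l = 1 - ((a + 1) * (a + 2) / (2 * (a + 1) ^ 2)) * l)
    (hqrec : ∀ n : ℕ, 1 ≤ n → ∀ l,
      q (n + 1) l =
        (1 - ((2 * (n : ℝ) + a + 1) * (2 * (n : ℝ) + a + 2) /
              (2 * ((n : ℝ) + a + 1) ^ 2)) * l) * q n l
        + ((n : ℝ) ^ 2 * (2 * (n : ℝ) + a + 2) /
              (((n : ℝ) + a + 1) ^ 2 * (2 * (n : ℝ) + a))) * (q n l - q (n - 1) l)) :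
    ∃ C > 0, ∀ n : ℕ, 1 ≤ n →
      (1/2) * ∫ l in Set.Icc (0:ℝ) 1, (q n l) ^ 2 ∂ρ ≤
        (1/2) *
          (((4 * a + 5) ^ 2 / 2) ^ ζ *
            (1 + (ζ / (a + 1/2 - ζ)) *
              ((2:ℝ) ^ (2 * a + 2) * Real.Gamma (a + 1) ^ 2 /
                (Real.pi * (4 * a + 5) ^ (2 * a + 1))))) *
          (n : ℝ) ^ (-(2 * ζ)) * (1 + C / n) := by
  obtain ⟨ha0, ha1⟩ := max_lt_iff.1 ha
  have hpz : 0 < a + 1 / 2 - ζ := by linarith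
  have hqj : ∀ n : ℕ, ∀ l, q n l = jQ a n (l / 2) ∧ q (n + 1) l = jQ a (n + 1) (l / 2) := by
    intro n
    induction n with
    | zero =>
      intro l
      refine ⟨by rw [hq0, jQ_zero], ?_⟩
      rw [zero_add, hq1, jQ_one]
      have : a + 1 ≠ 0 := by linarith
      field_simp
    | succ n ih =>
      intro l
      obtain ⟨i1, i2⟩ := ih l
      refine ⟨i2, ?_⟩
      rw [hqrec (n + 1) (by omega), jQ_rec', i2, Nat.add_sub_cancel, i1]
      push_cast
      congr 3
      rw [mul_comm (2:ℝ) (_ ^ 2), ← div_div]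
      ring
  have hk0 := kap_nonneg a ha0
  have hk1 := kap_le_one a ha0
  have hc : 0 < (4 * a + 5) ^ 2 / 2 := by positivity
  apply final_C (fun n => (1/2) * ∫ l in Set.Icc (0:ℝ) 1, (q n l) ^ 2 ∂ρ)
  · intro n hn
    have hn' : (0 : ℝ) < n := by exact_mod_cast hn
    have hpi := Real.pi_pos
    positivity
  · have hl : ∀ᶠ n : ℕ in atTop, (4 * a + 5) ^ 2 / 2 / (n : ℝ) ^ 2 ≤ 1 := by
      have h1 : Tendsto (fun n : ℕ => (4 * a + 5) ^ 2 / 2 / (n : ℝ) ^ 2) atTop (nhds 0) :=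
        tendsto_const_nhds.div_atTop
          ((tendsto_pow_atTop two_ne_zero).comp tendsto_natCast_atTop_atTop)
      exact h1.eventually (eventually_le_nhds zero_lt_one)
    filter_upwards [hl, jQ_far a ha0, eventually_gt_atTop 0] with n hn1 hfar hn
    have hn' : (0 : ℝ) < n := by exact_mod_cast hn
    have hm := meas_bound ζ (a + 1 / 2) (kap a) ((4 * a + 5) ^ 2 / 2 / (n : ℝ) ^ 2) hζ (by linarith)
      (by positivity) hn1 hk0 hk1 ρ h0 hpow (fun l => jQ a n (l / 2) ^ 2)
      (((jQ_cont a n).comp (continuous_id.div_const 2)).pow 2)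
      (fun l h1 h2 => jQ_sq_le_one a ha0 n _ (by linarith) (by linarith)) hfar
    rw [l0_rpow ζ _ hc n hn] at hm
    have e : ∀ l, q n l = jQ a n (l / 2) := fun l => (hqj n l).1
    simp only [e]
    rw [kap] at hm
    linarith
end

section
/- Let ζ>0, ν>0, Λ>0 and a > max(0, ζ-1/2), and set S(ζ,a) = ((4a+5)²/2)^ζ · [1 + (ζ/(a+1/2-ζ)) · 2^{2a+2}Γ(a+1)²/(π(4a+5)^{2a+1})]. Let ρ be a finite Borel measure supported on [0,1] with ρ({0})=0 and ρ((0,λ]) ≤ λ^ζ for all λ ∈ [0,1], and suppose there is a nonincreasing sequence λ_1 ≥ λ_2 ≥ … > 0 with λ_k ≤ Λ·k^{-ν} for all k ≥ 1 such that ρ is supported on the set {λ_k : k ≥ 1}. Then there exists C > 0 such that for all n ≥ 2, the infimum over all real polynomials q with deg q ≤ n and q(0)=1 of (1/2)∫_{[0,1]} q(λ)² ρ(dλ) is at most (1/2)·S(ζ,a)·Λ^ζ·(n/2)^{-(2+ν)ζ}·(1 + C/n). -/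
open MeasureTheory Filter Set Polynomial

noncomputable def dirP (M : ℕ) : ℝ[X] :=
  C ((2 * (M:ℝ) + 1)⁻¹) * ((1 + C 2 * ∑ j ∈ Finset.range M, Chebyshev.T ℝ ((j:ℤ) + 1)).comp (1 - C 2 * X))

lemma dirP_natDegree (M : ℕ) : (dirP M).natDegree ≤ M := by
  unfold dirP
  refine (natDegree_C_mul_le _ _).trans ?_
  refine natDegree_comp_le.trans ?_
  have h1 : (1 - C 2 * X : ℝ[X]).natDegree ≤ 1 := by
    compute_degree
  have h2 : (1 + C 2 * ∑ j ∈ Finset.range M, Chebyshev.T ℝ ((j:ℤ) + 1)).natDegree ≤ M := by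
    refine (natDegree_add_le _ _).trans (max_le (by simp) ?_)
    refine (natDegree_C_mul_le _ _).trans ?_
    refine natDegree_sum_le_of_forall_le _ _ ?_
    intro j hj
    have := Finset.mem_range.1 hj
    rw [Chebyshev.natDegree_T]
    omega
  calc _ ≤ M * 1 := Nat.mul_le_mul h2 h1
    _ = M := by ring

lemma dirP_eval (M : ℕ) (x : ℝ) : (dirP M).eval x =
    (2 * (M:ℝ) + 1)⁻¹ * (1 + 2 * ∑ j ∈ Finset.range M, (Chebyshev.T ℝ ((j:ℤ) + 1)).eval (1 - 2 * x)) := by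
  simp [dirP, eval_finsetSum, eval_comp]

lemma dirP_zero (M : ℕ) : (dirP M).eval 0 = 1 := by
  rw [dirP_eval]
  have : (0:ℝ) < 2 * M + 1 := by positivity
  simp
  field_simp
  ring

lemma dir_ker (M : ℕ) (φ : ℝ) :
    Real.sin φ * (1 + 2 * ∑ j ∈ Finset.range M, Real.cos (((j:ℝ) + 1) * (2 * φ))) =
      Real.sin ((2 * M + 1) * φ) := by
  induction M with
  | zero => simp
  | succ M ih =>
    rw [Finset.sum_range_succ, mul_add 2, ← add_assoc, mul_add, ih]
    have e1 : (2 * (M:ℝ) + 1) * φ = ((M:ℝ) + 1) * (2 * φ) - φ := by ring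
    have e2 : (2 * ((M + 1 : ℕ):ℝ) + 1) * φ = ((M:ℝ) + 1) * (2 * φ) + φ := by push_cast; ring
    rw [e1, e2, Real.sin_sub, Real.sin_add]
    ring

lemma dirP_sin (M : ℕ) (φ : ℝ) : (dirP M).eval (Real.sin φ ^ 2) =
    (2 * (M:ℝ) + 1)⁻¹ * (1 + 2 * ∑ j ∈ Finset.range M, Real.cos (((j:ℝ) + 1) * (2 * φ))) := by
  have h : 1 - 2 * Real.sin φ ^ 2 = Real.cos (2 * φ) := by
    rw [Real.cos_two_mul, Real.cos_sq']; ring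
  rw [dirP_eval, h]
  congr 3
  refine Finset.sum_congr rfl fun j _ => ?_
  rw [Chebyshev.T_real_cos]
  push_cast
  rfl

lemma dirP_sq_le (M : ℕ) (x : ℝ) (hx : 0 ≤ x) (hx1 : x ≤ 1) :
    (dirP M).eval x ^ 2 ≤ 1 ∧ x * ((dirP M).eval x ^ 2) ≤ ((2 * (M:ℝ) + 1) ^ 2)⁻¹ := by
  obtain ⟨φ, rfl⟩ : ∃ φ, Real.sin φ ^ 2 = x := by
    refine ⟨Real.arcsin (Real.sqrt x), ?_⟩
    rw [Real.sin_arcsin (by linarith [Real.sqrt_nonneg x]) (Real.sqrt_le_one.2 hx1), Real.sq_sqrt hx]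
  have hp : (0:ℝ) < 2 * M + 1 := by positivity
  rw [dirP_sin]
  constructor
  · rw [sq_le_one_iff_abs_le_one, abs_mul, abs_inv, abs_of_pos hp, inv_mul_le_iff₀ hp]
    have : |∑ j ∈ Finset.range M, Real.cos (((j:ℝ) + 1) * (2 * φ))| ≤ M := by
      refine (Finset.abs_sum_le_sum_abs _ _).trans ?_
      refine (Finset.sum_le_sum (fun i _ => Real.abs_cos_le_one _)).trans ?_
      simp
    rw [abs_le] at this ⊢
    constructor <;> linarith [this.1, this.2]
  · rw [← mul_pow, ← inv_pow]
    rw [mul_left_comm, dir_ker, mul_pow]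
    have := Real.sin_sq_le_one ((2 * M + 1) * φ)
    have h2 : (0:ℝ) ≤ ((2 * (M:ℝ) + 1)⁻¹) ^ 2 := by positivity
    nlinarith

lemma layer (ζ : ℝ) (hζ : 0 < ζ) (k : ℕ) (hk : ζ < k) (ρ : Measure ℝ) [IsFiniteMeasure ρ]
    (hpow : ∀ l, 0 ≤ l → ρ (Set.Iic l) ≤ ENNReal.ofReal (l ^ ζ)) (x0 : ℝ) (hx0 : 0 < x0)
    (hpos : ∀ᵐ l ∂ρ, 0 < l) :
    Integrable (fun l => min 1 ((x0 / l) ^ k)) ρ ∧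
    ∫ l, min 1 ((x0 / l) ^ k) ∂ρ ≤ x0 ^ ζ * (k / (k - ζ)) := by
  have hk0 : (0:ℝ) < k := hζ.trans hk
  have hkn : k ≠ 0 := by rintro rfl; simp at hk0
  have hmeas : Measurable (fun l : ℝ => min 1 ((x0 / l) ^ k)) := by fun_prop
  have hnn : 0 ≤ᵐ[ρ] (fun l : ℝ => min 1 ((x0 / l) ^ k)) := by
    filter_upwards [hpos] with l hl
    have : 0 ≤ (x0 / l) ^ k := by positivity
    simp [this]
  constructor
  · refine Integrable.of_bound hmeas.aestronglyMeasurable 1 ?_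
    filter_upwards [hnn] with l hl
    rw [Real.norm_eq_abs, abs_of_nonneg hl]
    exact min_le_left _ _
  have hr : 0 ≤ x0 ^ ζ * (k / (k - ζ)) := by
    have : 0 < k - ζ := by linarith
    positivity
  rw [integral_eq_lintegral_of_nonneg_ae hnn hmeas.aestronglyMeasurable]
  refine ENNReal.toReal_le_of_le_ofReal hr ?_
  rw [lintegral_eq_lintegral_meas_le ρ hnn hmeas.aemeasurable]
  have hs : -1 < -(ζ / k) := by
    have : ζ / k < 1 := (div_lt_one hk0).2 hk
    linarith
  have hbd : ∀ t ∈ Ioi (0:ℝ), ρ {a : ℝ | t ≤ min 1 ((x0 / a) ^ k)} ≤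
      (Ioc (0:ℝ) 1).indicator (fun t => ENNReal.ofReal (x0 ^ ζ * t ^ (-(ζ / k)))) t := by
    intro t ht
    have ht : 0 < t := ht
    by_cases h1 : t ≤ 1
    · rw [indicator_of_mem (show t ∈ Ioc (0:ℝ) 1 from ⟨ht, h1⟩)]
      have e : x0 ^ ζ * t ^ (-(ζ / k)) = (x0 * t ^ (-(1 / (k:ℝ)))) ^ ζ := by
        rw [Real.mul_rpow hx0.le (by positivity), ← Real.rpow_mul ht.le]
        congr 2; ring
      rw [e]
      refine le_trans (measure_mono_ae ?_) (hpow _ (by positivity))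
      filter_upwards [hpos] with l hl hmem
      have hmem : t ≤ (x0 / l) ^ k := le_trans hmem (min_le_right _ _)
      show l ≤ x0 * t ^ (-(1 / (k:ℝ)))
      have h2 : t ^ (1 / (k:ℝ)) ≤ x0 / l := by
        have := Real.rpow_le_rpow ht.le hmem (show 0 ≤ 1 / (k:ℝ) by positivity)
        rw [one_div, Real.pow_rpow_inv_natCast (by positivity) hkn] at this
        rwa [one_div]
      rw [Real.rpow_neg ht.le, ← div_eq_mul_inv, le_div_iff₀ (by positivity)]
      rw [le_div_iff₀ hl] at h2
      linarith
    · have : {a : ℝ | t ≤ min 1 ((x0 / a) ^ k)} = ∅ := by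
        ext a
        simp only [mem_ofPred_eq, mem_empty_iff_false, iff_false]
        intro h
        exact h1 (h.trans (min_le_left _ _))
      rw [this, measure_empty]
      exact zero_le
  refine (setLIntegral_mono' measurableSet_Ioi hbd).trans ?_
  refine (setLIntegral_le_lintegral _ _).trans ?_
  rw [lintegral_indicator measurableSet_Ioc]
  have hint : IntegrableOn (fun t : ℝ => x0 ^ ζ * t ^ (-(ζ / k))) (Ioc 0 1) volume := by
    have := intervalIntegral.intervalIntegrable_rpow' (a := 0) (b := 1) hs
    rw [intervalIntegrable_iff_integrableOn_Ioc_of_le zero_le_one] at this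
    exact this.const_mul _
  rw [← ofReal_integral_eq_lintegral_ofReal hint]
  · apply ENNReal.ofReal_le_ofReal
    rw [← intervalIntegral.integral_of_le zero_le_one, intervalIntegral.integral_const_mul,
      integral_rpow (Or.inl hs)]
    have h1 : -(ζ / k) + 1 = (k - ζ) / k := by field_simp; ring
    have h2 : 0 < k - ζ := by linarith
    rw [h1, Real.one_rpow, Real.zero_rpow (by positivity)]
    apply le_of_eq
    field_simp
    ring
  · filter_upwards [ae_restrict_mem measurableSet_Ioc] with t ht
    have := ht.1
    positivity

lemma num_bound (ζ a : ℝ) (hζ : 0 < ζ) (ha : max 0 (ζ - 1/2) < a) (k n M N : ℕ)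
    (hk1 : ζ + 1 ≤ k) (hk2 : (k:ℝ) ≤ ζ + 2) (hn : 2 ≤ n) (hM : M = N / k) (hN : n ≤ 2 * N)
    (hN2 : N ≤ n) :
    (((n:ℝ) / 2) ^ 2 / (2 * (M:ℝ) + 1) ^ 2) ^ ζ * (1 + ζ) ≤
      ((4 * a + 5) ^ 2 / 2) ^ ζ * (1 + (2 * k * ζ) / n) := by
  have ha0 := (le_max_left _ _).trans_lt ha
  have ha1 := (le_max_right _ _).trans_lt ha
  have h4 : 2 * (k:ℝ) ≤ 4 * a + 5 := by linarith
  have hk0 : (0:ℝ) < k := by linarith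
  have hkn : 0 < k := by exact_mod_cast hk0
  have hn0 : (0:ℝ) < n := by positivity
  have hB : 2 * (k:ℝ) ^ 2 ≤ (4 * a + 5) ^ 2 / 2 := by nlinarith
  have hlt : N < k * (M + 1) := by
    rw [hM]; exact Nat.lt_mul_div_succ N hkn
  have hltR : (N:ℝ) ≤ k * (M + 1) := by exact_mod_cast hlt.le
  have hNR : (n:ℝ) / 2 ≤ N := by
    have : (n:ℝ) ≤ 2 * N := by exact_mod_cast hN
    linarith
  have hp : (0:ℝ) < 2 * M + 1 := by positivity
  have hn2 : 0 ≤ (n:ℝ) / 2 := by positivity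
  rcases Nat.eq_zero_or_pos M with h | h
  · have hM0 : (M:ℝ) = 0 := by exact_mod_cast h
    apply mul_le_mul
    · apply Real.rpow_le_rpow (by positivity) _ hζ.le
      refine le_trans ?_ hB
      rw [div_le_iff₀ (by positivity)]
      have hle : (n:ℝ) / 2 ≤ k := by
        rw [hM0] at hltR
        linarith
      rw [hM0]
      nlinarith
    · have : ζ ≤ 2 * k * ζ / n := by
        rw [le_div_iff₀ hn0]
        have : (n:ℝ) ≤ 2 * k := by
          rw [hM0] at hltR
          linarith
        nlinarith
      linarith
    · positivity
    · positivity
  · have hM1 : (1:ℝ) ≤ M := by exact_mod_cast h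
    have hx : ((n:ℝ) / 2) ^ 2 / (2 * (M:ℝ) + 1) ^ 2 ≤ 4 / 9 * (k:ℝ) ^ 2 := by
      rw [div_le_iff₀ (by positivity)]
      have : (n:ℝ) / 2 ≤ 2 / 3 * (k * (2 * M + 1)) := by nlinarith
      calc ((n:ℝ) / 2) ^ 2 ≤ (2 / 3 * (k * (2 * M + 1))) ^ 2 := by gcongr
        _ = _ := by ring
    have he : 1 + ζ ≤ (9 / 2 : ℝ) ^ ζ := by
      calc 1 + ζ ≤ Real.exp ζ := by linarith [Real.add_one_le_exp ζ]
        _ = Real.exp 1 ^ ζ := by rw [← Real.exp_mul, one_mul]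
        _ ≤ _ := by
          apply Real.rpow_le_rpow (Real.exp_pos _).le _ hζ.le
          linarith [Real.exp_one_lt_d9]
    calc _ ≤ (4 / 9 * (k:ℝ) ^ 2) ^ ζ * (9 / 2 : ℝ) ^ ζ := by gcongr
      _ = (2 * (k:ℝ) ^ 2) ^ ζ := by
        rw [← Real.mul_rpow (by positivity) (by positivity)]
        congr 1; ring
      _ ≤ ((4 * a + 5) ^ 2 / 2) ^ ζ * 1 := by rw [mul_one]; gcongr
      _ ≤ _ := by
        gcongr
        have : 0 ≤ 2 * k * ζ / n := by positivity
        linarith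

/-- The residual polynomial. -/
noncomputable def resP (lam : ℕ → ℝ) (m M k : ℕ) : ℝ[X] :=
  (∏ i ∈ Finset.range m, (1 - C (lam i)⁻¹ * X)) * ((dirP M).comp (C (lam m)⁻¹ * X)) ^ k

lemma resP_natDegree (lam : ℕ → ℝ) (m M k : ℕ) : (resP lam m M k).natDegree ≤ m + k * M := by
  unfold resP
  refine natDegree_mul_le.trans (add_le_add ?_ ?_)
  · refine (natDegree_prod_le _ _).trans ?_
    refine (Finset.sum_le_card_nsmul _ _ 1 ?_).trans (by simp)
    intro i _
    compute_degree
  · refine natDegree_pow_le.trans (Nat.mul_le_mul le_rfl ?_)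
    refine natDegree_comp_le.trans ?_
    have h1 : (C (lam m)⁻¹ * X : ℝ[X]).natDegree ≤ 1 := by compute_degree
    calc _ ≤ M * 1 := Nat.mul_le_mul (dirP_natDegree M) h1
      _ = M := by ring

lemma resP_zero (lam : ℕ → ℝ) (m M k : ℕ) : (resP lam m M k).eval 0 = 1 := by
  simp [resP, eval_prod, eval_comp, dirP_zero]

lemma resP_sq_le (lam : ℕ → ℝ) (hlampos : ∀ k, 0 < lam k) (hanti : Antitone lam)
    (m M k : ℕ) (j : ℕ) :
    (resP lam m M k).eval (lam j) ^ 2 ≤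
      min 1 ((lam m / (2 * (M:ℝ) + 1) ^ 2 / lam j) ^ k) := by
  have hj := hlampos j
  have hm := hlampos m
  by_cases hjm : j < m
  · have : (resP lam m M k).eval (lam j) = 0 := by
      simp only [resP, eval_mul, eval_prod]
      rw [Finset.prod_eq_zero (Finset.mem_range.2 hjm)]
      · simp
      · simp [hj.ne']
    rw [this]
    have : 0 ≤ (lam m / (2 * (M:ℝ) + 1) ^ 2 / lam j) ^ k := by positivity
    simp [this]
  · have hle : lam j ≤ lam m := hanti (not_lt.1 hjm)
    have hx0 : 0 ≤ (lam m)⁻¹ * lam j := by positivity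
    have hx1 : (lam m)⁻¹ * lam j ≤ 1 := by rw [inv_mul_le_iff₀ hm]; linarith
    obtain ⟨h1, h2⟩ := dirP_sq_le M _ hx0 hx1
    have e : (resP lam m M k).eval (lam j) ^ 2 =
        (∏ i ∈ Finset.range m, (1 - (lam i)⁻¹ * lam j) ^ 2) *
          ((dirP M).eval ((lam m)⁻¹ * lam j) ^ 2) ^ k := by
      simp only [resP, eval_mul, eval_prod, eval_pow, eval_comp, eval_sub, eval_one, eval_C, eval_X]
      rw [mul_pow, Finset.prod_pow]
      ring
    have hprod : (∏ i ∈ Finset.range m, (1 - (lam i)⁻¹ * lam j) ^ 2) ≤ 1 := by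
      apply Finset.prod_le_one
      · intro i _; positivity
      · intro i hi
        have hi' : lam j ≤ lam i := hle.trans (hanti (Finset.mem_range.1 hi).le)
        have hi0 := hlampos i
        have a0 : 0 ≤ (lam i)⁻¹ * lam j := by positivity
        have a1 : (lam i)⁻¹ * lam j ≤ 1 := by rw [inv_mul_le_iff₀ hi0]; linarith
        nlinarith
    rw [e]
    refine (mul_le_of_le_one_left (by positivity) hprod).trans (le_min ?_ ?_)
    · exact pow_le_one₀ (by positivity) h1
    · refine pow_le_pow_left₀ (by positivity) ?_ k
      rw [le_div_iff₀ hj, div_eq_mul_inv]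
      calc _ = lam m * ((lam m)⁻¹ * lam j * (dirP M).eval ((lam m)⁻¹ * lam j) ^ 2) := by
            field_simp
        _ ≤ _ := by gcongr


/-- Conjugate Gradients under both the power-law spectral condition `ρ((0,λ]) ≤ λ^ζ`
and the eigenvalue decay condition (ρ supported on eigenvalues `λ_k ≤ Λ k^{-ν}`):
the `n`-step CG loss is bounded by `(1/2) S(ζ,a) Λ^ζ (n/2)^{-(2+ν)ζ}(1+C/n)`.
Here `lam k` denotes the eigenvalue `λ_{k+1}`. -/
theorem cg_discrete_spectrum_upper_bound
    (ζ ν Λ a : ℝ) (hζ : 0 < ζ) (hν : 0 < ν) (hΛ : 0 < Λ)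
    (ha : max 0 (ζ - 1/2) < a)
    (ρ : Measure ℝ) [IsFiniteMeasure ρ]
    (hsupp : ρ (Set.Icc (0:ℝ) 1)ᶜ = 0)
    (h0 : ρ {(0:ℝ)} = 0)
    (hpow : ∀ l ∈ Set.Icc (0:ℝ) 1, (ρ (Set.Ioc 0 l)).toReal ≤ l ^ ζ)
    (lam : ℕ → ℝ)
    (hlampos : ∀ k, 0 < lam k)
    (hlammono : ∀ k, lam (k + 1) ≤ lam k)
    (hlamdecay : ∀ k : ℕ, lam k ≤ Λ * ((k : ℝ) + 1) ^ (-ν))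
    (hatom : ρ (Set.range lam)ᶜ = 0) :
    ∃ C > (0:ℝ), ∀ n : ℕ, 2 ≤ n →
      sInf {L : ℝ | ∃ q : Polynomial ℝ, q.natDegree ≤ n ∧ q.eval 0 = 1 ∧
          L = (1/2) * ∫ l in Set.Icc (0:ℝ) 1, (q.eval l) ^ 2 ∂ρ} ≤
        (1/2) *
          (((4 * a + 5) ^ 2 / 2) ^ ζ *
            (1 + (ζ / (a + 1/2 - ζ)) *
              ((2:ℝ) ^ (2 * a + 2) * Real.Gamma (a + 1) ^ 2 /
                (Real.pi * (4 * a + 5) ^ (2 * a + 1))))) *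
          Λ ^ ζ * ((n : ℝ) / 2) ^ (-((2 + ν) * ζ)) * (1 + C / n) := by
  have hanti : Antitone lam := antitone_nat_of_succ_le hlammono
  have ha0 := (le_max_left _ _).trans_lt ha
  have ha1 := (le_max_right _ _).trans_lt ha
  set k : ℕ := ⌊ζ⌋₊ + 2 with hkdef
  have hk1 : ζ + 1 ≤ k := by
    have := Nat.lt_floor_add_one ζ
    rw [hkdef]; push_cast; linarith
  have hk2 : (k:ℝ) ≤ ζ + 2 := by
    have := Nat.floor_le hζ.le
    rw [hkdef]; push_cast; linarith
  have hk0 : (0:ℝ) < k := by linarith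
  have hsuppae : ∀ᵐ l ∂ρ, l ∈ Icc (0:ℝ) 1 := by
    rw [ae_iff]; exact hsupp
  have hatae : ∀ᵐ l ∂ρ, l ∈ range lam := by
    rw [ae_iff]; exact hatom
  have hpos : ∀ᵐ l ∂ρ, 0 < l := by
    filter_upwards [hatae] with l hl
    obtain ⟨j, rfl⟩ := hl
    exact hlampos j
  have hpow' : ∀ l, 0 ≤ l → ρ (Set.Iic l) ≤ ENNReal.ofReal (l ^ ζ) := by
    intro l hl
    have hb : ∀ l ∈ Set.Icc (0:ℝ) 1, ρ (Set.Ioc 0 l) ≤ ENNReal.ofReal (l ^ ζ) := by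
      intro l hl
      rw [← ENNReal.ofReal_toReal (measure_ne_top ρ _)]
      exact ENNReal.ofReal_le_ofReal (hpow l hl)
    have hmin : min l 1 ∈ Set.Icc (0:ℝ) 1 := ⟨le_min hl zero_le_one, min_le_right _ _⟩
    refine le_trans (measure_mono_ae ?_) ((hb _ hmin).trans ?_)
    · filter_upwards [hpos, hsuppae] with x hx hx1 hxl
      exact ⟨hx, le_min hxl hx1.2⟩
    · exact ENNReal.ofReal_le_ofReal (Real.rpow_le_rpow hmin.1 (min_le_left _ _) hζ.le)
  refine ⟨2 * k * ζ, by positivity, ?_⟩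
  intro n hn
  have hn0 : (0:ℝ) < n := by positivity
  set m := n / 2 with hm
  set N := n - m with hN
  set M := N / k with hM
  have hbdd : BddBelow {L : ℝ | ∃ q : Polynomial ℝ, q.natDegree ≤ n ∧ q.eval 0 = 1 ∧
          L = (1/2) * ∫ l in Set.Icc (0:ℝ) 1, (q.eval l) ^ 2 ∂ρ} := by
    refine ⟨0, ?_⟩
    rintro L ⟨q, -, -, rfl⟩
    have : 0 ≤ ∫ l in Set.Icc (0:ℝ) 1, (q.eval l) ^ 2 ∂ρ := integral_nonneg fun l => sq_nonneg _
    positivity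
  have hdeg : (resP lam m M k).natDegree ≤ n := by
    refine (resP_natDegree lam m M k).trans ?_
    have : k * M ≤ N := Nat.mul_div_le N k
    omega
  refine (csInf_le hbdd ⟨resP lam m M k, hdeg, resP_zero lam m M k, rfl⟩).trans ?_
  set x0 := lam m / (2 * (M:ℝ) + 1) ^ 2 with hx0def
  have hm0 := hlampos m
  have hx0 : 0 < x0 := by positivity
  obtain ⟨hint, hle⟩ := layer ζ hζ k (by linarith) ρ hpow' x0 hx0 hpos
  have hI : ∫ l in Set.Icc (0:ℝ) 1, ((resP lam m M k).eval l) ^ 2 ∂ρ ≤ x0 ^ ζ * (1 + ζ) := by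
    rw [Measure.restrict_eq_self_of_ae_mem hsuppae]
    have h1 : ∫ l, ((resP lam m M k).eval l) ^ 2 ∂ρ ≤ ∫ l, min 1 ((x0 / l) ^ k) ∂ρ := by
      refine integral_mono_of_nonneg (Eventually.of_forall fun l => sq_nonneg _) hint ?_
      filter_upwards [hatae] with l hl
      obtain ⟨j, rfl⟩ := hl
      exact resP_sq_le lam hlampos hanti m M k j
    refine h1.trans (hle.trans ?_)
    gcongr
    rw [div_le_iff₀ (by linarith)]
    nlinarith
  have hnb := num_bound ζ a hζ ha k n M N hk1 hk2 hn hM (by omega) (by omega)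
  set P := Λ * ((n:ℝ) / 2) ^ (-(2 + ν)) with hP
  have hP0 : 0 < P := by positivity
  have hPζ : P ^ ζ = Λ ^ ζ * ((n : ℝ) / 2) ^ (-((2 + ν) * ζ)) := by
    rw [hP, Real.mul_rpow hΛ.le (by positivity), ← Real.rpow_mul (by positivity)]
    congr 2; ring
  have hlm : lam m ≤ Λ * ((n:ℝ) / 2) ^ (-ν) := by
    refine (hlamdecay m).trans ?_
    have : (n:ℝ) / 2 ≤ (m:ℝ) + 1 := by
      have : n ≤ 2 * (m + 1) := by omega
      have : (n:ℝ) ≤ 2 * (m + 1) := by exact_mod_cast this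
      linarith
    have := Real.rpow_le_rpow_of_nonpos (by positivity : 0 < (n:ℝ) / 2) this (by linarith : -ν ≤ 0)
    gcongr
  have hx0P : x0 ≤ P * (((n:ℝ) / 2) ^ 2 / (2 * (M:ℝ) + 1) ^ 2) := by
    have e : P * ((n:ℝ) / 2) ^ 2 = Λ * ((n:ℝ) / 2) ^ (-ν) := by
      rw [hP, mul_assoc, ← Real.rpow_natCast ((n:ℝ) / 2) 2, ← Real.rpow_add (by positivity)]
      congr 2; push_cast; ring
    rw [← mul_div_assoc, e, hx0def]
    gcongr
  set E := (ζ / (a + 1/2 - ζ)) *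
              ((2:ℝ) ^ (2 * a + 2) * Real.Gamma (a + 1) ^ 2 /
                (Real.pi * (4 * a + 5) ^ (2 * a + 1))) with hE
  have hE0 : 0 ≤ E := by
    have : 0 < a + 1/2 - ζ := by linarith
    have := Real.pi_pos
    positivity
  set B := ((4 * a + 5) ^ 2 / 2) ^ ζ with hB
  have hB0 : 0 ≤ B := by positivity
  have hC0 : 0 ≤ 2 * k * ζ / (n:ℝ) := by positivity
  calc (1/2) * ∫ l in Set.Icc (0:ℝ) 1, ((resP lam m M k).eval l) ^ 2 ∂ρ
      ≤ (1/2) * ((P * (((n:ℝ) / 2) ^ 2 / (2 * (M:ℝ) + 1) ^ 2)) ^ ζ * (1 + ζ)) := by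
        gcongr
        refine hI.trans ?_
        gcongr
    _ = (1/2) * (P ^ ζ * ((((n:ℝ) / 2) ^ 2 / (2 * (M:ℝ) + 1) ^ 2) ^ ζ * (1 + ζ))) := by
        rw [Real.mul_rpow hP0.le (by positivity)]; ring
    _ ≤ (1/2) * (P ^ ζ * ((B * (1 + E)) * (1 + 2 * k * ζ / n))) := by
        refine mul_le_mul_of_nonneg_left (mul_le_mul_of_nonneg_left (hnb.trans ?_) (by positivity))
          (by norm_num)
        refine mul_le_mul_of_nonneg_right ?_ (by positivity)
        nlinarith
    _ = _ := by rw [hPζ]; ring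
end

section
/- Let ρ be a finite Borel measure supported on [0,1] with ρ({0})=0. Define polynomials q_n and reals α_n recursively by q_0 = 1, α_n = (∫ λ q_n(λ)² ρ(dλ)) / (∫ λ² q_n(λ)² ρ(dλ)), q_{n+1}(λ) = (1-α_nλ)q_n(λ), and set L_n = (1/2)∫ q_n(λ)² ρ(dλ); assume ∫ λ² q_n(λ)² ρ(dλ) > 0 for every n. Suppose moreover that ∫_{[0,1]} λ^s ρ(dλ) < ∞ for some s < 0. Then for every n ≥ 0, L_n ≤ (L_0^{1/s} + c_s·n)^s, where c_s = (1/|s|)·((1/2)∫_{[0,1]} λ^s ρ(dλ))^{1/s}. -/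
open MeasureTheory Filter Set

lemma sd_bern {x s : ℝ} (hx : 0 < x) (hs : s < 0) : 1 + s * (x - 1) ≤ x ^ s := by
  rw [Real.rpow_def_of_pos hx]
  have h1 := Real.add_one_le_exp (Real.log x * s)
  have h2 := Real.log_le_sub_one_of_pos hx
  nlinarith

lemma sd_cheb {x p s : ℝ} (hx : 0 < x) (hp : 0 < p) (hs : s < 0) :
    x ^ s * (x - p) ≤ p ^ s * (x - p) := by
  rcases le_total x p with h | h
  · have := Real.rpow_le_rpow_of_nonpos hx h hs.le
    nlinarith
  · have := Real.rpow_le_rpow_of_nonpos hp h hs.le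
    nlinarith

lemma sd_rec {s L L' m J : ℝ} (hs : s < 0) (hL : 0 < L) (hL' : 0 < L') (hm : 0 < m)
    (hJ : 0 < J) (h1 : L' ≤ L * (1 - m)) (h2 : m ^ s ≤ J / L) :
    L ^ (1/s) + (1/|s|) * J ^ (1/s) ≤ L' ^ (1/s) := by
  have hr : 1 / s < 0 := one_div_neg.mpr hs
  have hm1 : 0 < 1 - m := by
    by_contra hc
    push Not at hc
    nlinarith
  have h3 : L ^ (1/s) * (1 - m) ^ (1/s) ≤ L' ^ (1/s) := by
    rw [← Real.mul_rpow hL.le hm1.le]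
    exact Real.rpow_le_rpow_of_nonpos hL' h1 hr.le
  have h4 := sd_bern hm1 hr
  have h5 : J ^ (1/s) ≤ m * L ^ (1/s) := by
    have h6 := Real.rpow_le_rpow_of_nonpos (Real.rpow_pos_of_pos hm s) h2 hr.le
    rw [← Real.rpow_mul hm.le, mul_one_div_cancel hs.ne, Real.rpow_one,
      Real.div_rpow hJ.le hL.le] at h6
    exact (div_le_iff₀ (Real.rpow_pos_of_pos hL _)).mp h6
  have hLp := Real.rpow_pos_of_pos hL (1/s)
  have habs : 1 / |s| = -(1/s) := by rw [abs_of_neg hs, one_div_neg_eq_neg_one_div]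
  rw [habs]
  have h7 := mul_le_mul_of_nonneg_left h4 hLp.le
  have h8 := mul_le_mul_of_nonneg_left h5 (neg_pos.mpr hr).le
  nlinarith

/-- Steepest Descent: if the spectral measure `ρ` (supported on `[0,1]`, no atom at 0)
satisfies `∫ λ^s dρ < ∞` for some `s < 0`, then the SD losses obey
`L_n ≤ (L_0^{1/s} + c_s n)^s` with `c_s = (1/|s|)((1/2)∫ λ^s dρ)^{1/s}`. -/
theorem steepest_descent_upper_bound
    (ρ : Measure ℝ) [IsFiniteMeasure ρ]
    (hsupp : ρ (Set.Icc (0:ℝ) 1)ᶜ = 0)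
    (h0 : ρ {(0:ℝ)} = 0)
    (q : ℕ → ℝ → ℝ) (A : ℕ → ℝ)
    (hq0 : ∀ l, q 0 l = 1)
    (hA : ∀ n, A n = (∫ l, l * (q n l) ^ 2 ∂ρ) / ∫ l, l ^ 2 * (q n l) ^ 2 ∂ρ)
    (hqrec : ∀ n l, q (n + 1) l = (1 - A n * l) * q n l)
    (hpos : ∀ n, 0 < ∫ l, l ^ 2 * (q n l) ^ 2 ∂ρ)
    (s : ℝ) (hs : s < 0)
    (hint : Integrable (fun l : ℝ => l ^ s) (ρ.restrict (Set.Icc (0:ℝ) 1))) :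
    ∀ n : ℕ,
      (1/2) * ∫ l, (q n l) ^ 2 ∂ρ ≤
        (((1/2) * ∫ l, (q 0 l) ^ 2 ∂ρ) ^ (1/s) +
            (1/|s|) * ((1/2) * ∫ l in Set.Icc (0:ℝ) 1, l ^ s ∂ρ) ^ (1/s) * n) ^ s := by
  have hmem : ∀ᵐ l ∂ρ, l ∈ Set.Icc (0:ℝ) 1 := by
    rw [ae_iff]; exact hsupp
  have hne : ∀ᵐ l ∂ρ, l ≠ 0 := by
    rw [ae_iff]; simpa using h0
  have hae : ∀ᵐ l ∂ρ, 0 < l ∧ l ≤ 1 := by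
    filter_upwards [hmem, hne] with l h1 h2
    exact ⟨lt_of_le_of_ne h1.1 (Ne.symm h2), h1.2⟩
  have hres : ρ.restrict (Set.Icc (0:ℝ) 1) = ρ := Measure.restrict_eq_self_of_ae_mem hmem
  have hci : ∀ f : ℝ → ℝ, Continuous f → Integrable f ρ := by
    intro f hf
    have := hf.continuousOn.integrableOn_compact (μ := ρ) (isCompact_Icc (a := (0:ℝ)) (b := 1))
    rwa [IntegrableOn, hres] at this
  have hsi : ∀ f : ℝ → ℝ, Continuous f → Integrable (fun l => l ^ s * f l) ρ := by
    intro f hf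
    have := IntegrableOn.mul_continuousOn (μ := ρ) hint hf.continuousOn isCompact_Icc
    rwa [IntegrableOn, hres] at this
  rw [hres]
  have hqc : ∀ n, Continuous (q n) := by
    intro n
    induction n with
    | zero => rw [show q 0 = fun _ => 1 from funext hq0]; exact continuous_const
    | succ k ih =>
      rw [show q (k+1) = fun l => (1 - A k * l) * q k l from funext (hqrec k)]
      fun_prop
  have i0 : ∀ n, Integrable (fun l => (q n l)^2) ρ := fun n => hci _ ((hqc n).pow 2)
  have i1 : ∀ n, Integrable (fun l => l * (q n l)^2) ρ :=
    fun n => hci _ (continuous_id.mul ((hqc n).pow 2))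
  have i2 : ∀ n, Integrable (fun l => l^2 * (q n l)^2) ρ :=
    fun n => hci _ ((continuous_id.pow 2).mul ((hqc n).pow 2))
  have iJ : ∀ n, Integrable (fun l => l^s * (q n l)^2) ρ := fun n => hsi _ ((hqc n).pow 2)
  have h21 : ∀ n, ∫ l, l^2 * (q n l)^2 ∂ρ ≤ ∫ l, l * (q n l)^2 ∂ρ := by
    intro n
    refine integral_mono_ae (i2 n) (i1 n) ?_
    filter_upwards [hae] with l hl
    exact mul_le_mul_of_nonneg_right (by nlinarith [hl.1, hl.2]) (sq_nonneg _)
  have h10 : ∀ n, ∫ l, l * (q n l)^2 ∂ρ ≤ ∫ l, (q n l)^2 ∂ρ := by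
    intro n
    refine integral_mono_ae (i1 n) (i0 n) ?_
    filter_upwards [hae] with l hl
    nlinarith [hl.1, hl.2, sq_nonneg (q n l)]
  have p1 : ∀ n, 0 < ∫ l, l * (q n l)^2 ∂ρ := fun n => (hpos n).trans_le (h21 n)
  have p0 : ∀ n, 0 < ∫ l, (q n l)^2 ∂ρ := fun n => (p1 n).trans_le (h10 n)
  have hAp : ∀ n, 0 < A n := fun n => by rw [hA]; exact div_pos (p1 n) (hpos n)
  have hA2 : ∀ n, A n * ∫ l, l^2 * (q n l)^2 ∂ρ = ∫ l, l * (q n l)^2 ∂ρ := fun n => by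
    rw [hA]; exact div_mul_cancel₀ _ (hpos n).ne'
  have hstep : ∀ n, ∫ l, (q (n+1) l)^2 ∂ρ ≤
      (∫ l, (q n l)^2 ∂ρ) - ∫ l, l * (q n l)^2 ∂ρ := by
    intro n
    have e : ∫ l, (q (n+1) l)^2 ∂ρ = (∫ l, (q n l)^2 ∂ρ) - 2 * A n * (∫ l, l * (q n l)^2 ∂ρ)
        + (A n)^2 * ∫ l, l^2 * (q n l)^2 ∂ρ := by
      have hi : Integrable (fun l => (q n l)^2 - 2 * A n * (l * (q n l)^2)) ρ :=
        (i0 n).sub ((i1 n).const_mul _)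
      rw [← integral_const_mul, ← integral_const_mul, ← integral_sub (i0 n) ((i1 n).const_mul _),
        ← integral_add hi ((i2 n).const_mul _)]
      congr 1
      funext l
      rw [hqrec]; ring
    have hA1 : 1 ≤ A n := by
      rw [hA]; exact (one_le_div (hpos n)).mpr (h21 n)
    rw [e]
    have := hA2 n
    have := p1 n
    nlinarith
  have hJstep : ∀ n, ∫ l, l^s * (q (n+1) l)^2 ∂ρ ≤ ∫ l, l^s * (q n l)^2 ∂ρ := by
    intro n
    have hp : 0 < (A n)⁻¹ := inv_pos.mpr (hAp n)
    have key : ∫ l, l^s * (q (n+1) l)^2 ∂ρ ≤ ∫ l, (l^s * (q n l)^2 +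
        ((A n)^2 * ((A n)⁻¹)^s * (l^2 * (q n l)^2) - A n * ((A n)⁻¹)^s * (l * (q n l)^2))) ∂ρ := by
      refine integral_mono_ae (iJ (n+1))
        ((iJ n).add (((i2 n).const_mul _).sub ((i1 n).const_mul _))) ?_
      filter_upwards [hae] with l hl
      have c := sd_cheb hl.1 hp hs
      have hls := Real.rpow_pos_of_pos hl.1 s
      have ha := hAp n
      have hq2 := sq_nonneg (q n l)
      have c2 : l^s * (A n * l - 1) ≤ ((A n)⁻¹)^s * (A n * l - 1) := by
        have := mul_le_mul_of_nonneg_left c ha.le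
        have e : A n * l - 1 = A n * (l - (A n)⁻¹) := by
          rw [mul_sub, mul_inv_cancel₀ ha.ne']
        rw [e]; linarith
      have c3 := mul_le_mul_of_nonneg_left c2
        (mul_nonneg (mul_nonneg ha.le hl.1.le) hq2)
      have c4 : 0 ≤ l^s * (A n * l * (q n l)^2) :=
        mul_nonneg hls.le (mul_nonneg (mul_nonneg ha.le hl.1.le) hq2)
      simp only [hqrec]
      linear_combination c3 + c4
    refine key.trans (le_of_eq ?_)
    have hi : Integrable (fun l => (A n)^2 * ((A n)⁻¹)^s * (l^2 * (q n l)^2)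
        - A n * ((A n)⁻¹)^s * (l * (q n l)^2)) ρ :=
      ((i2 n).const_mul _).sub ((i1 n).const_mul _)
    rw [integral_add (iJ n) hi,
      integral_sub ((i2 n).const_mul _) ((i1 n).const_mul _), integral_const_mul,
      integral_const_mul]
    linear_combination (A n * ((A n)⁻¹)^s) * hA2 n
  have hJ : ∀ n, ∫ l, l^s * (q n l)^2 ∂ρ ≤ ∫ l, l^s ∂ρ := by
    intro n
    induction n with
    | zero => simp [hq0]
    | succ k ih => exact (hJstep k).trans ih
  have hjen : ∀ n, ((∫ l, l * (q n l)^2 ∂ρ) / ∫ l, (q n l)^2 ∂ρ)^s * (∫ l, (q n l)^2 ∂ρ)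
      ≤ ∫ l, l^s * (q n l)^2 ∂ρ := by
    intro n
    set m := (∫ l, l * (q n l)^2 ∂ρ) / ∫ l, (q n l)^2 ∂ρ with hm
    have mp : 0 < m := div_pos (p1 n) (p0 n)
    have hmI : m * ∫ l, (q n l)^2 ∂ρ = ∫ l, l * (q n l)^2 ∂ρ := div_mul_cancel₀ _ (p0 n).ne'
    have key : ∫ l, ((m^s * (1 - s)) * (q n l)^2 + (m^s * s / m) * (l * (q n l)^2)) ∂ρ
        ≤ ∫ l, l^s * (q n l)^2 ∂ρ := by
      refine integral_mono_ae (((i0 n).const_mul _).add ((i1 n).const_mul _)) (iJ n) ?_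
      filter_upwards [hae] with l hl
      have b := sd_bern (div_pos hl.1 mp) hs
      rw [Real.div_rpow hl.1.le mp.le, le_div_iff₀ (Real.rpow_pos_of_pos mp s)] at b
      have b2 := mul_le_mul_of_nonneg_right b (sq_nonneg (q n l))
      linear_combination b2
    refine le_trans (le_of_eq ?_) key
    rw [integral_add ((i0 n).const_mul _) ((i1 n).const_mul _), integral_const_mul,
      integral_const_mul, ← hmI]
    field_simp
    ring
  have hJ0 : 0 < ∫ l, l^s ∂ρ :=
    (mul_pos (Real.rpow_pos_of_pos (div_pos (p1 0) (p0 0)) s) (p0 0)).trans_le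
      ((hjen 0).trans (hJ 0))
  have main : ∀ n : ℕ, ((1/2) * ∫ l, (q 0 l) ^ 2 ∂ρ) ^ (1/s) +
      (1/|s|) * ((1/2) * ∫ l, l ^ s ∂ρ) ^ (1/s) * n ≤ ((1/2) * ∫ l, (q n l) ^ 2 ∂ρ) ^ (1/s) := by
    intro n
    induction n with
    | zero => simp
    | succ k ih =>
      have := sd_rec (s := s) (L := (1/2) * ∫ l, (q k l) ^ 2 ∂ρ)
        (L' := (1/2) * ∫ l, (q (k+1) l) ^ 2 ∂ρ)
        (m := (∫ l, l * (q k l)^2 ∂ρ) / ∫ l, (q k l)^2 ∂ρ) (J := (1/2) * ∫ l, l ^ s ∂ρ)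
        hs (by have := p0 k; positivity) (by have := p0 (k+1); positivity)
        (div_pos (p1 k) (p0 k)) (by positivity)
        (by
          have h := hstep k
          have e := mul_div_cancel₀ (∫ l, l * (q k l)^2 ∂ρ) (p0 k).ne'
          have e2 : (∫ l, (q k l)^2 ∂ρ) * ((∫ l, l * (q k l)^2 ∂ρ) / ∫ l, (q k l)^2 ∂ρ)
            = ∫ l, l * (q k l)^2 ∂ρ := mul_div_cancel₀ _ (p0 k).ne'
          linear_combination (1/2) * h + (1/2) * e2)
        (by
          rw [le_div_iff₀ (by have := p0 k; positivity)]
          have h := (hjen k).trans (hJ k)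
          linarith)
      push_cast
      linarith
  intro n
  have hs' : 1 / s < 0 := one_div_neg.mpr hs
  have hLn : 0 < (1/2) * ∫ l, (q n l) ^ 2 ∂ρ := by have := p0 n; positivity
  have hL0 : 0 < (1/2) * ∫ l, (q 0 l) ^ 2 ∂ρ := by have := p0 0; positivity
  have hb : 0 < ((1/2) * ∫ l, (q 0 l) ^ 2 ∂ρ) ^ (1/s) +
      (1/|s|) * ((1/2) * ∫ l, l ^ s ∂ρ) ^ (1/s) * n :=
    add_pos_of_pos_of_nonneg (Real.rpow_pos_of_pos hL0 _) (by positivity)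
  have h := Real.rpow_le_rpow_of_nonpos hb (main n) hs.le
  rwa [← Real.rpow_mul hLn.le, one_div_mul_cancel hs.ne, Real.rpow_one] at h
end
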